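/- arXiv:1001.1391 — 16 statements merged into one kernel-verified Lean document; each statement's English description precedes it below -/
import Mathlib

section
/- Let G be a group in universe u, let α : G ≃* G be an automorphism of G, and suppose given, for every group H in universe u and every group homomorphism f : G →* H, a group automorphism β f : H ≃* H, such that (i) β applied to the identity homomorphism of G equals α as a function, and (ii) for all group homomorphisms f₁ : G →* H₁, f₂ : G →* H₂ and h : H₁ →* H₂ with h.comp f₁ = f₂, one has (β f₂) ∘ h = h ∘ (β f₁) as functions. Then there exists a unique s ∈ G such that for every group H, every homomorphism f : G →* H, and every t ∈ H, one has (β f) t = f s * t * (f s)⁻¹. -/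
universe u

namespace ExtInner

/-- A word only involves finitely many generators. -/
lemma finite_supp {S : Type u} (w : FreeGroup S) (K : Type u) [Group K] :
    ∃ T : Finset S, ∀ k k' : S → K, (∀ s ∈ T, k s = k' s) →
      FreeGroup.lift k w = FreeGroup.lift k' w := by
  classical
  induction w using FreeGroup.induction_on with
  | C1 => exact ⟨∅, fun k k' _ => by simp⟩
  | of s => exact ⟨{s}, fun k k' h => by simpa using h⟩
  | inv_of s ih =>
    obtain ⟨T, hT⟩ := ih
    exact ⟨T, fun k k' h => by rw [map_inv, map_inv, hT k k' h]⟩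
  | mul x y hx hy =>
    obtain ⟨T, hT⟩ := hx
    obtain ⟨T', hT'⟩ := hy
    refine ⟨T ∪ T', fun k k' h => ?_⟩
    rw [map_mul, map_mul, hT k k' (fun s hs => h s (Finset.mem_union_left _ hs)),
      hT' k k' (fun s hs => h s (Finset.mem_union_right _ hs))]

lemma eq_one_of_single {S : Type u} [DecidableEq S] (w : FreeGroup S) (K : Type u) [Group K]
    (hw : ∀ k k' : S → K, FreeGroup.lift (k * k') w = FreeGroup.lift k w * FreeGroup.lift k' w)
    (k : S → K) (h1 : ∀ s, FreeGroup.lift (Pi.mulSingle s (k s)) w = 1) :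
    FreeGroup.lift k w = 1 := by
  obtain ⟨T, hT⟩ := finite_supp w K
  have key : ∀ T : Finset S, FreeGroup.lift (fun s => if s ∈ T then k s else 1) w = 1 := by
    intro T
    induction T using Finset.induction_on with
    | empty =>
      have := hw 1 1
      rw [mul_one] at this
      have h2 : FreeGroup.lift (1 : S → K) w = 1 := by simpa using this
      simp only [Finset.notMem_empty, if_false]
      exact h2
    | insert a T ha ih =>
      have : (fun s => if s ∈ insert a T then k s else 1)
          = Pi.mulSingle a (k a) * (fun s => if s ∈ T then k s else 1) := by
        funext s
        by_cases hs : s = a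
        · subst hs
          simp [ha]
        · simp [hs]
      rw [this, hw, h1, ih, one_mul]
  rw [hT k (fun s => if s ∈ T then k s else 1) (fun s hs => by simp [hs])]
  exact key T

lemma exists_exp {S : Type u} [DecidableEq S] (w : FreeGroup S) (s : S) :
    ∃ n : ℤ, ∀ (K : Type u) [Group K] (k : K),
      FreeGroup.lift (Pi.mulSingle s k : S → K) w = k ^ n := by
  induction w using FreeGroup.induction_on with
  | C1 => exact ⟨0, fun K _ k => by simp⟩
  | of a =>
    by_cases h : a = s
    · subst h
      exact ⟨1, fun K _ k => by simp⟩
    · exact ⟨0, fun K _ k => by simp [h]⟩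
  | inv_of a ih =>
    obtain ⟨n, hn⟩ := ih
    exact ⟨-n, fun K _ k => by rw [map_inv, hn, zpow_neg]⟩
  | mul x y hx hy =>
    obtain ⟨n, hn⟩ := hx
    obtain ⟨m, hm⟩ := hy
    exact ⟨n + m, fun K _ k => by rw [map_mul, hn, hm, zpow_add]⟩

lemma exp_zero_or_one (n : ℤ)
    (h : ∀ k l : DihedralGroup 0, (k * l) ^ n = k ^ n * l ^ n) : n = 0 ∨ n = 1 := by
  have h1 := h (DihedralGroup.sr 0) (DihedralGroup.sr 1)
  have hs : ∀ i : ZMod 0, (DihedralGroup.sr i) ^ (2 : ℤ) = 1 := by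
    intro i
    rw [zpow_ofNat, pow_two, DihedralGroup.sr_mul_self]
  have hr : (DihedralGroup.r (1 : ZMod 0)) ^ n = DihedralGroup.r ((n : ℤ) : ZMod 0) := by
    simp
    try rfl
    try exact congrArg DihedralGroup.r (Int.cast_id)
  rw [DihedralGroup.sr_mul_sr, sub_zero, hr] at h1
  rcases Int.even_or_odd' n with ⟨c, hc | hc⟩
  · left
    rw [hc, zpow_mul, zpow_mul, hs, hs, one_zpow, one_mul, DihedralGroup.one_def] at h1
    have h2 := DihedralGroup.r.inj h1
    rw [hc]
    exact h2
  · right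
    rw [hc, zpow_add, zpow_add, zpow_mul, zpow_mul, hs, hs, one_zpow, one_mul, one_mul,
      zpow_one, zpow_one, DihedralGroup.sr_mul_sr] at h1
    have h2 := DihedralGroup.r.inj h1
    rw [hc]
    exact h2

lemma primitive {S : Type u} (w : FreeGroup S)
    (hw : ∀ (K : Type u) [Group K] (k k' : S → K),
      FreeGroup.lift (k * k') w = FreeGroup.lift k w * FreeGroup.lift k' w) :
    w = 1 ∨ ∃ s, w = FreeGroup.of s := by
  classical
  have hid : FreeGroup.lift (FreeGroup.of : S → FreeGroup S) w = w := by
    rw [FreeGroup.lift_of_eq_id]; rfl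
  choose n hn using exists_exp w
  have hn01 : ∀ s, n s = 0 ∨ n s = 1 := by
    intro s
    apply exp_zero_or_one
    intro k l
    have := hw (ULift.{u} (DihedralGroup 0)) (Pi.mulSingle s ⟨k⟩) (Pi.mulSingle s ⟨l⟩)
    rw [← Pi.mulSingle_mul, hn, hn, hn] at this
    exact congrArg ULift.down this
  by_cases hall : ∀ s, n s = 0
  · left
    rw [← hid]
    apply eq_one_of_single w _ (hw _)
    intro s
    rw [hn, hall, zpow_zero]
  · right
    push Not at hall
    obtain ⟨s, hs⟩ := hall
    have hs1 : n s = 1 := (hn01 s).resolve_left hs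
    have hother : ∀ s', s' ≠ s → n s' = 0 := by
      intro s' hne
      refine (hn01 s').resolve_right fun h1 => ?_
      have hc : ∀ a b : ULift.{u} (DihedralGroup 0), a * b = b * a := by
        intro a b
        have e1 := hw _ (Pi.mulSingle s a) (Pi.mulSingle s' b)
        have e2 := hw _ (Pi.mulSingle s' b) (Pi.mulSingle s a)
        rw [(Pi.mulSingle_commute (f := fun _ : S => ULift.{u} (DihedralGroup 0))
          hne.symm a b).eq] at e1
        rw [e1, hn, hn, hs1, h1, zpow_one, zpow_one] at e2
        exact e2
      have h3 := congrArg ULift.down (hc ⟨DihedralGroup.sr 0⟩ ⟨DihedralGroup.sr 1⟩)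
      have h4 : DihedralGroup.r (1 - 0 : ZMod 0) = DihedralGroup.r (0 - 1) := h3
      have h5 := DihedralGroup.r.inj h4
      exact absurd h5 (by decide)
    refine ⟨s, ?_⟩
    have hdec : (FreeGroup.of : S → FreeGroup S)
        = Pi.mulSingle s (FreeGroup.of s) * Function.update FreeGroup.of s 1 := by
      funext a
      by_cases h : a = s
      · subst h; simp
      · simp [h]
    rw [← hid]
    conv_lhs => rw [hdec]
    rw [hw, hn, hs1, zpow_one, eq_one_of_single w _ (hw _), mul_one]
    intro a
    rw [hn]
    by_cases h : a = s
    · subst h; simp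
    · rw [hother a h, zpow_zero]

/-- Translation action of `G` on the free group on `G`. -/
def act (G : Type u) [Group G] : G →* MulAut (FreeGroup G) where
  toFun g := FreeGroup.freeGroupCongr (Equiv.mulLeft g)
  map_one' := by
    ext x
    simp
  map_mul' a b := by
    have : ((FreeGroup.freeGroupCongr (Equiv.mulLeft (a * b))).toMonoidHom) =
      ((FreeGroup.freeGroupCongr (Equiv.mulLeft a)).toMonoidHom).comp
      ((FreeGroup.freeGroupCongr (Equiv.mulLeft b)).toMonoidHom) := by
      ext x
      simp [mul_assoc]
    ext x
    exact DFunLike.congr_fun this x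

lemma act_of (G : Type u) [Group G] (g h : G) :
    act G g (FreeGroup.of h) = FreeGroup.of (g * h) := by
  simp [act]

/-- Shift action of `G` on functions. -/
def shift (G K : Type u) [Group G] [Group K] : G →* MulAut (G → K) where
  toFun g :=
    { toFun := fun k h => k (h * g)
      invFun := fun k h => k (h * g⁻¹)
      left_inv := fun k => by funext h; simp
      right_inv := fun k => by funext h; simp
      map_mul' := fun _ _ => rfl }
  map_one' := by
    ext k h
    simp
  map_mul' a b := by
    ext k h
    simp [mul_assoc]

/-- The evaluation morphism out of the free product of `G` with an infinite cyclic group. -/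
def ev {G H : Type u} [Group G] [Group H] (f : G →* H) (t : H) :
    FreeGroup G ⋊[act G] G →* H :=
  SemidirectProduct.lift (FreeGroup.lift fun g => f g * t * (f g)⁻¹) f (by
    intro g
    ext h
    simp [act_of, mul_assoc])

end ExtInner

open ExtInner in
theorem extended_inner_automorphism_of_group
    (G : Type u) [Group G] (α : G ≃* G)
    (β : ∀ (H : Type u) [Group H], (G →* H) → (H ≃* H))
    (hid : ∀ t : G, β G (MonoidHom.id G) t = α t)
    (hnat : ∀ (H₁ H₂ : Type u) [Group H₁] [Group H₂]
      (f₁ : G →* H₁) (f₂ : G →* H₂) (h : H₁ →* H₂),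
      h.comp f₁ = f₂ → ∀ t : H₁, β H₂ f₂ (h t) = h (β H₁ f₁ t)) :
    ∃! s : G, ∀ (H : Type u) [Group H] (f : G →* H) (t : H),
      β H f t = f s * t * (f s)⁻¹ := by
  let x : FreeGroup G ⋊[act G] G := SemidirectProduct.inl (FreeGroup.of 1)
  obtain ⟨w, hw⟩ : ∃ w : FreeGroup G,
      β (FreeGroup G ⋊[act G] G) SemidirectProduct.inr x = SemidirectProduct.inl w := by
    have h := hnat (FreeGroup G ⋊[act G] G) G SemidirectProduct.inr (MonoidHom.id G)
      SemidirectProduct.rightHom SemidirectProduct.rightHom_comp_inr x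
    have hx : SemidirectProduct.rightHom x = 1 := by simp [x]
    rw [hx, map_one] at h
    refine ⟨(β (FreeGroup G ⋊[act G] G) SemidirectProduct.inr x).left, ?_⟩
    ext
    · simp
    · simpa using h.symm
  have main : ∀ (H : Type u) [Group H] (f : G →* H) (t : H),
      β H f t = FreeGroup.lift (fun g => f g * t * (f g)⁻¹) w := by
    intro H _ f t
    have h := hnat (FreeGroup G ⋊[act G] G) H SemidirectProduct.inr f (ev f t)
      (by simp [ev]) x
    rw [hw] at h
    simpa [ev, x] using h
  have hmul : ∀ (K : Type u) [Group K] (k k' : G → K),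
      FreeGroup.lift (k * k') w = FreeGroup.lift k w * FreeGroup.lift k' w := by
    intro K _ k k'
    have hk : ∀ k : G → K, β ((G → K) ⋊[shift G K] G) SemidirectProduct.inr
        (SemidirectProduct.inl k) =
        SemidirectProduct.inl (FreeGroup.lift (fun g => shift G K g k) w) := by
      intro k
      rw [main]
      have : (FreeGroup.lift (fun g => (SemidirectProduct.inr g : (G → K) ⋊[shift G K] G) *
          SemidirectProduct.inl k * (SemidirectProduct.inr g)⁻¹)) =
          (SemidirectProduct.inl).comp (FreeGroup.lift (fun g => shift G K g k)) := by
        ext1 g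
        simp [SemidirectProduct.inl_aut]
      rw [this]; rfl
    have hev : ∀ k : G → K, (FreeGroup.lift (fun g => shift G K g k) w) 1
        = FreeGroup.lift k w := by
      intro k
      have : (Pi.evalMonoidHom (fun _ : G => K) 1).comp
          (FreeGroup.lift (fun g => shift G K g k)) = FreeGroup.lift k := by
        ext1 g
        simp [shift]
      exact DFunLike.congr_fun this w
    have h := hk (k * k')
    rw [map_mul, map_mul, hk, hk, ← map_mul] at h
    have h2 := congrFun (SemidirectProduct.inl_injective h) 1
    rw [Pi.mul_apply, hev, hev, hev] at h2
    exact h2.symm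
  rcases primitive w hmul with h1 | ⟨s, hs⟩
  · exfalso
    rw [h1, map_one] at hw
    have hx : x = 1 := (map_eq_one_iff _ (MulEquiv.injective _)).1 hw
    have h3 : FreeGroup.of (1 : G) = 1 :=
      SemidirectProduct.inl_injective (hx.trans (map_one _).symm)
    exact FreeGroup.of_ne_one _ h3
  · refine ⟨s, fun H _ f t => by rw [main, hs, FreeGroup.lift_apply_of], ?_⟩
    intro s' hs'
    have h := hs' (FreeGroup G ⋊[act G] G) SemidirectProduct.inr x
    rw [hw, hs, ← map_inv, ← SemidirectProduct.inl_aut, act_of, mul_one] at h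
    exact (FreeGroup.of_injective (SemidirectProduct.inl_injective h)).symm
end

section
/- An automorphism α : G ≃* G of a group G in universe u is inner (i.e., there exists s ∈ G with α t = s * t * s⁻¹ for all t ∈ G) if and only if there exists a family assigning to every group H in universe u and every group homomorphism f : G →* H a group automorphism β f : H ≃* H, such that β applied to the identity homomorphism of G equals α as a function, and such that for all group homomorphisms f₁ : G →* H₁, f₂ : G →* H₂ and h : H₁ →* H₂ with h.comp f₁ = f₂, one has (β f₂) ∘ h = h ∘ (β f₁) as functions. -/
universe u

/-- The unit `-1` case split for functions on `ℤˣ`. -/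
theorem funUnits_ext {G : Type u} {a b : ℤˣ → G} (h1 : a 1 = b 1) (h2 : a (-1) = b (-1)) :
    a = b := by
  funext x
  rcases Int.units_eq_one_or x with rfl | rfl
  · exact h1
  · exact h2

/-- The embedding of `G` as the factor of index `i` of the base of `G ≀ C₂`. -/
def wrIncl (G : Type u) [Group G] (i : ℤˣ) : G →* RegularWreathProduct G ℤˣ where
  toFun g := ⟨Pi.mulSingle i g, 1⟩
  map_one' := by ext <;> simp
  map_mul' a b := by
    apply RegularWreathProduct.ext
    · simp [RegularWreathProduct.mul_def, Pi.mulSingle_mul]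
    · simp [RegularWreathProduct.mul_def]

/-- If two elements conjugate `y` to the same element, their quotient commutes with `y`. -/
theorem conj_eq_conj_comm {K : Type u} [Group K] {p q y : K}
    (h : p * y * p⁻¹ = q * y * q⁻¹) : q⁻¹ * p * y = y * (q⁻¹ * p) := by
  calc q⁻¹ * p * y = q⁻¹ * (p * y * p⁻¹) * p := by group
    _ = q⁻¹ * (q * y * q⁻¹) * p := by rw [h]
    _ = _ := by group

theorem inner_automorphism_iff_extended
    (G : Type u) [Group G] (α : G ≃* G) :
    (∃ s : G, ∀ t : G, α t = s * t * s⁻¹) ↔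
      ∃ β : ∀ (H : Type u) [Group H], (G →* H) → (H ≃* H),
        (∀ t : G, β G (MonoidHom.id G) t = α t) ∧
        (∀ (H₁ H₂ : Type u) [Group H₁] [Group H₂]
          (f₁ : G →* H₁) (f₂ : G →* H₂) (h : H₁ →* H₂),
          h.comp f₁ = f₂ → ∀ t : H₁, β H₂ f₂ (h t) = h (β H₁ f₁ t)) := by
  constructor
  · rintro ⟨s, hs⟩
    refine ⟨fun H _ f => MulAut.conj (f s), ?_, ?_⟩
    · intro t
      simp [hs]
    · rintro H₁ H₂ _ _ f₁ f₂ h rfl t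
      simp
  · rintro ⟨β, hid, hnat⟩
    let H := RegularWreathProduct G ℤˣ
    let e : G →* H := wrIncl G 1
    let d : G →* H := wrIncl G (-1)
    let τ : H := ⟨1, -1⟩
    let b : H ≃* H := β H e
    have hne : (-1 : ℤˣ) ≠ 1 := by decide
    have hne' : (1 : ℤˣ) ≠ -1 := by decide
    have eL : ∀ g, (e g).left = Pi.mulSingle 1 g := fun g => rfl
    have eR : ∀ g, (e g).right = 1 := fun g => rfl
    have dL : ∀ g, (d g).left = Pi.mulSingle (-1) g := fun g => rfl
    have dR : ∀ g, (d g).right = 1 := fun g => rfl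
    have tL : τ.left = 1 := rfl
    have tR : τ.right = -1 := rfl
    have mL : ∀ (x y : H) (i : ℤˣ), (x * y).left i = x.left i * y.left (x.right⁻¹ * i) :=
      fun x y i => rfl
    have mR : ∀ (x y : H), (x * y).right = x.right * y.right := fun x y => rfl
    have Hext : ∀ x y : H, x.left 1 = y.left 1 → x.left (-1) = y.left (-1) →
        x.right = y.right → x = y := fun x y h1 h2 h3 =>
      RegularWreathProduct.ext (funUnits_ext h1 h2) h3
    have hbe : ∀ g, b (e g) = e (α g) := by
      intro g
      have := hnat G H (MonoidHom.id G) e e (by ext <;> rfl) g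
      rw [hid] at this
      exact this
    have hτ : ∀ g, τ * e g = d g * τ := by
      intro g
      apply Hext <;> simp [mL, mR, eL, eR, dL, dR, tL, tR, hne, hne']
    have hcomm : ∀ k g, d k * e g = e g * d k := by
      intro k g
      apply Hext <;> simp [mL, mR, eL, eR, dL, dR, hne, hne']
    have hconj : ∀ k x, b (d k * x * (d k)⁻¹) = d k * b x * (d k)⁻¹ := by
      intro k x
      refine hnat H H e e (MulAut.conj (d k)).toMonoidHom ?_ x
      apply MonoidHom.ext
      intro g
      change d k * e g * (d k)⁻¹ = e g
      rw [hcomm, mul_inv_cancel_right]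
    have hz : ∀ k y, ((d k)⁻¹ * b (d k)) * y = y * ((d k)⁻¹ * b (d k)) := by
      intro k y
      obtain ⟨x, rfl⟩ := b.surjective y
      have h := hconj k x
      simp only [map_mul, map_inv] at h
      exact conj_eq_conj_comm h
    have hbd : ∀ k, b τ * e (α k) = b (d k) * b τ := by
      intro k
      rw [← hbe, ← map_mul, hτ, map_mul]
    have hbdR : ∀ k, (b (d k)).right = 1 := by
      intro k
      have := congrArg RegularWreathProduct.right (hbd k)
      rw [mR, mR, eR, mul_one] at this
      exact (mul_eq_right.mp this.symm)
    rcases Int.units_eq_one_or (b τ).right with hq | hq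
    · exfalso
      have hall : ∀ x : H, (b x).right = 1 := by
        intro x
        rcases Int.units_eq_one_or x.right with hx | hx
        · have : x = e (x.left 1) * d (x.left (-1)) := by
            apply Hext <;> simp [mL, mR, eL, eR, dL, dR, hne, hne', hx]
          rw [this, map_mul, mR, hbdR, hbe, eR, mul_one]
        · have : x = e (x.left 1) * d (x.left (-1)) * τ := by
            apply Hext <;> simp [mL, mR, eL, eR, dL, dR, tL, tR, hne, hne', hx]
          rw [this, map_mul, map_mul, mR, mR, hbdR, hbe, eR, hq, mul_one, mul_one]
      obtain ⟨x, hx⟩ := b.surjective τ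
      have h1 := hall x
      rw [hx, tR] at h1
      exact hne h1
    · refine ⟨((b τ).left (-1))⁻¹, fun k => ?_⟩
      -- compute `b (d k)`
      have hA : (b (d k)).left 1 = 1 := by
        have := congrFun (congrArg RegularWreathProduct.left (hbd k)) 1
        rw [mL, mL, hbdR, hq, eL] at this
        simpa [hne, hne'] using this
      have hB : (b τ).left (-1) * α k = (b (d k)).left (-1) * (b τ).left (-1) := by
        have := congrFun (congrArg RegularWreathProduct.left (hbd k)) (-1)
        rw [mL, mL, hbdR, hq, eL] at this
        simpa [hne, hne'] using this
      obtain ⟨z, hzdef⟩ : ∃ z, z = (d k)⁻¹ * b (d k) := ⟨_, rfl⟩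
      have hdz : b (d k) = d k * z := by rw [hzdef]; exact (mul_inv_cancel_left _ _).symm
      have hzτ : z * τ = τ * z := by rw [hzdef]; exact hz k τ
      have hzR : z.right = 1 := by
        have := hbdR k
        rw [hdz, mR, dR, one_mul] at this
        exact this
      have hz1 : z.left 1 = 1 := by
        rw [hdz, mL, dR, dL] at hA
        simpa [hne, hne'] using hA
      have hz2 : z.left (-1) = 1 := by
        have := congrFun (congrArg RegularWreathProduct.left hzτ) 1
        rw [mL, mL, hzR, tL, tR, hz1] at this
        simpa using this.symm
      have hC : (b (d k)).left (-1) = k := by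
        rw [hdz, mL, dR, dL]
        simp [hz2]
      rw [hC] at hB
      rw [inv_inv, mul_assoc, ← hB, inv_mul_cancel_left]
end

section
/- Let G be a group in universe u, and suppose given, for every group H in universe u and every group homomorphism f : G →* H, a group homomorphism β f : H →* H, such that for all group homomorphisms f₁ : G →* H₁, f₂ : G →* H₂ and h : H₁ →* H₂ with h.comp f₁ = f₂, one has (β f₂).comp h = h.comp (β f₁). Then either every β f is the trivial endomorphism (sending every element of H to 1), or there exists a unique s ∈ G such that for every group H, every f : G →* H, and every t ∈ H, one has (β f) t = f s * t * (f s)⁻¹. -/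
universe u

open Monoid Monoid.CoprodI

/-- The two factors of the free product `G * T`. -/
def FM (G T : Type u) : Bool → Type u
  | true => G
  | false => T

instance FM.group (G T : Type u) [Group G] [Group T] : (b : Bool) → Group (FM G T b)
  | true => inferInstanceAs (Group G)
  | false => inferInstanceAs (Group T)

section words
variable {ι : Type*} {M : ι → Type*} [∀ i, Group (M i)]

theorem ne_unique {i j i' j' : ι} (w : NeWord M i j) (w' : NeWord M i' j')
    (h : w.prod = w'.prod) : i = i' := by
  classical
  have h1 : w.toWord = w'.toWord := Word.equiv.symm.injective h
  have h2 : w.toList = w'.toList := congrArg Word.toList h1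
  have h3 := w.toList_head?
  rw [h2, w'.toList_head?] at h3
  have h4 := Option.some.inj h3
  exact (congrArg Sigma.fst h4).symm

theorem ne_exists (x : CoprodI M) (hx : x ≠ 1) : ∃ i j, ∃ w : NeWord M i j, w.prod = x := by
  classical
  obtain ⟨i, j, w, hw⟩ := NeWord.of_word (Word.equiv x) (by
    intro h
    apply hx
    have := Word.equiv.symm_apply_apply x
    rw [h] at this
    rw [← this]; exact Word.prod_empty)
  refine ⟨i, j, w, ?_⟩
  have := Word.equiv.symm_apply_apply x
  rw [← hw] at this
  exact this

theorem ne_merge {i j l : ι} (w : NeWord M i j) (z : NeWord M j l)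
    (h : w.last * z.head ≠ 1) : ∃ v : NeWord M i l, v.prod = w.prod * z.prod := by
  induction w with
  | singleton x hx =>
    exact ⟨z.mulHead x h, by rw [NeWord.prod_singleton]; exact NeWord.mulHead_prod z x h⟩
  | append w₁ hne w₂ ih₁ ih₂ =>
    obtain ⟨v, hv⟩ := ih₂ z h
    exact ⟨.append w₁ hne v, by simp [hv, mul_assoc]⟩

theorem ne_head {i j : ι} (w : NeWord M i j) : ∃ g : M i, g ≠ 1 ∧
    ((i = j ∧ w.prod = of g) ∨ ∃ k, i ≠ k ∧ ∃ v : NeWord M k j, w.prod = of g * v.prod) := by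
  induction w with
  | singleton x hx => exact ⟨x, hx, Or.inl ⟨rfl, by simp⟩⟩
  | append w₁ hne w₂ ih₁ ih₂ =>
    obtain ⟨g, hg, h⟩ := ih₁
    refine ⟨g, hg, Or.inr ?_⟩
    rcases h with ⟨rfl, h⟩ | ⟨k, hk, v, h⟩
    · exact ⟨_, hne, w₂, by simp [h]⟩
    · exact ⟨k, hk, .append v hne w₂, by simp [h, mul_assoc]⟩

theorem ne_last {i j : ι} (w : NeWord M i j) : ∃ g : M j, g ≠ 1 ∧
    (i = j ∨ ∃ k, k ≠ j ∧ ∃ v : NeWord M i k, w.prod = v.prod * of g) := by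
  induction w with
  | singleton x hx => exact ⟨x, hx, Or.inl rfl⟩
  | append w₁ hne w₂ ih₁ ih₂ =>
    rename_i j' k' l'
    have key : ∃ g : M l', g ≠ 1 ∧ ((k' = l' ∧ w₂.prod = of g) ∨
        ∃ k, k ≠ l' ∧ ∃ v : NeWord M k' k, w₂.prod = v.prod * of g) := by
      clear ih₁ ih₂ hne w₁
      induction w₂ with
      | singleton x hx => exact ⟨x, hx, Or.inl ⟨rfl, by simp⟩⟩
      | append u₁ hne u₂ ih₁ ih₂ =>
        obtain ⟨g, hg, h⟩ := ih₂
        refine ⟨g, hg, Or.inr ?_⟩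
        rcases h with ⟨rfl, h⟩ | ⟨k, hk, v, h⟩
        · exact ⟨_, hne, u₁, by simp [h]⟩
        · exact ⟨k, hk, .append u₁ hne v, by simp [h, mul_assoc]⟩
    obtain ⟨g, hg, h⟩ := key
    refine ⟨g, hg, Or.inr ?_⟩
    rcases h with ⟨rfl, h⟩ | ⟨k, hk, v, h⟩
    · exact ⟨_, hne, w₁, by simp [h]⟩
    · exact ⟨k, hk, .append w₁ hne v, by simp [h, mul_assoc]⟩

theorem ne_map {M' : ι → Type*} [∀ i, Group (M' i)] (φ : ∀ i, M i →* M' i)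
    (hφ : ∀ i, Function.Injective (φ i)) {i j : ι} (w : NeWord M i j) :
    ∃ w' : NeWord M' i j, w'.prod = lift (fun i => of.comp (φ i)) w.prod ∧
      w'.last = φ j w.last := by
  induction w with
  | singleton x hx =>
    exact ⟨.singleton (φ _ x) (by simpa using (hφ _).ne hx), by simp, rfl⟩
  | append w₁ hne w₂ ih₁ ih₂ =>
    obtain ⟨v₁, h₁, l₁⟩ := ih₁
    obtain ⟨v₂, h₂, l₂⟩ := ih₂
    exact ⟨.append v₁ hne v₂, by simp [h₁, h₂], by simpa using l₂⟩

theorem ne_last_ne_one {i j : ι} (w : NeWord M i j) : w.last ≠ 1 := by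
  induction w with
  | singleton x hx => exact hx
  | append w₁ hne w₂ ih₁ ih₂ => exact ih₂

end words

section setup
variable {G : Type u} [Group G]

abbrev ZZ : Type u := ULift.{u} (Multiplicative ℤ)
abbrev ZZ2 : Type u := ZZ.{u} × ZZ.{u}
def zgen : ZZ.{u} := ⟨Multiplicative.ofAdd 1⟩

def zhom {H : Type u} [Group H] (t : H) : ZZ.{u} →* H :=
  (zpowersHom H t).comp MulEquiv.ulift.toMonoidHom

theorem zhom_apply {H : Type u} [Group H] (t : H) (n : ZZ.{u}) :
    zhom t n = t ^ (Multiplicative.toAdd n.down) := rfl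

theorem zhom_gen {H : Type u} [Group H] (t : H) : zhom t zgen.{u} = t := by
  rw [zhom_apply]; exact zpow_one t

abbrev inG (T : Type u) [Group T] : G →* CoprodI (FM G T) := of (M := FM G T) (i := true)
abbrev inT (G : Type u) [Group G] {T : Type u} [Group T] : T →* CoprodI (FM G T) :=
  of (M := FM G T) (i := false)

def ev {T H : Type u} [Group T] [Group H] (f : G →* H) (τ : T →* H) :
    CoprodI (FM G T) →* H :=
  lift (fun b => match b with
    | true => f
    | false => τ)

theorem ev_inG {T H : Type u} [Group T] [Group H] (f : G →* H) (τ : T →* H) (g : G) :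
    ev f τ (inG T g) = f g := by
  unfold ev; exact lift_of _ _

theorem ev_inT {T H : Type u} [Group T] [Group H] (f : G →* H) (τ : T →* H) (g : T) :
    ev f τ (inT G g) = τ g := by
  unfold ev; exact lift_of _ _

def fmap (G : Type u) [Group G] {T T' : Type u} [Group T] [Group T'] (φ : T →* T') :
    (b : Bool) → FM G T b →* FM G T' b
  | true => MonoidHom.id G
  | false => φ

theorem fmap_inj {T T' : Type u} [Group T] [Group T'] (φ : T →* T') (h : Function.Injective φ) :
    ∀ b, Function.Injective (fmap G φ b)
  | true => fun _ _ h => h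
  | false => h

theorem lift_fmap {T T' : Type u} [Group T] [Group T'] (φ : T →* T') :
    lift (fun b => of.comp (fmap G φ b)) = ev (inG T') ((inT G).comp φ) := by
  apply CoprodI.ext_hom
  rintro (_ | _)
  · ext x; rw [lift_comp_of]; exact (ev_inT (inG T') ((inT G).comp φ) x).symm
  · ext x; rw [lift_comp_of]; exact (ev_inG (inG T') ((inT G).comp φ) x).symm

variable (β : ∀ (H : Type u) [Group H], (G →* H) → (H →* H))


/-- The generic value of `β`. -/
abbrev gw : CoprodI (FM G ZZ.{u}) := β (CoprodI (FM G ZZ.{u})) (inG ZZ.{u}) (inT G zgen)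

theorem beta_eq
    (hnat : ∀ (H₁ H₂ : Type u) [Group H₁] [Group H₂]
      (f₁ : G →* H₁) (f₂ : G →* H₂) (h : H₁ →* H₂),
      h.comp f₁ = f₂ → (β H₂ f₂).comp h = h.comp (β H₁ f₁))
    {H : Type u} [Group H] (f : G →* H) (t : H) :
    β H f t = ev f (zhom t) (gw β) := by
  have h := hnat _ _ (inG ZZ.{u}) f (ev f (zhom t)) (by ext g; exact ev_inG f (zhom t) g)
  have h2 := DFunLike.congr_fun h (inT G zgen)
  simp only [MonoidHom.comp_apply] at h2
  rw [ev_inT, zhom_gen] at h2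
  exact h2

theorem pow_dihedral (n : ℤ) (h : ∀ (a b : DihedralGroup 0), (a * b) ^ n = a ^ n * b ^ n)
    (hn : n ≠ 0) : n = 1 := by
  have h1 := h (.r 1) (.sr 0)
  have hs : ∀ c : ZMod 0, (DihedralGroup.sr c) ^ (2:ℤ) = 1 := by
    intro c; rw [zpow_two]; exact DihedralGroup.sr_mul_self c
  have hr : ∀ m : ℤ, (DihedralGroup.r (1 : ZMod 0)) ^ m = DihedralGroup.r (Int.cast m) := by
    intro m; rw [DihedralGroup.r_zpow, one_mul]
  rw [DihedralGroup.r_mul_sr, hr] at h1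
  rcases Int.even_or_odd' n with ⟨k, hk | hk⟩
  · have e : ∀ c : ZMod 0, (DihedralGroup.sr c) ^ n = 1 := by
      intro c; rw [hk, zpow_mul, hs, one_zpow]
    rw [e, e, mul_one, DihedralGroup.one_def] at h1
    have h2 : (1 : DihedralGroup 0) = .r (Int.cast n) := h1
    have h3 : (0 : ℤ) = ((n : ℤ) : ℤ) := DihedralGroup.r.inj h2
    exact absurd h3.symm hn
  · have e : ∀ c : ZMod 0, (DihedralGroup.sr c) ^ n = .sr c := by
      intro c; rw [hk, zpow_add, zpow_mul, hs, one_zpow, one_mul, zpow_one]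
    rw [e, e, DihedralGroup.r_mul_sr] at h1
    have h2 := DihedralGroup.sr.inj h1
    have h3 : (0 - 1 : ℤ) = 0 - ((n : ℤ) : ℤ) := h2
    omega

theorem main_aux
    (hnat : ∀ (H₁ H₂ : Type u) [Group H₁] [Group H₂]
      (f₁ : G →* H₁) (f₂ : G →* H₂) (h : H₁ →* H₂),
      h.comp f₁ = f₂ → (β H₂ f₂).comp h = h.comp (β H₁ f₁))
    (j : Bool) (v : NeWord (FM G ZZ.{u}) false j) (hv : v.prod = gw β) :
    gw β = inT G zgen := by
  obtain ⟨n, hn, h⟩ := ne_head v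
  change ZZ at n
  rcases h with ⟨-, h⟩ | ⟨k, hk, w, h⟩
  · have hb : ∀ {H : Type u} [Group H] (f : G →* H) (t : H),
        β H f t = t ^ (Multiplicative.toAdd n.down) := by
      intro H _ f t
      rw [beta_eq β hnat, ← hv, h]
      exact ev_inT _ _ _
    have hone : Multiplicative.toAdd n.down = 1 := by
      apply pow_dihedral
      · intro a b
        have := (β (ULift.{u} (DihedralGroup 0)) 1).map_mul ⟨a⟩ ⟨b⟩
        rw [hb, hb, hb] at this
        exact congrArg ULift.down this
      · intro h0; apply hn; exact ULift.ext _ _ h0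
    rw [← hv, h]
    have : n = zgen := ULift.ext _ _ hone
    rw [this]
    rfl
  · exfalso
    obtain rfl : k = true := by cases k <;> simp_all
    let a : ZZ →* ZZ2 := MonoidHom.inl ZZ.{u} ZZ.{u}
    let b : ZZ →* ZZ2 := MonoidHom.inr ZZ.{u} ZZ.{u}
    have hai : Function.Injective a := fun x y h => congrArg Prod.fst h
    have hbi : Function.Injective b := fun x y h => congrArg Prod.snd h
    have habi : Function.Injective (a * b) := by
      intro x y h
      have := congrArg Prod.fst h
      simpa [a, b] using this
    have hβ : ∀ c : ZZ →* ZZ2, β (CoprodI (FM G ZZ2)) (inG ZZ2) (inT G (c zgen)) =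
        inT G (c n) * lift (fun i => of.comp (fmap G c i)) w.prod := by
      intro c
      have h' := hnat _ _ (inG ZZ.{u}) (inG ZZ2.{u}) (ev (inG ZZ2) ((inT G).comp c))
        (MonoidHom.ext fun g => ev_inG (inG ZZ2.{u}) ((inT G).comp c) g)
      have h2 := DFunLike.congr_fun h' (inT G zgen)
      simp only [MonoidHom.comp_apply] at h2
      rw [ev_inT] at h2
      refine h2.trans ?_
      change ev _ _ (gw β) = _
      rw [← hv, h, map_mul, lift_fmap]
      congr 1
    obtain ⟨wa, ha, hla⟩ := ne_map (fmap G a) (fmap_inj a hai) w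
    obtain ⟨wb, hb, -⟩ := ne_map (fmap G b) (fmap_inj b hbi) w
    obtain ⟨wab, hab, -⟩ := ne_map (fmap G (a * b)) (fmap_inj (a * b) habi) w
    have hm := (β (CoprodI (FM G ZZ2)) (inG ZZ2)).map_mul (inT G (a zgen)) (inT G (b zgen))
    rw [← map_mul, ← MonoidHom.mul_apply, hβ, hβ, hβ, ← ha, ← hb, ← hab, MonoidHom.mul_apply,
      map_mul, mul_assoc, mul_assoc, mul_right_inj] at hm
    have hbn : b n ≠ 1 := by
      intro h0; exact hn (hbi (h0.trans b.map_one.symm))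
    let s : NeWord (FM G ZZ2) false false := .singleton (M := FM G ZZ2) (i := false) (b n) hbn
    have hs : s.prod = inT G (b n) := NeWord.prod_singleton _ _
    rw [← hs] at hm
    have hR : s.prod * wab.prod = (NeWord.append s (by simp) wab).prod := by simp
    have hB : s.prod * wb.prod = (NeWord.append s (by simp) wb).prod := by simp
    rw [hR, hB] at hm
    cases j
    · obtain ⟨z, hz⟩ := ne_merge wa (NeWord.append s (by simp) wb) (by
        rw [NeWord.append_head, hla]
        intro h0
        have h1 : a w.last * b n = 1 := h0
        have h2 := congrArg Prod.snd h1
        apply hn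
        have h3 : (1 : ZZ) * n = 1 := h2
        exact (one_mul n).symm.trans h3)
      rw [← hz] at hm
      exact absurd (ne_unique _ _ hm) (by simp)
    · have := hm.trans (NeWord.append_prod (w₁ := wa) (hne := by simp)).symm
      exact absurd (ne_unique _ _ this) (by simp)

end setup

theorem extended_inner_endomorphism_of_group
    (G : Type u) [Group G]
    (β : ∀ (H : Type u) [Group H], (G →* H) → (H →* H))
    (hnat : ∀ (H₁ H₂ : Type u) [Group H₁] [Group H₂]
      (f₁ : G →* H₁) (f₂ : G →* H₂) (h : H₁ →* H₂),
      h.comp f₁ = f₂ → (β H₂ f₂).comp h = h.comp (β H₁ f₁)) :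
    (∀ (H : Type u) [Group H] (f : G →* H) (t : H), β H f t = 1) ∨
      ∃! s : G, ∀ (H : Type u) [Group H] (f : G →* H) (t : H),
        β H f t = f s * t * (f s)⁻¹ := by
  by_cases hw : gw β = 1
  · left
    intro H _ f t
    rw [beta_eq β hnat, hw, map_one]
  suffices hex : (∀ (H : Type u) [Group H] (f : G →* H) (t : H), β H f t = 1) ∨
      ∃ s : G, gw β = inG ZZ.{u} s * inT G zgen * (inG ZZ.{u} s)⁻¹ by
    rcases hex with h | ⟨s, hs⟩
    · exact Or.inl h
    right
    refine ⟨s, ?_, ?_⟩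
    · intro H _ f t
      rw [beta_eq β hnat, hs, map_mul, map_mul, map_inv, ev_inG, ev_inT, zhom_gen]
    · intro s' hs'
      have h1 := hs' _ (inG ZZ.{u}) (inT G zgen)
      have h2 := hs.symm.trans h1
      by_contra hne
      have hg : s'⁻¹ * s ≠ 1 := by
        intro h; exact hne (inv_mul_eq_one.mp h)
      have hz : zgen.{u} ≠ 1 := by
        intro h
        have := congrArg (fun x : ZZ => Multiplicative.toAdd x.down) h
        exact one_ne_zero (α := ℤ) this
      have h3 : inG ZZ.{u} (s'⁻¹ * s) * inT G zgen = inT G zgen * inG ZZ.{u} (s'⁻¹ * s) := by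
        rw [map_mul, map_inv]
        rw [mul_inv_eq_iff_eq_mul] at h2
        rw [mul_assoc, h2]
        group
      let p : NeWord (FM G ZZ.{u}) true true :=
        .singleton (M := FM G ZZ.{u}) (i := true) (s'⁻¹ * s) hg
      let q : NeWord (FM G ZZ.{u}) false false :=
        .singleton (M := FM G ZZ.{u}) (i := false) zgen hz
      have hp : p.prod = inG ZZ.{u} (s'⁻¹ * s) := NeWord.prod_singleton _ _
      have hq : q.prod = inT G zgen := NeWord.prod_singleton _ _
      rw [← hp, ← hq, ← NeWord.append_prod (hne := by simp),
        ← NeWord.append_prod (hne := by simp)] at h3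
      exact absurd (ne_unique _ _ h3) (by simp)
  obtain ⟨i, j, w, hwp⟩ := ne_exists _ hw
  cases i
  · right
    refine ⟨1, ?_⟩
    rw [main_aux β hnat j w hwp]
    simp
  obtain ⟨g, hg, h⟩ := ne_head w
  change G at g
  rcases h with ⟨-, h⟩ | ⟨k, hk, v, h⟩
  · left
    have hb : ∀ (H : Type u) [Group H] (f : G →* H) (t : H), β H f t = f g := by
      intro H _ f t
      rw [beta_eq β hnat, ← hwp, h]
      exact ev_inG _ _ _
    intro H _ f t
    rw [hb, ← hb H f 1, map_one]
  right
  obtain rfl : k = false := by cases k <;> simp_all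
  refine ⟨g, ?_⟩
  let β' : ∀ (H : Type u) [Group H], (G →* H) → (H →* H) := fun H _ f =>
    (MulAut.conj (f g)⁻¹).toMonoidHom.comp (β H f)
  have hβ' : ∀ (H : Type u) [Group H] (f : G →* H) (t : H),
      β' H f t = (f g)⁻¹ * β H f t * f g := by
    intro H _ f t; simp [β']
  have hnat' : ∀ (H₁ H₂ : Type u) [Group H₁] [Group H₂]
      (f₁ : G →* H₁) (f₂ : G →* H₂) (h : H₁ →* H₂),
      h.comp f₁ = f₂ → (β' H₂ f₂).comp h = h.comp (β' H₁ f₁) := by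
    intro H₁ H₂ _ _ f₁ f₂ h hh
    ext t
    have h1 := DFunLike.congr_fun (hnat H₁ H₂ f₁ f₂ h hh) t
    simp only [MonoidHom.comp_apply] at h1 ⊢
    rw [hβ', hβ', h1, ← hh]
    simp
  have hgw : gw β' = v.prod * inG ZZ.{u} g := by
    change β' _ _ _ = _
    rw [hβ']
    change (inG ZZ.{u} g)⁻¹ * gw β * inG ZZ.{u} g = _
    rw [← hwp, h]
    change (inG ZZ.{u} g)⁻¹ * (inG ZZ.{u} g * v.prod) * inG ZZ.{u} g = _
    rw [inv_mul_cancel_left]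
  have hfin : gw β' = inT G zgen := by
    have hsingle : ∀ (x : G) (y : NeWord (FM G ZZ.{u}) false false),
        gw β' = y.prod * inG ZZ.{u} x → gw β' = inT G zgen := by
      intro x y hy
      by_cases hx : x = 1
      · subst hx
        rw [map_one, mul_one] at hy
        exact main_aux β' hnat' _ y hy.symm
      · refine main_aux β' hnat' _ (NeWord.append y (by simp)
          (.singleton (M := FM G ZZ.{u}) (i := true) x hx)) ?_
        rw [hy, NeWord.append_prod]
        exact congrArg (y.prod * ·) (NeWord.prod_singleton (M := FM G ZZ.{u}) (i := true) x hx)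
    cases j
    · exact hsingle g v hgw
    · obtain ⟨x, -, hx | ⟨k, hk, y, hy⟩⟩ := ne_last v
      · simp at hx
      · obtain rfl : k = false := by cases k <;> simp_all
        change G at x
        refine hsingle (x * g) y ?_
        rw [hgw, hy, map_mul, mul_assoc]
        rfl
  have h5 : gw β' = (inG ZZ.{u} g)⁻¹ * gw β * inG ZZ.{u} g := hβ' _ _ _
  rw [← hfin, h5]
  group
end

section
/- Let K be a field and R a nonzero associative unital K-algebra. Let (β f) be an extended inner endomorphism of R such that every β f is bijective (an extended inner automorphism). Then there exists a unit a ∈ Rˣ such that for every K-algebra S, every K-algebra homomorphism f : R →ₐ[K] S, and every t ∈ S, one has (β f) t = f a * t * f (a⁻¹); moreover, a is unique up to a scalar factor: if a' ∈ Rˣ is another unit with this property, then there exists a unit c ∈ Kˣ with a' = algebraMap K R c * a. -/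
universe u v

theorem units_conj_eq_aux {K D : Type*} [Field K] [Ring D] [Algebra K D]
    [Algebra.IsCentral K D] (x y : Dˣ)
    (h : ∀ t : D, x * t * (x⁻¹ : Dˣ) = y * t * (y⁻¹ : Dˣ)) :
    ∃ c : K, (x : D) = c • (y : D) := by
  have hc : ((y⁻¹ : Dˣ) : D) * x ∈ Subalgebra.center K D := by
    rw [Subalgebra.mem_center_iff]
    intro t
    have := congrArg (fun z => ((y⁻¹ : Dˣ) : D) * z * x) (h t)
    simpa [mul_assoc] using this.symm
  rw [Algebra.IsCentral.center_eq_bot, Algebra.mem_bot] at hc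
  obtain ⟨c, hc⟩ := hc
  refine ⟨c, ?_⟩
  have := congrArg (fun z => (y : D) * z) hc
  simp only [Units.mul_inv_cancel_left] at this
  rw [← this, Algebra.smul_def, Algebra.commutes]

theorem sq_zero_commute_aux {K D : Type*} [Field K] [Ring D] [Algebra K D] [Nontrivial D]
    (A : Dˣ) (N : D) (hN : N * N = 0) (c : K)
    (h : (1 + N) * A = c • ((A : D) * (1 + N))) : N * A = A * N := by
  by_cases hc : c = 1
  · subst hc
    simpa [add_mul, mul_add] using h
  exfalso
  have h1 : N * A = c • (N * A) + c • (N * A * N) := by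
    have := congrArg (fun z => N * z) h
    simpa [add_mul, mul_add, ← mul_assoc, hN, mul_smul_comm, smul_add] using this
  have h2 : N * A * N = c • (N * A * N) := by
    have := congrArg (fun z => z * N) h1
    simpa [add_mul, mul_assoc, hN] using this
  have key : ∀ z : D, z = c • z → z = 0 := by
    intro z hz
    have : (1 - c) • z = 0 := by rw [sub_smul, one_smul, ← hz, sub_self]
    exact (smul_eq_zero.mp this).resolve_left (sub_ne_zero.mpr (Ne.symm hc))
  rw [key _ h2, smul_zero, add_zero] at h1
  have h3 : N = 0 := by simpa using key _ h1
  subst h3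
  simp only [add_zero, one_mul, mul_one] at h
  exact A.ne_zero (key _ h)

/-- Conjugation by a unit, as an algebra homomorphism. -/
def conjHomAux (K : Type*) {D : Type*} [Field K] [Ring D] [Algebra K D] (g : Dˣ) : D →ₐ[K] D :=
  AlgHom.ofLinearMap
    ((LinearMap.mulRight K ((g⁻¹ : Dˣ) : D)).comp (LinearMap.mulLeft K (g : D)))
    (by simp) (by intro x y; simp [mul_assoc])

theorem conjHomAux_apply (K : Type*) {D : Type*} [Field K] [Ring D] [Algebra K D] (g : Dˣ)
    (t : D) : conjHomAux K g t = g * t * (g⁻¹ : Dˣ) := rfl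

theorem exists_unit_aux
    (K : Type v) [Field K] (R : Type u) [Ring R] [Algebra K R] [Nontrivial R]
    (β : ∀ (S : Type u) [Ring S] [Algebra K S], (R →ₐ[K] S) → (S →ₐ[K] S))
    (hnat : ∀ (S₁ S₂ : Type u) [Ring S₁] [Algebra K S₁] [Ring S₂] [Algebra K S₂]
      (f₁ : R →ₐ[K] S₁) (f₂ : R →ₐ[K] S₂) (h : S₁ →ₐ[K] S₂),
      h.comp f₁ = f₂ → (β S₂ f₂).comp h = h.comp (β S₁ f₁))
    (hbij : ∀ (S : Type u) [Ring S] [Algebra K S] (f : R →ₐ[K] S),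
      Function.Bijective (β S f))
    (S : Type u) [Ring S] [Algebra K S] (f : R →ₐ[K] S) :
    ∃ a : Rˣ, ∀ t : S, β S f t = f a * t * f ((a⁻¹ : Rˣ) : R) := by
  let T := R × S
  let V := T × T
  let D := Module.End K V
  let fT : R →ₐ[K] T := (AlgHom.id K R).prod f
  let L : T →ₐ[K] D := Algebra.lsmul K K V
  let F : R →ₐ[K] D := L.comp fT
  obtain ⟨A', hA'⟩ := (AlgEquiv.ofBijective (β D F) (hbij D F)).eq_linearEquivConjAlgEquiv
  let A : Dˣ := LinearMap.GeneralLinearGroup.ofLinearEquiv A'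
  have hA : ∀ t : D, β D F t = A * t * (A⁻¹ : Dˣ) := fun t => congrArg (fun e => e t) hA'
  have hcomm : ∀ N : D, N * N = 0 → (∀ r, N * F r = F r * N) → N * A = A * N := by
    intro N hN hF
    let g : Dˣ := ⟨1 + N, 1 - N, by simp [mul_sub, add_mul, hN], by simp [mul_add, sub_mul, hN]⟩
    have hg : (conjHomAux K g).comp F = F := by
      ext1 r
      change (g : D) * F r * (g⁻¹ : Dˣ) = F r
      rw [Units.mul_inv_eq_iff_eq_mul]
      change (1 + N) * F r = F r * (1 + N)
      rw [add_mul, mul_add, hF, one_mul, mul_one]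
    have hb := hnat D D F F (conjHomAux K g) hg
    obtain ⟨c, hc⟩ := units_conj_eq_aux (K := K) (g * A) (A * g) (by
      intro t
      have := DFunLike.congr_fun hb t
      simp only [AlgHom.comp_apply, conjHomAux_apply, hA] at this
      simpa [mul_assoc] using this.symm)
    exact sq_zero_commute_aux A N hN c hc
  -- the endomorphism `B` of `T` induced by `A`
  let B : T → T := fun t => ((A : D) (0, t)).2
  have hN : ∀ φ : T →ₗ[K] T, (∀ r t, φ (fT r * t) = fT r * φ t) →
      ∀ x y : T, (A : D) (φ y, 0) = (φ ((A : D) (x, y)).2, 0) := by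
    intro φ hφ x y
    let N : D := (LinearMap.inl K T T) ∘ₗ φ ∘ₗ (LinearMap.snd K T T)
    have h := hcomm N (by
      apply LinearMap.ext; intro p
      change ((φ 0, 0) : T × T) = 0
      simp) (by
      intro r
      apply LinearMap.ext; intro p
      change ((φ (fT r * p.2), 0) : T × T) = (fT r * φ p.2, fT r * 0)
      rw [hφ, mul_zero])
    exact (LinearMap.congr_fun h (x, y)).symm
  have hB0 : ∀ x t : T, (A : D) (t, 0) = (((A : D) (x, t)).2, 0) := fun x t =>
    hN LinearMap.id (fun _ _ => rfl) x t
  have hB1 : ∀ t : T, (A : D) (t, 0) = (B t, 0) := fun t => hB0 0 t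
  have hB2 : ∀ x t : T, ((A : D) (x, t)).2 = B t := fun x t =>
    congrArg Prod.fst ((hB0 x t).symm.trans (hB1 t))
  have hBφ : ∀ φ : T →ₗ[K] T, (∀ r t, φ (fT r * t) = fT r * φ t) →
      ∀ y, B (φ y) = φ (B y) := fun φ hφ y =>
    congrArg Prod.fst ((hB1 (φ y)).symm.trans (hN φ hφ 0 y))
  let a : R := (B 1).1
  have hBt : ∀ t : T, B t = (a * t.1, f a * t.2) := by
    intro t
    let φ : T →ₗ[K] T := (LinearMap.mulRight K t) ∘ₗ fT.toLinearMap ∘ₗ (LinearMap.fst K R S)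
    have h := hBφ φ (by
      intro r t'
      change fT (r * t'.1) * t = fT r * (fT t'.1 * t)
      rw [map_mul, mul_assoc]) 1
    have h1 : φ 1 = t := by
      change fT 1 * t = t
      rw [map_one, one_mul]
    rw [h1] at h
    exact h
  have hβT : ∀ t : T, β T fT t * B 1 = B t := by
    intro t
    have h := DFunLike.congr_fun (hnat T D fT F L rfl) t
    simp only [AlgHom.comp_apply, hA] at h
    rw [Units.mul_inv_eq_iff_eq_mul] at h
    have h' := LinearMap.congr_fun h ((1, 0) : T × T)
    change (A : D) (t * 1, t * 0) = β T fT t • (A : D) (1, 0) at h'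
    rw [mul_one, mul_zero, hB1, hB1] at h'
    exact (congrArg Prod.fst h').symm
  obtain ⟨⟨x, y⟩, hxy⟩ := A'.surjective ((0, 1) : T × T)
  have hy : B y = 1 := by
    rw [← hB2 x y]
    exact congrArg Prod.snd hxy
  have hay : a * y.1 = 1 := by
    rw [hBt] at hy
    exact congrArg Prod.fst hy
  have hya : y.1 * a = 1 := by
    have h0 : B (y.1 * a - 1, 0) = 0 := by
      rw [hBt]
      simp [mul_sub, ← mul_assoc, hay]
      rfl
    have h1 : A' (((y.1 * a - 1, 0), 0) : T × T) = 0 := by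
      have := hB1 (y.1 * a - 1, 0)
      rw [h0] at this
      exact this
    have h2 := (LinearEquiv.map_eq_zero_iff A').mp h1
    have h3 : y.1 * a - 1 = 0 := congrArg (fun p : T × T => p.1.1) h2
    exact sub_eq_zero.mp h3
  refine ⟨⟨a, y.1, hay, hya⟩, fun s => ?_⟩
  have h1 : β S f s * f a = f a * s := by
    have h := DFunLike.congr_fun (hnat T S fT f (AlgHom.snd K R S) rfl) ((0, s) : T)
    change β S f s = (β T fT (0, s)).2 at h
    have h' := congrArg Prod.snd (hβT (0, s))
    rw [hBt, hBt] at h'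
    change (β T fT (0, s)).2 * (f a * 1) = f a * s at h'
    rw [h, ← h', mul_one]
  change β S f s = f a * s * f y.1
  rw [← h1, mul_assoc, ← map_mul, hay, map_one, mul_one]

theorem unit_unique_aux (K : Type v) [Field K] (R : Type u) [Ring R] [Algebra K R] [Nontrivial R]
    (a a' : Rˣ)
    (h : ∀ t : Module.End K R, Algebra.lmul K R a * t * Algebra.lmul K R ((a⁻¹ : Rˣ) : R) =
      Algebra.lmul K R a' * t * Algebra.lmul K R ((a'⁻¹ : Rˣ) : R)) :
    ∃ c : Kˣ, (a' : R) = algebraMap K R c * a := by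
  obtain ⟨c, hc⟩ := units_conj_eq_aux (K := K)
    (Units.map (Algebra.lmul K R : R →* Module.End K R) a')
    (Units.map (Algebra.lmul K R : R →* Module.End K R) a) (fun t => (h t).symm)
  have hc' : (a' : R) = c • (a : R) := by
    have := LinearMap.congr_fun hc 1
    simpa using this
  have hc0 : c ≠ 0 := by
    rintro rfl
    rw [zero_smul] at hc'
    exact a'.ne_zero hc'
  exact ⟨Units.mk0 c hc0, by rw [hc', Algebra.smul_def]; rfl⟩

theorem extended_inner_automorphism_of_algebra
    (K : Type v) [Field K] (R : Type u) [Ring R] [Algebra K R] [Nontrivial R]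
    (β : ∀ (S : Type u) [Ring S] [Algebra K S], (R →ₐ[K] S) → (S →ₐ[K] S))
    (hnat : ∀ (S₁ S₂ : Type u) [Ring S₁] [Algebra K S₁] [Ring S₂] [Algebra K S₂]
      (f₁ : R →ₐ[K] S₁) (f₂ : R →ₐ[K] S₂) (h : S₁ →ₐ[K] S₂),
      h.comp f₁ = f₂ → (β S₂ f₂).comp h = h.comp (β S₁ f₁))
    (hbij : ∀ (S : Type u) [Ring S] [Algebra K S] (f : R →ₐ[K] S),
      Function.Bijective (β S f)) :
    ∃ a : Rˣ,
      (∀ (S : Type u) [Ring S] [Algebra K S] (f : R →ₐ[K] S) (t : S),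
        β S f t = f a * t * f ((a⁻¹ : Rˣ) : R)) ∧
      (∀ a' : Rˣ,
        (∀ (S : Type u) [Ring S] [Algebra K S] (f : R →ₐ[K] S) (t : S),
          β S f t = f a' * t * f ((a'⁻¹ : Rˣ) : R)) →
        ∃ c : Kˣ, (a' : R) = algebraMap K R c * a) := by
  let E := Module.End K R
  let l : R →ₐ[K] E := Algebra.lmul K R
  obtain ⟨a, ha⟩ := exists_unit_aux K R β hnat hbij E l
  refine ⟨a, ?_, fun a' ha' => unit_unique_aux K R a a' fun t => ?_⟩
  · intro S _ _ f t
    obtain ⟨b, hb⟩ := exists_unit_aux K R β hnat hbij (E × S) (l.prod f)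
    have h1 : ∀ t : E, β E l t = l b * t * l ((b⁻¹ : Rˣ) : R) := by
      intro t
      have h := DFunLike.congr_fun
        (hnat (E × S) E (l.prod f) l (AlgHom.fst K E S) rfl) ((t, 0) : E × S)
      simp only [AlgHom.comp_apply, hb] at h
      exact h
    have h2 : β S f t = f b * t * f ((b⁻¹ : Rˣ) : R) := by
      have h := DFunLike.congr_fun
        (hnat (E × S) S (l.prod f) f (AlgHom.snd K E S) rfl) ((0, t) : E × S)
      simp only [AlgHom.comp_apply, hb] at h
      exact h
    obtain ⟨c, hc⟩ := unit_unique_aux K R b a fun t => (h1 t).symm.trans (ha t)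
    have hu : a = Units.map (algebraMap K R : K →* R) c * b := Units.ext hc
    have hi : ((a⁻¹ : Rˣ) : R) = ((b⁻¹ : Rˣ) : R) * algebraMap K R ((c⁻¹ : Kˣ) : K) := by
      rw [hu, mul_inv_rev]
      rfl
    rw [h2, hc, hi, map_mul, map_mul, AlgHom.commutes, AlgHom.commutes, ← mul_assoc,
      ← Algebra.commutes, mul_assoc (algebraMap K S c), mul_assoc (algebraMap K S c), ← mul_assoc,
      ← map_mul, Units.inv_mul, map_one, one_mul]
  · exact (ha t).symm.trans (ha' E l t)
end

section
/- Let K be a field and R a nonzero associative unital K-algebra, and let (β f) be an extended inner endomorphism of R. Then there exist n ∈ ℕ and vectors a, b : Fin n → R satisfying ∑ i, a i * b i = 1 and, for all j k : Fin n, b j * a k = (if j = k then 1 else 0), such that for every K-algebra S, every K-algebra homomorphism f : R →ₐ[K] S, and every t ∈ S, one has (β f) t = ∑ i, f (a i) * t * f (b i). -/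
universe u v

namespace ExtInner

open Polynomial

section Bilin

variable {K V W Z : Type*} [Field K] [AddCommGroup V] [Module K V] [AddCommGroup W] [Module K W]
  [AddCommGroup Z] [Module K Z]

/-- A representation by a bilinear map can be shortened if the left vectors are dependent. -/
theorem shorten (B : V →ₗ[K] W →ₗ[K] Z) {n : ℕ} (a : Fin n → V) (b : Fin n → W)
    (ha : ¬ LinearIndependent K a) :
    ∃ m < n, ∃ (a' : Fin m → V) (b' : Fin m → W),
      ∑ i, B (a i) (b i) = ∑ i, B (a' i) (b' i) := by
  obtain ⟨g, hg, k, hk⟩ := Fintype.not_linearIndependent_iff.1 ha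
  obtain _ | n := n
  · exact k.elim0
  refine ⟨n, Nat.lt_succ_self n, fun i => a (k.succAbove i),
    fun i => b (k.succAbove i) - ((g k)⁻¹ * g (k.succAbove i)) • b k, ?_⟩
  have h1 : ∑ i, B (a i) (b i) = ∑ i, B (a i) (b i - ((g k)⁻¹ * g i) • b k) := by
    have h2 : ∑ i, B (a i) (((g k)⁻¹ * g i) • b k) = (g k)⁻¹ • B (∑ i, g i • a i) (b k) := by
      simp [map_sum, LinearMap.sum_apply, Finset.smul_sum, mul_smul]
    simp only [map_sub, Finset.sum_sub_distrib]
    rw [h2, hg]; simp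
  rw [h1, Fin.sum_univ_succAbove _ k]
  simp [hk]

theorem exists_indep (B : V →ₗ[K] W →ₗ[K] Z) (z : Z)
    (h : ∃ (n : ℕ) (a : Fin n → V) (b : Fin n → W), z = ∑ i, B (a i) (b i)) :
    ∃ (n : ℕ) (a : Fin n → V) (b : Fin n → W), z = ∑ i, B (a i) (b i) ∧
      LinearIndependent K a ∧ LinearIndependent K b := by
  classical
  obtain ⟨a, b, hab⟩ := Nat.find_spec h
  refine ⟨Nat.find h, a, b, hab, ?_, ?_⟩
  · by_contra hc
    obtain ⟨m, hm, a', b', h'⟩ := shorten B a b hc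
    exact Nat.find_min h hm ⟨a', b', hab.trans h'⟩
  · by_contra hc
    obtain ⟨m, hm, b', a', h'⟩ := shorten B.flip b a hc
    exact Nat.find_min h hm ⟨a', b', hab.trans h'⟩

theorem exists_dual {n : ℕ} (b : Fin n → V) (hb : LinearIndependent K b) (k : Fin n) :
    ∃ l : V →ₗ[K] K, ∀ i, l (b i) = if i = k then 1 else 0 := by
  obtain ⟨l, hl⟩ := LinearMap.exists_extend ((Finsupp.lapply k).comp hb.repr)
  refine ⟨l, fun i => ?_⟩
  have := LinearMap.congr_fun hl ⟨b i, Submodule.subset_span ⟨i, rfl⟩⟩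
  simp only [LinearMap.comp_apply, Submodule.subtype_apply] at this
  rw [this, hb.repr_eq_single i _ rfl]
  simp [Finsupp.single_apply]

end Bilin

/-- Relations defining the free product of `R` with a polynomial ring in one variable. -/
inductive Rel (K : Type v) [Field K] (R : Type u) [Ring R] [Algebra K R] :
    FreeAlgebra ℤ (Option R) → FreeAlgebra ℤ (Option R) → Prop
  | one : Rel K R (FreeAlgebra.ι ℤ (some 1)) 1
  | add (r s : R) : Rel K R (FreeAlgebra.ι ℤ (some (r + s)))
      (FreeAlgebra.ι ℤ (some r) + FreeAlgebra.ι ℤ (some s))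
  | mul (r s : R) : Rel K R (FreeAlgebra.ι ℤ (some (r * s)))
      (FreeAlgebra.ι ℤ (some r) * FreeAlgebra.ι ℤ (some s))
  | comm (k : K) : Rel K R (FreeAlgebra.ι ℤ (some (algebraMap K R k)) * FreeAlgebra.ι ℤ none)
      (FreeAlgebra.ι ℤ none * FreeAlgebra.ι ℤ (some (algebraMap K R k)))

section Free

variable (K : Type v) [Field K] (R : Type u) [Ring R] [Algebra K R]

/-- The free product of `R` with a polynomial ring in one variable. -/
def Q : Type u := RingQuot (Rel K R)

noncomputable instance : Ring (Q K R) := inferInstanceAs (Ring (RingQuot (Rel K R)))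

/-- The quotient map. -/
noncomputable def qmk : FreeAlgebra ℤ (Option R) →+* Q K R := RingQuot.mkRingHom (Rel K R)

theorem qmk_rel {a b : FreeAlgebra ℤ (Option R)} (h : Rel K R a b) : qmk K R a = qmk K R b :=
  RingQuot.mkRingHom_rel h

theorem qmk_surjective : Function.Surjective (qmk K R) := RingQuot.mkRingHom_surjective (Rel K R)

/-- The variable. -/
noncomputable def qx : Q K R := qmk K R (FreeAlgebra.ι ℤ none)

/-- The inclusion of `R`. -/
noncomputable def qj : R →+* Q K R :=
  RingHom.mk' ⟨⟨fun r => qmk K R (FreeAlgebra.ι ℤ (some r)),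
    by rw [qmk_rel K R Rel.one, map_one]⟩,
    fun r s => by
      change qmk K R (FreeAlgebra.ι ℤ (some (r * s))) = _
      rw [qmk_rel K R (Rel.mul r s), map_mul]⟩
    (fun r s => by
      change qmk K R (FreeAlgebra.ι ℤ (some (r + s))) = _
      rw [qmk_rel K R (Rel.add r s), map_add]; rfl)

theorem Q_induction {p : Q K R → Prop} (hj : ∀ r, p (qj K R r)) (hx : p (qx K R))
    (hm : ∀ a b, p a → p b → p (a * b)) (ha : ∀ a b, p a → p b → p (a + b)) (q : Q K R) : p q := by
  obtain ⟨y, rfl⟩ := qmk_surjective K R q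
  induction y using FreeAlgebra.induction with
  | grade0 n => simpa using hj n
  | grade1 o =>
    cases o with
    | none => exact hx
    | some r => exact hj r
  | mul a b h1 h2 => rw [map_mul]; exact hm _ _ h1 h2
  | add a b h1 h2 => rw [map_add]; exact ha _ _ h1 h2

noncomputable instance : Algebra K (Q K R) :=
  RingHom.toAlgebra' ((qj K R).comp (algebraMap K R)) (by
    intro c q
    induction q using Q_induction with
    | hj r => simp only [RingHom.comp_apply, ← map_mul, Algebra.commutes]
    | hx =>
      have := qmk_rel K R (Rel.comm (R := R) c)
      rw [map_mul, map_mul] at this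
      exact this
    | hm a b h1 h2 => rw [← mul_assoc, h1, mul_assoc, h2, mul_assoc]
    | ha a b h1 h2 => rw [mul_add, add_mul, h1, h2])

/-- The inclusion of `R` as an algebra map. -/
noncomputable def qjA : R →ₐ[K] Q K R := { qj K R with commutes' := fun _ => rfl }

variable {K R}

/-- Universal property. -/
theorem exists_lift {S : Type*} [Ring S] [Algebra K S] (f : R →ₐ[K] S) (t : S) :
    ∃ F : Q K R →ₐ[K] S, F.comp (qjA K R) = f ∧ F (qx K R) = t := by
  let g : FreeAlgebra ℤ (Option R) →ₐ[ℤ] S := FreeAlgebra.lift ℤ (fun o => o.elim t f)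
  have hg : ∀ ⦃a b⦄, Rel K R a b → (g : FreeAlgebra ℤ (Option R) →+* S) a = (g : _ →+* S) b := by
    intro a b h
    cases h <;> simp [g, Algebra.commutes]
  let F : Q K R →+* S := RingQuot.lift ⟨(g : FreeAlgebra ℤ (Option R) →+* S), hg⟩
  have h1 : ∀ r, F (qj K R r) = f r := fun r => by
    refine (RingQuot.lift_mkRingHom_apply _ hg _).trans ?_
    simp [g]
  refine ⟨{ F with commutes' := fun k => ?_ }, ?_, ?_⟩
  · exact (h1 _).trans (f.commutes k)
  · ext r; exact h1 r
  · refine (RingQuot.lift_mkRingHom_apply _ hg _).trans ?_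
    simp [g]

/-- Evaluation of polynomials at an element commuting with the image of the coefficients. -/
theorem exists_eval {S : Type*} [Ring S] [Algebra K S] (f : R →ₐ[K] S) (t : S)
    (ht : ∀ r, Commute (f r) t) :
    ∃ F : R[X] →ₐ[K] S, F.comp (CAlgHom : R →ₐ[K] R[X]) = f ∧ F X = t ∧
      ∀ p, F p = p.eval₂ (f : R →+* S) t := by
  refine ⟨eval₂AlgHom f t ht, ?_, ?_, fun p => rfl⟩
  · ext r
    exact eval₂_C _ _
  · exact eval₂_X _ _

theorem qjA_apply (r : R) : qjA K R r = qj K R r := rfl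

/-- Coefficients of the image of an element under `x ↦ x z`. -/
theorem coeff_form (F : Q K R →ₐ[K] (Q K R)[X]) (hF : F.comp (qjA K R) = CAlgHom.comp (qjA K R))
    (hx : F (qx K R) = C (qx K R) * X) (q : Q K R) :
    (∃ r, (F q).coeff 0 = qj K R r) ∧
    ∃ (n : ℕ) (a b : Fin n → R), (F q).coeff 1 = ∑ i, qj K R (a i) * qx K R * qj K R (b i) := by
  induction q using Q_induction with
  | hj r =>
    have : F (qj K R r) = C (qj K R r) := DFunLike.congr_fun hF r
    rw [this]
    exact ⟨⟨r, by simp⟩, 0, Fin.elim0, Fin.elim0, by simp [coeff_C]⟩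
  | hx =>
    rw [hx]
    exact ⟨⟨0, by simp⟩, 1, fun _ => 1, fun _ => 1, by simp⟩
  | hm p q h1 h2 =>
    obtain ⟨⟨r, hr⟩, n, a, b, h1⟩ := h1
    obtain ⟨⟨s, hs⟩, m, c, d, h2⟩ := h2
    rw [map_mul]
    refine ⟨⟨r * s, by simp [mul_coeff_zero, hr, hs]⟩, m + n,
      Fin.append (fun i => r * c i) a, Fin.append d (fun i => b i * s), ?_⟩
    rw [mul_coeff_one, hr, hs, h1, h2, Fin.sum_univ_add]
    simp [Finset.mul_sum, Finset.sum_mul, mul_assoc]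
  | ha p q h1 h2 =>
    obtain ⟨⟨r, hr⟩, n, a, b, h1⟩ := h1
    obtain ⟨⟨s, hs⟩, m, c, d, h2⟩ := h2
    rw [map_add]
    refine ⟨⟨r + s, by simp [hr, hs]⟩, n + m, Fin.append a c, Fin.append b d, ?_⟩
    rw [coeff_add, h1, h2, Fin.sum_univ_add]
    simp

/-- Evaluation at a square-zero element. -/
theorem eval_sq_zero {S : Type*} [Ring S] (f : R →+* S) (y : S) (hy : y * y = 0) (p : R[X]) :
    p.eval₂ f y = f (p.coeff 0) + f (p.coeff 1) * y := by
  induction p using Polynomial.induction_on' with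
  | add p q hp hq => rw [eval₂_add, hp, hq]; simp [add_mul]; abel
  | monomial n a =>
    rw [eval₂_monomial]
    obtain _ | _ | n := n
    · simp [coeff_monomial]
    · simp [coeff_monomial]
    · have : y ^ (n + 1 + 1) = 0 := by rw [pow_succ, pow_succ, mul_assoc, hy, mul_zero]
      rw [this]; simp [coeff_monomial]

/-- The scalar embedding into two by two matrices of polynomials. -/
noncomputable def sc (K : Type v) [Field K] (R : Type u) [Ring R] [Algebra K R] :
    R →ₐ[K] Matrix (Fin 2) (Fin 2) R[X] :=
  (Matrix.scalarAlgHom (Fin 2) K).comp CAlgHom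

theorem sc_mul (r : R) (m : Matrix (Fin 2) (Fin 2) R[X]) (i j : Fin 2) :
    (sc K R r * m) i j = C r * m i j := by
  simp [sc]

theorem sc_comm (r : R) (m : Matrix (Fin 2) (Fin 2) R[X])
    (hm : ∀ i j, m i j = 0 ∨ m i j = X) : Commute (sc K R r) m := by
  ext1 i j
  rw [sc_mul]
  have : (m * sc K R r) i j = m i j * C r := by simp [sc]
  rw [this]
  rcases hm i j with h | h <;> rw [h]
  · simp
  · exact (X_mul_C r).symm

theorem eval_swap (p : R[X]) :
    (p.eval₂ (sc K R : R →+* Matrix (Fin 2) (Fin 2) R[X]) !![0, X; X, 0]) 0 0 +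
    (p.eval₂ (sc K R : R →+* Matrix (Fin 2) (Fin 2) R[X]) !![0, X; X, 0]) 0 1 = p := by
  induction p using Polynomial.induction_on' with
  | add p q hp hq =>
    rw [eval₂_add, Matrix.add_apply, Matrix.add_apply]
    nth_rewrite 3 [← hp]
    nth_rewrite 3 [← hq]
    abel
  | monomial n a =>
    rw [eval₂_monomial]
    have : ∀ n : ℕ, ∀ i, ((!![0, X; X, 0] : Matrix (Fin 2) (Fin 2) R[X]) ^ n) i 0 +
        ((!![0, X; X, 0] : Matrix (Fin 2) (Fin 2) R[X]) ^ n) i 1 = X ^ n := by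
      intro n
      induction n with
      | zero => intro i; fin_cases i <;> simp
      | succ n ih =>
        intro i
        rw [pow_succ, Matrix.mul_apply, Matrix.mul_apply, pow_succ, ← ih i]
        simp [Fin.sum_univ_two, add_mul, add_comm]
    change (sc K R a * (_ : Matrix (Fin 2) (Fin 2) R[X])) 0 0 +
      (sc K R a * (_ : Matrix (Fin 2) (Fin 2) R[X])) 0 1 = _
    rw [sc_mul, sc_mul, ← mul_add, this, C_mul_X_pow_eq_monomial]

end Free

end ExtInner

theorem extended_inner_endomorphism_of_algebra
    (K : Type v) [Field K] (R : Type u) [Ring R] [Algebra K R] [Nontrivial R]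
    (β : ∀ (S : Type u) [Ring S] [Algebra K S], (R →ₐ[K] S) → (S →ₐ[K] S))
    (hnat : ∀ (S₁ S₂ : Type u) [Ring S₁] [Algebra K S₁] [Ring S₂] [Algebra K S₂]
      (f₁ : R →ₐ[K] S₁) (f₂ : R →ₐ[K] S₂) (h : S₁ →ₐ[K] S₂),
      h.comp f₁ = f₂ → (β S₂ f₂).comp h = h.comp (β S₁ f₁)) :
    ∃ (n : ℕ) (a b : Fin n → R),
      (∑ i, a i * b i = 1) ∧
      (∀ j k : Fin n, b j * a k = if j = k then 1 else 0) ∧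
      (∀ (S : Type u) [Ring S] [Algebra K S] (f : R →ₐ[K] S) (t : S),
        β S f t = ∑ i, f (a i) * t * f (b i)) := by
  open Polynomial ExtInner in
  have nat : ∀ (S₁ S₂ : Type u) [Ring S₁] [Algebra K S₁] [Ring S₂] [Algebra K S₂]
      (f₁ : R →ₐ[K] S₁) (f₂ : R →ₐ[K] S₂) (h : S₁ →ₐ[K] S₂),
      h.comp f₁ = f₂ → ∀ s, β S₂ f₂ (h s) = h (β S₁ f₁ s) := by
    intro S₁ S₂ _ _ _ _ f₁ f₂ h e s
    exact DFunLike.congr_fun (hnat S₁ S₂ f₁ f₂ h e) s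
  -- elements commuting with `R` are fixed
  obtain ⟨P, hP⟩ : ∃ P : R[X], P = β R[X] CAlgHom X := ⟨_, rfl⟩
  have hev : ∀ (S : Type u) [Ring S] [Algebra K S] (f : R →ₐ[K] S) (t : S),
      (∀ r, Commute (f r) t) → β S f t = P.eval₂ (f : R →+* S) t := by
    intro S _ _ f t ht
    obtain ⟨F, h1, h2, h3⟩ := exists_eval f t ht
    rw [← h3, hP, ← nat _ _ _ f F h1, h2]
  have hP1 : P = C (P.coeff 0 + P.coeff 0) + C (P.coeff 1) * X := by
    have e1 := hev _ (sc K R) !![0, X; X, 0]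
      (fun r => sc_comm r _ (by intro i j; fin_cases i <;> fin_cases j <;> simp))
    have e2 := hev _ (sc K R) !![0, X; 0, 0]
      (fun r => sc_comm r _ (by intro i j; fin_cases i <;> fin_cases j <;> simp))
    have e3 := hev _ (sc K R) !![0, 0; X, 0]
      (fun r => sc_comm r _ (by intro i j; fin_cases i <;> fin_cases j <;> simp))
    have hsum : (!![0, X; X, 0] : Matrix (Fin 2) (Fin 2) R[X]) =
        !![0, X; 0, 0] + !![0, 0; X, 0] := by simp
    have hz1 : (!![0, X; 0, 0] : Matrix (Fin 2) (Fin 2) R[X]) * !![0, X; 0, 0] = 0 := by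
      ext1 i j; fin_cases i <;> fin_cases j <;> simp
    have hz2 : (!![0, 0; X, 0] : Matrix (Fin 2) (Fin 2) R[X]) * !![0, 0; X, 0] = 0 := by
      ext1 i j; fin_cases i <;> fin_cases j <;> simp
    have e4 := e1
    rw [hsum, map_add, e2, e3, ← hsum, eval_sq_zero _ _ hz1, eval_sq_zero _ _ hz2] at e4
    have e5 := eval_swap (K := K) P
    rw [← e4] at e5
    have hc : ∀ r, ((sc K R : R →+* Matrix (Fin 2) (Fin 2) R[X]) r) 0 0 = C r ∧
        ((sc K R : R →+* Matrix (Fin 2) (Fin 2) R[X]) r) 0 1 = 0 := by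
      intro r; simp [sc]
    have hm : ∀ (r : R) (m : Matrix (Fin 2) (Fin 2) R[X]) (i j : Fin 2), ((sc K R : R →+* Matrix (Fin 2) (Fin 2) R[X]) r * m) i j
        = C r * m i j := fun r m i j => sc_mul r m i j
    simp only [Matrix.add_apply, hm, hc] at e5
    refine e5.symm.trans ?_
    simp
  have hP0 : P.coeff 0 = 0 := by
    have := congrArg (fun p => coeff p 0) hP1
    simpa using this
  have hPX : P = X := by
    have h1 := hev R (AlgHom.id K R) 1 (fun r => Commute.one_right r)
    rw [map_one, hP1, hP0] at h1
    simp at h1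
    rw [hP1, hP0, ← h1]; simp
  have hfix : ∀ (S : Type u) [Ring S] [Algebra K S] (f : R →ₐ[K] S) (t : S),
      (∀ r, Commute (f r) t) → β S f t = t := by
    intro S _ _ f t ht
    rw [hev S f t ht, hPX, eval₂_X]
  -- the universal element
  obtain ⟨w, hw⟩ : ∃ w, w = β (Q K R) (qjA K R) (qx K R) := ⟨_, rfl⟩
  obtain ⟨F, hF1, hF2⟩ := exists_lift ((CAlgHom : Q K R →ₐ[K] (Q K R)[X]).comp (qjA K R))
    (C (qx K R) * X)
  have hFw : F w = C w * X := by
    rw [hw, ← nat _ _ _ _ F hF1, hF2, map_mul, hfix _ (CAlgHom.comp (qjA K R)) X (fun r => (X_mul_C (qjA K R r)).symm)]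
    congr 1
    exact nat _ _ (qjA K R) _ CAlgHom rfl (qx K R)
  obtain ⟨-, n, a, b, hab⟩ := coeff_form F hF1 hF2 w
  rw [hFw, coeff_C_mul, coeff_X_one, mul_one] at hab
  let B : R →ₗ[K] R →ₗ[K] Q K R :=
    LinearMap.mk₂ K (fun r s => qjA K R r * qx K R * qjA K R s)
      (by intros; simp [add_mul]) (by intros; simp) (by intros; simp [mul_add])
      (by intros; simp)
  obtain ⟨n, a, b, hab, ha, hb⟩ := exists_indep B w ⟨n, a, b, hab⟩
  have hform : ∀ (S : Type u) [Ring S] [Algebra K S] (f : R →ₐ[K] S) (t : S),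
        β S f t = ∑ i, f (a i) * t * f (b i) := by
    intro S _ _ f t
    obtain ⟨G, hG1, hG2⟩ := exists_lift f t
    have hG : ∀ r, G (qjA K R r) = f r := fun r => DFunLike.congr_fun hG1 r
    rw [← hG2, nat _ _ _ f G hG1, ← hw, hab]
    simp [B, hG]
  refine ⟨n, a, b, ?_, ?_, hform⟩
  · have := hform R (AlgHom.id K R) 1
    simpa using this.symm
  · intro j k
    obtain ⟨l, hl⟩ := exists_dual b hb k
    rw [← sub_eq_zero]
    refine (Module.forall_dual_apply_eq_zero_iff K _).1 fun φ => ?_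
    let s : Module.End K R := φ.smulRight (1 : R)
    let t : Module.End K R := l.smulRight (1 : R)
    have h1 := map_mul (β _ (Algebra.lmul K R)) s t
    rw [hform, hform, hform] at h1
    have h2 := LinearMap.congr_fun h1 1
    have h3 : φ 1 • a k = ∑ i, φ (b i * a k) • a i := by
      simpa [s, t, hl, LinearMap.sum_apply, Finset.sum_mul, ite_smul, mul_ite, apply_ite φ] using h2
    have h4 : ∑ i, φ ((b i * a k) - if i = k then 1 else 0) • a i = 0 := by
      simp only [map_sub, sub_smul, Finset.sum_sub_distrib]
      rw [← h3, sub_eq_zero]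
      simp [apply_ite φ, ite_smul]
    exact Fintype.linearIndependent_iff.1 ha _ h4 j
end

section
/- Let K be a field and R a nonzero associative unital K-algebra. Suppose n, n' ∈ ℕ and a, b : Fin n → R, a', b' : Fin n' → R satisfy ∑ i, a i * b i = 1, b j * a k = (if j = k then 1 else 0) for all j k : Fin n, and likewise ∑ i, a' i * b' i = 1, b' j * a' k = (if j = k then 1 else 0) for all j k : Fin n'. Then the following are equivalent: (1) for every K-algebra S, every K-algebra homomorphism f : R →ₐ[K] S and every t ∈ S, ∑ i, f (a i) * t * f (b i) = ∑ j, f (a' j) * t * f (b' j); (2) n = n' and, identifying Fin n' with Fin n, there exists an invertible matrix U ∈ GL(Fin n, K) such that a' j = ∑ i, a i * algebraMap K R (U i j) for all j, and b' i = ∑ j, algebraMap K R (U⁻¹ i j) * b j for all i. -/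
universe u v

lemma aux_scalar
    (K : Type v) [Field K] (R : Type u) [Ring R] [Algebra K R] [Nontrivial R]
    (n n' : ℕ) (a b : Fin n → R) (a' b' : Fin n' → R)
    (hab₂ : ∀ j k : Fin n, b j * a k = if j = k then 1 else 0)
    (hab₂' : ∀ j k : Fin n', b' j * a' k = if j = k then 1 else 0)
    (H : ∀ (S : Type u) [Ring S] [Algebra K S] (f : R →ₐ[K] S) (t : S),
        ∑ i, f (a i) * t * f (b i) = ∑ j, f (a' j) * t * f (b' j)) (k : Fin n') (m : Fin n) :
    ∃ c : K, b' k * a m = algebraMap K R c := by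
  obtain ⟨g, hg⟩ := LinearMap.exists_leftInverse_of_injective (Algebra.linearMap K R)
    (LinearMap.ker_eq_bot.2 (algebraMap K R).injective)
  have hg1 : g 1 = 1 := by
    have := LinearMap.congr_fun hg 1
    simpa using this
  let t : Module.End K R :=
    (Algebra.linearMap K R) ∘ₗ g ∘ₗ (LinearMap.mulRight K (a m))
  have ht : ∀ x, t x = algebraMap K R (g (x * a m)) := fun x => rfl
  have h := LinearMap.congr_fun (H (Module.End K R) (Algebra.lmul K R) t) 1
  simp only [LinearMap.sum_apply, Module.End.mul_apply, Algebra.coe_lmul_eq_mul,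
    LinearMap.mul_apply', mul_one, ht, hab₂] at h
  refine ⟨g (b' k * a m), ?_⟩
  have h2 := congrArg (fun x => b' k * x) h
  simp only [Finset.mul_sum, ← mul_assoc, hab₂'] at h2
  rw [Finset.sum_eq_single m (by intro i _ hi; simp [hi]) (by simp),
    Finset.sum_eq_single k (by intro i _ hi; simp [hi.symm]) (by simp)] at h2
  simpa [hg1] using h2

theorem inner_endomorphism_vectors_agree_iff
    (K : Type v) [Field K] (R : Type u) [Ring R] [Algebra K R] [Nontrivial R]
    (n n' : ℕ) (a b : Fin n → R) (a' b' : Fin n' → R)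
    (hab₁ : ∑ i, a i * b i = 1)
    (hab₂ : ∀ j k : Fin n, b j * a k = if j = k then 1 else 0)
    (hab₁' : ∑ i, a' i * b' i = 1)
    (hab₂' : ∀ j k : Fin n', b' j * a' k = if j = k then 1 else 0) :
    (∀ (S : Type u) [Ring S] [Algebra K S] (f : R →ₐ[K] S) (t : S),
        ∑ i, f (a i) * t * f (b i) = ∑ j, f (a' j) * t * f (b' j)) ↔
      ∃ h : n = n', ∃ U : GL (Fin n) K,
        (∀ j : Fin n, a' (Fin.cast h j)
          = ∑ i, a i * algebraMap K R ((U : Matrix (Fin n) (Fin n) K) i j)) ∧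
        (∀ i : Fin n, b' (Fin.cast h i)
          = ∑ j, algebraMap K R (((U⁻¹ : GL (Fin n) K) : Matrix (Fin n) (Fin n) K) i j) * b j) := by
  constructor
  · intro H
    have hV := aux_scalar K R n n' a b a' b' hab₂ hab₂' H
    have hW := aux_scalar K R n' n a' b' a b hab₂' hab₂ (fun S _ _ f t => (H S f t).symm)
    choose V hV using hV
    choose W hW using hW
    have hinj := (algebraMap K R).injective
    have hWV : (Matrix.of W) * (Matrix.of V) = 1 := by
      ext i j
      apply hinj
      simp only [Matrix.mul_apply, Matrix.of_apply, map_sum, map_mul, ← hV, ← hW]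
      have : ∀ x, b i * a' x * (b' x * a j) = b i * (a' x * b' x) * a j := by
        intro x; simp only [mul_assoc]
      simp only [this, ← Finset.sum_mul, ← Finset.mul_sum, hab₁', mul_one, hab₂,
        Matrix.one_apply]
      split_ifs <;> simp
    have hVW : (Matrix.of V) * (Matrix.of W) = 1 := by
      ext i j
      apply hinj
      simp only [Matrix.mul_apply, Matrix.of_apply, map_sum, map_mul, ← hV, ← hW]
      have : ∀ x, b' i * a x * (b x * a' j) = b' i * (a x * b x) * a' j := by
        intro x; simp only [mul_assoc]
      simp only [this, ← Finset.sum_mul, ← Finset.mul_sum, hab₁, mul_one, hab₂',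
        Matrix.one_apply]
      split_ifs <;> simp
    have h : n = n' := by
      have := Matrix.square_of_invertible (Matrix.of W) (Matrix.of V) hWV hVW
      simpa using this
    subst h
    refine ⟨rfl, ⟨Matrix.of W, Matrix.of V, hWV, hVW⟩, ?_, ?_⟩
    · intro j
      simp only [Matrix.of_apply, ← hW, ← mul_assoc, ← Finset.sum_mul, hab₁]
      simp
    · intro i
      simp only [Units.inv_mk, Matrix.of_apply, ← hV, mul_assoc, ← Finset.mul_sum, hab₁]
      simp
  · rintro ⟨h, U, ha, hb⟩ S _ _ f t
    subst h
    simp only [Fin.cast_eq_self] at ha hb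
    have hU : (U : Matrix (Fin n) (Fin n) K) * ((U⁻¹ : GL (Fin n) K) : Matrix (Fin n) (Fin n) K)
        = 1 := by
      rw [← Units.val_mul, mul_inv_cancel, Units.val_one]
    generalize ((U⁻¹ : GL (Fin n) K) : Matrix (Fin n) (Fin n) K) = V at *
    have e : ∀ j, f (a' j) * t * f (b' j)
        = ∑ i, ∑ k, ((U : Matrix (Fin n) (Fin n) K) i j * V j k) • (f (a i) * t * f (b k)) := by
      intro j
      simp only [ha, hb, map_sum, map_mul, AlgHom.commutes, Finset.sum_mul, Finset.mul_sum,
        ← Algebra.commutes _ (f (a _))]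
      rw [Finset.sum_comm]
      refine Finset.sum_congr rfl fun i _ => Finset.sum_congr rfl fun k _ => ?_
      simp only [← Algebra.smul_def, smul_mul_assoc, mul_smul_comm, smul_smul]
      try rw [mul_comm]
    simp only [e]
    rw [Finset.sum_comm]
    refine Finset.sum_congr rfl fun i _ => ?_
    rw [Finset.sum_comm]
    simp only [← Finset.sum_smul, ← Matrix.mul_apply, hU, Matrix.one_apply]
    simp
end

section
/- Let K be a commutative ring, R an associative unital K-algebra, n ∈ ℕ, and a, b : Fin n → R vectors satisfying ∑ i, a i * b i = 1 and, for all j k : Fin n, b j * a k = (if j = k then 1 else 0). Then for every associative unital K-algebra S and every K-algebra homomorphism f : R →ₐ[K] S, the map t ↦ ∑ i, f (a i) * t * f (b i) is a K-algebra homomorphism from S to S; moreover the resulting family, indexed by all such f, is an extended inner endomorphism of R: for all K-algebra homomorphisms f₁ : R →ₐ[K] S₁, f₂ : R →ₐ[K] S₂ and h : S₁ →ₐ[K] S₂ with h.comp f₁ = f₂, the map associated to f₂ composed with h equals h composed with the map associated to f₁. -/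
universe u v

theorem vectors_give_extended_inner_endomorphism
    (K : Type v) [CommRing K] (R : Type u) [Ring R] [Algebra K R]
    (n : ℕ) (a b : Fin n → R)
    (hab₁ : ∑ i, a i * b i = 1)
    (hab₂ : ∀ j k : Fin n, b j * a k = if j = k then 1 else 0) :
    ∃ β : ∀ (S : Type u) [Ring S] [Algebra K S], (R →ₐ[K] S) → (S →ₐ[K] S),
      (∀ (S : Type u) [Ring S] [Algebra K S] (f : R →ₐ[K] S) (t : S),
        β S f t = ∑ i, f (a i) * t * f (b i)) ∧
      (∀ (S₁ S₂ : Type u) [Ring S₁] [Algebra K S₁] [Ring S₂] [Algebra K S₂]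
        (f₁ : R →ₐ[K] S₁) (f₂ : R →ₐ[K] S₂) (h : S₁ →ₐ[K] S₂),
        h.comp f₁ = f₂ → (β S₂ f₂).comp h = h.comp (β S₁ f₁)) := by
  have key : ∀ (S : Type u) [Ring S] [Algebra K S] (f : R →ₐ[K] S),
      ∃ g : S →ₐ[K] S, ∀ t, g t = ∑ i, f (a i) * t * f (b i) := by
    intro S _ _ f
    have h1 : ∑ i, f (a i) * f (b i) = 1 := by
      simpa using congrArg f hab₁
    have h2 : ∀ j k : Fin n, f (b j) * f (a k) = if j = k then 1 else 0 := by
      intro j k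
      rw [← map_mul, hab₂]
      split_ifs <;> simp
    let L : S →ₗ[K] S :=
      { toFun := fun t => ∑ i, f (a i) * t * f (b i)
        map_add' := fun x y => by
          simp only [mul_add, add_mul, Finset.sum_add_distrib]
        map_smul' := fun c x => by
          simp only [mul_smul_comm, smul_mul_assoc, Finset.smul_sum, RingHom.id_apply] }
    refine ⟨AlgHom.ofLinearMap L ?_ ?_, fun t => rfl⟩
    · change ∑ i, f (a i) * 1 * f (b i) = 1
      simpa using h1
    · intro x y
      change ∑ i, f (a i) * (x * y) * f (b i) =
        (∑ i, f (a i) * x * f (b i)) * ∑ i, f (a i) * y * f (b i)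
      rw [Finset.sum_mul_sum]
      refine Finset.sum_congr rfl fun i _ => ?_
      have h3 : ∀ j, f (a i) * x * f (b i) * (f (a j) * y * f (b j)) =
          if i = j then f (a i) * (x * y) * f (b i) else 0 := by
        intro j
        have h4 : f (a i) * x * f (b i) * (f (a j) * y * f (b j)) =
            f (a i) * x * (f (b i) * f (a j)) * y * f (b j) := by
          simp only [mul_assoc]
        rw [h4, h2]
        split_ifs with hij
        · subst hij
          simp only [mul_assoc, one_mul]
        · simp
      simp [h3]
  choose β hβ using key
  refine ⟨β, hβ, ?_⟩
  intro S₁ S₂ _ _ _ _ f₁ f₂ h hf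
  subst hf
  ext t
  simp [hβ]
end

section
/- Let K be a commutative ring, R an associative unital K-algebra, and (β f) an extended inner endomorphism of R. Then the K-algebra endomorphism β (AlgHom.id K R) : R →ₐ[K] R (the value of the family at the identity homomorphism of R, i.e., the corresponding inner endomorphism of R) is injective. -/
universe u v

theorem inner_diag_single {E : Type u} [Ring E] (a x : E) (i j : Fin 3) :
    (Matrix.diagonal fun _ => a) * Matrix.single i j x = Matrix.single i j (a * x) := by
  ext k l
  simp [Matrix.diagonal_mul, Matrix.single_apply]

theorem inner_single_diag {E : Type u} [Ring E] (a x : E) (i j : Fin 3) :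
    Matrix.single i j x * (Matrix.diagonal fun _ => a) = Matrix.single i j (x * a) := by
  ext k l
  simp [Matrix.mul_diagonal, Matrix.single_apply]

theorem inner_endomorphism_aux
    (K : Type v) [CommRing K] (R : Type u) [Ring R] [Algebra K R]
    (β : ∀ (S : Type u) [Ring S] [Algebra K S], (R →ₐ[K] S) → (S →ₐ[K] S))
    (hnat : ∀ (S₁ S₂ : Type u) [Ring S₁] [Algebra K S₁] [Ring S₂] [Algebra K S₂]
      (f₁ : R →ₐ[K] S₁) (f₂ : R →ₐ[K] S₂) (h : S₁ →ₐ[K] S₂),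
      h.comp f₁ = f₂ → (β S₂ f₂).comp h = h.comp (β S₁ f₁)) :
    ∃ c : R, ∀ (S : Type u) [Ring S] [Algebra K S] (f : R →ₐ[K] S) (n : S),
      n * n = 0 → (∀ a, Commute n (f a)) → β S f n = f c * n := by
  have h1 := hnat (DualNumber R) R (TrivSqZeroExt.inlAlgHom K R R) (AlgHom.id K R)
    (TrivSqZeroExt.fstHom K R R) (by ext; simp)
  have h2 := DFunLike.congr_fun h1 DualNumber.eps
  simp at h2
  set w := β (DualNumber R) (TrivSqZeroExt.inlAlgHom K R R) DualNumber.eps with hw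
  refine ⟨w.snd, fun S _ _ f n hn hc => ?_⟩
  have h3 := hnat (DualNumber R) S (TrivSqZeroExt.inlAlgHom K R R) f
    (DualNumber.lift ⟨(f, n), hn, hc⟩) (by ext; simp)
  have h4 := DFunLike.congr_fun h3 DualNumber.eps
  simp only [AlgHom.comp_apply, DualNumber.lift_apply_eps, ← hw] at h4
  rw [h4, DualNumber.lift_apply_apply]
  simp [← h2]

theorem inner_endomorphism_aux2
    (K : Type v) [CommRing K] (R : Type u) [Ring R] [Algebra K R]
    (β : ∀ (S : Type u) [Ring S] [Algebra K S], (R →ₐ[K] S) → (S →ₐ[K] S))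
    (hnat : ∀ (S₁ S₂ : Type u) [Ring S₁] [Algebra K S₁] [Ring S₂] [Algebra K S₂]
      (f₁ : R →ₐ[K] S₁) (f₂ : R →ₐ[K] S₂) (h : S₁ →ₐ[K] S₂),
      h.comp f₁ = f₂ → (β S₂ f₂).comp h = h.comp (β S₁ f₁))
    (E : Type u) [Ring E] [Algebra K E] (f : R →ₐ[K] E) (s : E)
    (hs : ∀ a, Commute s (f a)) : β E f s = s := by
  obtain ⟨c, hc⟩ := inner_endomorphism_aux K R β hnat
  let D : E →ₐ[K] Matrix (Fin 3) (Fin 3) E := Matrix.scalarAlgHom (Fin 3) K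
  have hD : ∀ x, D x = Matrix.diagonal fun _ => x := fun x => rfl
  let B := β _ (D.comp f)
  have hB : ∀ x, B (D x) = D (β E f x) := fun x =>
    DFunLike.congr_fun (hnat E _ f (D.comp f) D rfl) x
  have key : ∀ (i j : Fin 3) (x : E), i ≠ j → (∀ a, Commute x (f a)) →
      B (Matrix.single i j x) = Matrix.single i j (f c * x) := by
    intro i j x hij hx
    have := hc _ (D.comp f) (Matrix.single i j x)
      (by rw [Matrix.single_mul_single_of_ne]; exact hij.symm)
      (by
        intro a
        simp only [AlgHom.comp_apply, hD, commute_iff_eq, inner_single_diag,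
          inner_diag_single, (hx a).eq])
    rw [this]
    simp [hD, inner_diag_single]
  have h1 : ∀ a, Commute (1 : E) (f a) := fun a => Commute.one_left _
  have e1 : f c * f c = f c := by
    have := map_mul B (Matrix.single 0 1 1) (Matrix.single 1 2 1)
    rw [Matrix.single_mul_single_same, mul_one, key _ _ _ (by decide) h1,
      key _ _ _ (by decide) h1, key _ _ _ (by decide) h1, Matrix.single_mul_single_same] at this
    simpa using (congrFun (congrFun this 0) 2).symm
  have e2 : f c = 1 := by
    have hsum : (1 : Matrix (Fin 3) (Fin 3) E) = Matrix.single 0 1 1 * Matrix.single 1 0 1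
        + Matrix.single 1 0 1 * Matrix.single 0 1 1
        + Matrix.single 2 0 1 * Matrix.single 0 2 1 := by
      ext i j
      simp only [Matrix.single_mul_single_same]
      fin_cases i <;> fin_cases j <;> simp [Matrix.single_apply]
    have := congrArg B hsum
    rw [map_one, map_add, map_add, map_mul, map_mul, map_mul, key _ _ _ (by decide) h1,
      key _ _ _ (by decide) h1, key _ _ _ (by decide) h1, key _ _ _ (by decide) h1] at this
    have := congrFun (congrFun this 0) 0
    simp [Matrix.single_mul_single_same, Matrix.single_apply, e1] at this
    exact this.symm
  have h5 := map_mul B (D s) (Matrix.single 0 1 1)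
  rw [hB, hD, hD, inner_diag_single, key _ _ _ (by decide) h1,
    inner_diag_single, mul_one, key _ _ _ (by decide) hs, e2] at h5
  simpa using (congrFun (congrFun h5 0) 1).symm

open TensorProduct in
theorem inner_endomorphism_of_algebra_injective
    (K : Type v) [CommRing K] (R : Type u) [Ring R] [Algebra K R]
    (β : ∀ (S : Type u) [Ring S] [Algebra K S], (R →ₐ[K] S) → (S →ₐ[K] S))
    (hnat : ∀ (S₁ S₂ : Type u) [Ring S₁] [Algebra K S₁] [Ring S₂] [Algebra K S₂]
      (f₁ : R →ₐ[K] S₁) (f₂ : R →ₐ[K] S₂) (h : S₁ →ₐ[K] S₂),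
      h.comp f₁ = f₂ → (β S₂ f₂).comp h = h.comp (β S₁ f₁)) :
    Function.Injective (β R (AlgHom.id K R)) := by
  rw [injective_iff_map_eq_zero]
  intro r hr
  let f : R →ₐ[K] Module.End K (R ⊗[K] R) :=
    (Module.End.rTensorAlgHom K R R).comp (Algebra.lmul K R)
  have hf : ∀ a x y, f a (x ⊗ₜ y) = (a * x) ⊗ₜ y := fun a x y => rfl
  let u : Module.End K (R ⊗[K] R) := (TensorProduct.comm K R R).toLinearMap
  have hu : ∀ x y, u (x ⊗ₜ y) = y ⊗ₜ x := fun x y => by simp [u]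
  have h0 : β _ f (f r) = 0 := by
    have := DFunLike.congr_fun (hnat R _ (AlgHom.id K R) f f (by ext; simp)) r
    simpa [hr] using this
  have hs := inner_endomorphism_aux2 K R β hnat _ f (u * f r * u) (fun a => by
    rw [commute_iff_eq]
    refine TensorProduct.ext' fun x y => ?_
    simp only [Module.End.mul_apply, hf, hu])
  rw [map_mul, map_mul, h0, mul_zero, zero_mul] at hs
  have h6 := DFunLike.congr_fun hs ((1 : R) ⊗ₜ[K] (1 : R))
  simp only [Module.End.mul_apply, hf, hu, LinearMap.zero_apply, mul_one] at h6
  have h7 := congrArg (LinearMap.mul' K R) h6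
  simpa using h7.symm
end

section
/- Let K be a commutative ring. Every associative unital K-algebra R admits an injective K-algebra homomorphism f : R →ₐ[K] S into some associative unital K-algebra S with the property that for every nonzero r ∈ R, the two-sided ideal of S generated by f r contains a nonzero element of the center of S. -/
universe u v

open scoped TensorProduct

namespace EmbCenter

variable (K : Type v) [CommRing K] (R : Type u) [Ring R] [Algebra K R]

/-- Upper triangular 3×3 matrices over `R ⊗ R` whose two corner diagonal entries are
both equal to some `a ⊗ 1`. -/
def S : Subalgebra K (Matrix (Fin 3) (Fin 3) (R ⊗[K] R)) where
  carrier := {m | m 1 0 = 0 ∧ m 2 0 = 0 ∧ m 2 1 = 0 ∧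
    ∃ a : R, m 0 0 = a ⊗ₜ[K] (1 : R) ∧ m 2 2 = a ⊗ₜ[K] (1 : R)}
  mul_mem' := by
    rintro m n ⟨h1, h2, h3, a, h4, h5⟩ ⟨k1, k2, k3, b, k4, k5⟩
    refine ⟨?_, ?_, ?_, a * b, ?_, ?_⟩ <;>
      simp [Matrix.mul_apply, Fin.sum_univ_three, h1, h2, h3, h4, h5, k1, k2, k3, k4, k5]
  add_mem' := by
    rintro m n ⟨h1, h2, h3, a, h4, h5⟩ ⟨k1, k2, k3, b, k4, k5⟩
    refine ⟨?_, ?_, ?_, a + b, ?_, ?_⟩ <;>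
      simp [h1, h2, h3, h4, h5, k1, k2, k3, k4, k5, TensorProduct.add_tmul]
  algebraMap_mem' := by
    intro k
    refine ⟨?_, ?_, ?_, algebraMap K R k, ?_, ?_⟩ <;>
      simp [Matrix.algebraMap_matrix_apply, Algebra.TensorProduct.algebraMap_apply]

/-- The diagonal entries of the embedding. -/
noncomputable def d (i : Fin 3) : R →ₐ[K] R ⊗[K] R :=
  if i = 1 then Algebra.TensorProduct.includeRight else Algebra.TensorProduct.includeLeft

/-- The embedding. -/
noncomputable def f : R →ₐ[K] S K R :=
  ((Matrix.diagonalAlgHom K).comp (AlgHom.pi (d K R))).codRestrict (S K R) (by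
    intro a
    refine ⟨?_, ?_, ?_, a, ?_, ?_⟩ <;> simp [d])

theorem one_tmul_inj {a b : R} (h : (1 : R) ⊗ₜ[K] a = (1 : R) ⊗ₜ[K] b) : a = b := by
  simpa using congrArg (LinearMap.mul' K R) h

theorem f_val (a : R) : (f K R a : Matrix (Fin 3) (Fin 3) (R ⊗[K] R)) =
    Matrix.diagonal (fun i => d K R i a) := rfl

/-- The matrix unit `e₁₂`. -/
def x : S K R := ⟨Matrix.single 0 1 1, by
  refine ⟨?_, ?_, ?_, 0, ?_, ?_⟩ <;> simp [Matrix.single_apply]⟩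

/-- The matrix unit `e₂₃`. -/
def y : S K R := ⟨Matrix.single 1 2 1, by
  refine ⟨?_, ?_, ?_, 0, ?_, ?_⟩ <;> simp [Matrix.single_apply]⟩

theorem c_val (r : R) :
    ((x K R * f K R r * y K R : S K R) : Matrix (Fin 3) (Fin 3) (R ⊗[K] R)) =
      Matrix.single 0 2 ((1 : R) ⊗ₜ[K] r) := by
  ext i j
  simp only [Subalgebra.coe_mul, f_val, x, y]
  fin_cases i <;> fin_cases j <;>
    simp [Matrix.mul_apply, Fin.sum_univ_three, Matrix.single_apply, d, Matrix.diagonal_apply]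

theorem c_comm (r : R) (m : S K R) :
    (x K R * f K R r * y K R) * m = m * (x K R * f K R r * y K R) := by
  apply Subtype.ext
  rw [Subalgebra.coe_mul _ _ m, Subalgebra.coe_mul _ m, c_val]
  obtain ⟨m, h1, h2, h3, a, h4, h5⟩ := m
  ext i j
  fin_cases i <;> fin_cases j <;>
    simp [Matrix.mul_apply, Fin.sum_univ_three, Matrix.single_apply, h1, h2, h3, h4, h5]

end EmbCenter

theorem exists_embedding_ideal_meets_center
    (K : Type v) [CommRing K] (R : Type u) [Ring R] [Algebra K R] :
    ∃ (S : Type u) (_ : Ring S) (_ : Algebra K S) (f : R →ₐ[K] S),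
      Function.Injective f ∧
      ∀ r : R, r ≠ 0 → ∃ c : S, c ≠ 0 ∧ c ∈ Set.center S ∧
        c ∈ TwoSidedIdeal.span {f r} := by
  refine ⟨EmbCenter.S K R, inferInstance, inferInstance, EmbCenter.f K R, ?_, ?_⟩
  · intro a b h
    have h2 := congrArg (fun m : EmbCenter.S K R => m.1 1 1) h
    simp only [EmbCenter.f_val] at h2
    exact EmbCenter.one_tmul_inj K R (by simpa [EmbCenter.d] using h2)
  · intro r hr
    refine ⟨EmbCenter.x K R * EmbCenter.f K R r * EmbCenter.y K R, ?_, ?_, ?_⟩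
    · intro h
      have h2 := congrArg (fun m : EmbCenter.S K R => m.1 0 2) h
      simp only [EmbCenter.c_val] at h2
      exact hr (EmbCenter.one_tmul_inj K R (by simpa using h2))
    · rw [Semigroup.mem_center_iff]
      intro m
      exact (EmbCenter.c_comm K R r m).symm
    · exact TwoSidedIdeal.mul_mem_right _ _ _
        (TwoSidedIdeal.mul_mem_left _ _ _ (TwoSidedIdeal.subset_span rfl))
end

section
/- Let K be a commutative ring, R an associative unital K-algebra, and (β f) an extended inner endomorphism of R. Then for every associative unital K-algebra S, every K-algebra homomorphism f : R →ₐ[K] S, and every element c ∈ S that commutes with f r for all r ∈ R (i.e., c lies in the centralizer of the image of f), one has (β f) c = c. In particular, β f fixes every element of the center of S. -/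
universe u v

open Polynomial in
theorem extended_inner_endomorphism_fixes_centralizer
    (K : Type v) [CommRing K] (R : Type u) [Ring R] [Algebra K R]
    (β : ∀ (S : Type u) [Ring S] [Algebra K S], (R →ₐ[K] S) → (S →ₐ[K] S))
    (hnat : ∀ (S₁ S₂ : Type u) [Ring S₁] [Algebra K S₁] [Ring S₂] [Algebra K S₂]
      (f₁ : R →ₐ[K] S₁) (f₂ : R →ₐ[K] S₂) (h : S₁ →ₐ[K] S₂),
      h.comp f₁ = f₂ → (β S₂ f₂).comp h = h.comp (β S₁ f₁)) :
    (∀ (S : Type u) [Ring S] [Algebra K S] (f : R →ₐ[K] S) (c : S),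
      (∀ r : R, c * f r = f r * c) → β S f c = c) ∧
    (∀ (S : Type u) [Ring S] [Algebra K S] (f : R →ₐ[K] S),
      ∀ c ∈ Set.center S, β S f c = c) := by
  have main : ∀ (S : Type u) [Ring S] [Algebra K S] (f : R →ₐ[K] S) (c : S),
      (∀ r : R, c * f r = f r * c) → β S f c = c := by
    -- the universal element: `p = β X` in `R[X]`
    obtain ⟨p, hp⟩ : ∃ p : R[X], p = β R[X] CAlgHom X := ⟨_, rfl⟩
    have key : ∀ (S : Type u) [Ring S] [Algebra K S] (f : R →ₐ[K] S) (c : S)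
        (_ : ∀ r : R, c * f r = f r * c), β S f c = p.eval₂ (f : R →+* S) c := by
      intro S _ _ f c hc
      have h := hnat R[X] S CAlgHom f (eval₂AlgHom f c (fun a => (hc a).symm))
        (by ext r; exact eval₂_C _ _)
      have h2 := congrArg (fun φ => φ X) h
      have h3 : β S f (X.eval₂ (f : R →+* S) c) = (β R[X] CAlgHom X).eval₂ (f : R →+* S) c := h2
      rwa [eval₂_X, ← hp] at h3
    have h0 : p.coeff 0 = 0 := by
      have h := key R (AlgHom.id K R) 0 (by simp)
      rw [map_zero] at h
      simpa [eval₂_at_zero] using h.symm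
    have h1 : p.eval 1 = 1 := by
      have h := key R (AlgHom.id K R) 1 (by simp)
      rw [map_one] at h
      exact h.symm
    have hdec : p = p.divX.divX * X * X + C (p.coeff 1) * X := by
      conv_lhs => rw [← divX_mul_X_add p, ← divX_mul_X_add p.divX]
      simp [h0, add_mul, coeff_divX]
    -- elements of square zero
    have hsq : ∀ (S : Type u) [Ring S] [Algebra K S] (f : R →ₐ[K] S) (c : S)
        (_ : ∀ r : R, c * f r = f r * c), c * c = 0 → β S f c = f (p.coeff 1) * c := by
      intro S _ _ f c hc hcc
      rw [key S f c hc]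
      conv_lhs => rw [hdec]
      rw [eval₂_add, eval₂_mul_X, eval₂_mul_X, eval₂_mul_X, mul_assoc, hcc]
      simp
    let F : R →ₐ[K] Matrix (Fin 2) (Fin 2) R[X] :=
      (Matrix.scalarAlgHom (Fin 2) K).comp CAlgHom
    have hF : ∀ r, F r = Matrix.diagonal (fun _ => C r) := fun r => rfl
    let t : Matrix (Fin 2) (Fin 2) R[X] := !![0, X; 0, 0]
    let w : Matrix (Fin 2) (Fin 2) R[X] := !![0, 0; 1, 0]
    have ht : ∀ r, t * F r = F r * t := by
      intro r
      rw [hF]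
      ext i j : 2
      fin_cases i <;> fin_cases j <;> simp [t, X_mul_C]
    have hw : ∀ r, w * F r = F r * w := by
      intro r
      rw [hF]
      ext i j : 2
      fin_cases i <;> fin_cases j <;> simp [w]
    have htw : ∀ r, (t * w) * F r = F r * (t * w) := by
      intro r
      rw [mul_assoc, hw, ← mul_assoc, ht, mul_assoc]
    have htwd : t * w = Matrix.diagonal ![X, 0] := by
      ext i j : 2
      fin_cases i <;> fin_cases j <;> simp [t, w]
    have hev : ∀ q : R[X], (q.eval₂ (F : R →+* _) (t * w)) 0 0 = q := by
      intro q
      induction q using Polynomial.induction_on' with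
      | add a b ha hb => rw [eval₂_add, Matrix.add_apply, ha, hb]
      | monomial n a =>
        rw [eval₂_monomial, htwd, Matrix.diagonal_pow]
        simp [hF, C_mul_X_pow_eq_monomial]
    have hX : p = C (p.coeff 1 * p.coeff 1) * X := by
      have e1 := key _ F (t * w) htw
      rw [map_mul, hsq _ F t ht (by ext i j : 2; fin_cases i <;> fin_cases j <;> simp [t]), hsq _ F w hw (by ext i j : 2; fin_cases i <;> fin_cases j <;> simp [w])] at e1
      have e2 := congrFun (congrFun e1 0) 0
      rw [hev] at e2
      rw [mul_assoc, ← mul_assoc t, ht, mul_assoc (F _) t, htwd, ← mul_assoc, hF,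
        Matrix.diagonal_mul_diagonal, Matrix.diagonal_mul_diagonal] at e2
      rw [C_mul]
      exact e2.symm
    have hone : p.coeff 1 * p.coeff 1 = 1 := by
      rw [hX] at h1
      simpa using h1
    have hpX : p = X := by rw [hX, hone]; simp
    intro S _ _ f c hc
    rw [key S f c hc, hpX, eval₂_X]
  exact ⟨main, fun S _ _ f c hc => main S f c fun r => (Set.mem_center_iff.mp hc).comm (f r)⟩
end

section
/- Let K be a field and L a Lie algebra over K in universe u. Suppose given, for every Lie algebra M over K in universe u and every Lie algebra homomorphism f : L →ₗ⁅K⁆ M, a Lie algebra homomorphism β f : M →ₗ⁅K⁆ M, such that for all Lie algebra homomorphisms f₁ : L →ₗ⁅K⁆ M₁, f₂ : L →ₗ⁅K⁆ M₂ and h : M₁ →ₗ⁅K⁆ M₂ with h.comp f₁ = f₂, one has (β f₂).comp h = h.comp (β f₁). Then either β f is the zero map for every f, or β f is the identity map of M for every f. -/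
universe u v w w₁ w₂ w₃

open LieAlgebra
open scoped TensorProduct

namespace ExtInnerProof

/-- Bundled extended inner endomorphism. -/
structure EI (K : Type v) [Field K] (L : Type u) [LieRing L] [LieAlgebra K L] where
  app : ∀ (M : Type u) [LieRing M] [LieAlgebra K M], (L →ₗ⁅K⁆ M) → (M →ₗ⁅K⁆ M)
  nat : ∀ (M₁ M₂ : Type u) [LieRing M₁] [LieAlgebra K M₁] [LieRing M₂] [LieAlgebra K M₂]
      (f₁ : L →ₗ⁅K⁆ M₁) (f₂ : L →ₗ⁅K⁆ M₂) (h : M₁ →ₗ⁅K⁆ M₂),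
      h.comp f₁ = f₂ → (app M₂ f₂).comp h = h.comp (app M₁ f₁)

section Shr
variable (K : Type v) [Field K] (M : Type w) [LieRing M] [LieAlgebra K M] [Small.{u} M]

/-- A copy of a small Lie algebra in the universe `u`. -/
def Shr (M : Type w) [Small.{u} M] : Type u := Shrink.{u} M

noncomputable instance : LieRing (Shr.{u} M) := (equivShrink.{u} M).symm.lieRing
noncomputable instance : LieAlgebra K (Shr.{u} M) := (equivShrink.{u} M).symm.lieAlgebra K

noncomputable def shrEquiv : Shr.{u} M ≃ₗ⁅K⁆ M := (equivShrink.{u} M).symm.lieEquiv K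
end Shr

variable {K : Type v} [Field K] {L : Type u} [LieRing L] [LieAlgebra K L]

namespace EI
variable (B : EI K L)

/-- Extension of the family to small Lie algebras in any universe. -/
noncomputable def b {M : Type w} [LieRing M] [LieAlgebra K M] [Small.{u} M] (f : L →ₗ⁅K⁆ M) :
    M →ₗ⁅K⁆ M :=
  ((shrEquiv K M).toLieHom.comp (B.app (Shr.{u} M) ((shrEquiv K M).symm.toLieHom.comp f))).comp
    (shrEquiv K M).symm.toLieHom

theorem b_nat {M₁ : Type w₁} [LieRing M₁] [LieAlgebra K M₁] [Small.{u} M₁]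
    {M₂ : Type w₂} [LieRing M₂] [LieAlgebra K M₂] [Small.{u} M₂]
    {f₁ : L →ₗ⁅K⁆ M₁} {f₂ : L →ₗ⁅K⁆ M₂} (h : M₁ →ₗ⁅K⁆ M₂)
    (hh : ∀ x, h (f₁ x) = f₂ x) (m : M₁) : B.b f₂ (h m) = h (B.b f₁ m) := by
  have := B.nat (Shr.{u} M₁) (Shr.{u} M₂) ((shrEquiv K M₁).symm.toLieHom.comp f₁)
    ((shrEquiv K M₂).symm.toLieHom.comp f₂)
    (((shrEquiv K M₂).symm.toLieHom.comp h).comp (shrEquiv K M₁).toLieHom) (by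
      ext x
      simp [hh])
  have h2 := LieHom.congr_fun this ((shrEquiv K M₁).symm m)
  simp only [LieHom.comp_apply, LieEquiv.coe_toLieHom, LieEquiv.apply_symm_apply] at h2
  simp only [b, LieHom.comp_apply, LieEquiv.coe_toLieHom, h2, LieEquiv.apply_symm_apply]

theorem b_eq {M : Type u} [LieRing M] [LieAlgebra K M] (f : L →ₗ⁅K⁆ M) (m : M) :
    B.b f m = B.app M f m := by
  have := B.nat M (Shr.{u} M) f ((shrEquiv K M).symm.toLieHom.comp f)
    ((shrEquiv K M).symm.toLieHom) rfl
  have h2 := LieHom.congr_fun this m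
  simp only [LieHom.comp_apply, LieEquiv.coe_toLieHom] at h2
  simp only [b, LieHom.comp_apply, LieEquiv.coe_toLieHom, h2, LieEquiv.apply_symm_apply]

instance smallSD {N : Type w} [LieRing N] [LieAlgebra K N] [Small.{u} N]
    {M : Type w₁} [LieRing M] [LieAlgebra K M] [Small.{u} M]
    (ψ : M →ₗ⁅K⁆ LieDerivation K N N) : Small.{u} (N ⋊⁅ψ⁆ M) :=
  small_map SemiDirectSum.toProd

section sigma
variable {N : Type w} [LieRing N] [LieAlgebra K N] [Small.{u} N]
  (ψ : L →ₗ⁅K⁆ LieDerivation K N N)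

/-- The endomorphism of `N` induced on the ideal `N` of the semidirect sum. -/
noncomputable def σ (n : N) : N := (B.b (SemiDirectSum.inr ψ) (SemiDirectSum.inl ψ n)).left

theorem b_inl (n : N) : B.b (SemiDirectSum.inr ψ) (SemiDirectSum.inl ψ n) =
    SemiDirectSum.inl ψ (B.σ ψ n) := by
  ext
  · rfl
  · have := B.b_nat (f₁ := SemiDirectSum.inr ψ) (f₂ := LieHom.id) (SemiDirectSum.projr ψ)
      (fun x => rfl) (SemiDirectSum.inl ψ n)
    simp only [SemiDirectSum.projr_mk] at this
    rw [← this]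
    simp

theorem σ_lie (a c : N) : B.σ ψ ⁅a, c⁆ = ⁅B.σ ψ a, B.σ ψ c⁆ := by
  apply SemiDirectSum.inl_injective ψ
  rw [← b_inl, LieHom.map_lie, LieHom.map_lie, b_inl, b_inl, LieHom.map_lie]

theorem σ_add (a c : N) : B.σ ψ (a + c) = B.σ ψ a + B.σ ψ c := by
  apply SemiDirectSum.inl_injective ψ
  rw [← b_inl, map_add, map_add, b_inl, b_inl, map_add]

theorem σ_smul (k : K) (c : N) : B.σ ψ (k • c) = k • B.σ ψ c := by
  apply SemiDirectSum.inl_injective ψ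
  rw [← b_inl, map_smul, map_smul, b_inl, map_smul]

/-- The Lie homomorphism out of a semidirect sum. -/
def sdLift {M : Type w₁} [LieRing M] [LieAlgebra K M] {S : Type w₂} [LieRing S] [LieAlgebra K S]
    {N : Type w} [LieRing N] [LieAlgebra K N] (ψ : S →ₗ⁅K⁆ LieDerivation K N N)
    (f : S →ₗ⁅K⁆ M) (g : N →ₗ⁅K⁆ M)
    (h : ∀ x n, g (ψ x n) = ⁅f x, g n⁆) : (N ⋊⁅ψ⁆ S) →ₗ⁅K⁆ M where
  toFun p := g p.left + f p.right
  map_add' p q := by simp; abel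
  map_smul' k p := by simp
  map_lie' := by
    intro p q
    simp [h]
    rw [← lie_skew (f q.right) (g p.left)]
    abel

/-- Main compatibility. -/
theorem b_of {M : Type w₁} [LieRing M] [LieAlgebra K M] [Small.{u} M]
    (f : L →ₗ⁅K⁆ M) (g : N →ₗ⁅K⁆ M)
    (h : ∀ x n, g (ψ x n) = ⁅f x, g n⁆) (n : N) : B.b f (g n) = g (B.σ ψ n) := by
  have := B.b_nat (f₁ := SemiDirectSum.inr ψ) (f₂ := f) (sdLift ψ f g h)
    (fun x => by simp [sdLift]) (SemiDirectSum.inl ψ n)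
  rw [b_inl] at this
  simpa [sdLift] using this

theorem σ_nat {N' : Type w₁} [LieRing N'] [LieAlgebra K N'] [Small.{u} N']
    (ψ' : L →ₗ⁅K⁆ LieDerivation K N' N') (g : N →ₗ⁅K⁆ N')
    (h : ∀ x n, g (ψ x n) = ψ' x (g n)) (n : N) : B.σ ψ' (g n) = g (B.σ ψ n) := by
  have := B.b_of ψ (SemiDirectSum.inr ψ') ((SemiDirectSum.inl ψ').comp g)
    (fun x n => by simp [h]) n
  simp only [LieHom.comp_apply, b_inl] at this
  exact SemiDirectSum.inl_injective ψ' this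

end sigma
end EI

/-- A representation of a Lie algebra. -/
structure LRep (K : Type v) [Field K] (S : Type w₁) [LieRing S] [LieAlgebra K S]
    (V : Type w) [AddCommGroup V] [Module K V] where
  ρ : S →ₗ[K] V →ₗ[K] V
  h : ∀ x y v, ρ ⁅x, y⁆ v = ρ x (ρ y v) - ρ y (ρ x v)

/-- A module regarded as an abelian Lie algebra. -/
def Ab (V : Type w) : Type w := V

section Ab
variable {S : Type w₁} [LieRing S] [LieAlgebra K S]
variable {V : Type w} [AddCommGroup V] [Module K V]
variable {W : Type w₂} [AddCommGroup W] [Module K W]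

instance : AddCommGroup (Ab V) := inferInstanceAs (AddCommGroup V)
instance : Module K (Ab V) := inferInstanceAs (Module K V)
instance [Small.{u} V] : Small.{u} (Ab V) := inferInstanceAs (Small.{u} V)
instance : LieRing (Ab V) where
  bracket _ _ := 0
  add_lie _ _ _ := by change (0 : Ab V) = 0 + 0; simp
  lie_add _ _ _ := by change (0 : Ab V) = 0 + 0; simp
  lie_self _ := rfl
  leibniz_lie _ _ _ := by change (0 : Ab V) = 0 + 0; simp
theorem ab_lie (a c : Ab V) : ⁅a, c⁆ = 0 := rfl
instance : LieAlgebra K (Ab V) where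
  lie_smul _ _ _ := by simp [ab_lie]

/-- The identity map to `Ab V`. -/
def toAb : V ≃ₗ[K] Ab V := LinearEquiv.refl K V

/-- A linear map whose image has zero brackets gives a Lie homomorphism from `Ab V`. -/
def abHom {N : Type w₂} [LieRing N] [LieAlgebra K N] (g : V →ₗ[K] N)
    (hg : ∀ a c, ⁅g a, g c⁆ = 0) : Ab V →ₗ⁅K⁆ N where
  toFun := g
  map_add' := g.map_add
  map_smul' := g.map_smul
  map_lie' := by
    intro x y
    have h1 : ⁅g x, g y⁆ = 0 := hg x y
    rw [h1]
    exact g.map_zero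

/-- A representation gives an action by derivations of the abelian Lie algebra. -/
def LRep.der (r : LRep K S V) : S →ₗ⁅K⁆ LieDerivation K (Ab V) (Ab V) where
  toFun x := { toLinearMap := (r.ρ x : V →ₗ[K] V)
               leibniz' := fun a c => by
                 simp only [ab_lie, sub_zero]
                 exact (r.ρ x).map_zero }
  map_add' x y := by ext a; exact LinearMap.congr_fun (r.ρ.map_add x y) a
  map_smul' x y := by ext a; exact LinearMap.congr_fun (r.ρ.map_smul x y) a
  map_lie' := by
    intro x y
    ext a
    rw [LieDerivation.commutator_apply]
    exact r.h x y a

theorem der_toAb (r : LRep K S V) (x : S) (v : V) :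
    r.der x (toAb (K := K) v) = toAb (K := K) (r.ρ x v) := rfl
end Ab

namespace EI
variable (B : EI K L)

section s
variable {V : Type w} [AddCommGroup V] [Module K V] [Small.{u} V]
variable {W : Type w₂} [AddCommGroup W] [Module K W] [Small.{u} W]

/-- The operator on representations. -/
noncomputable def s (r : LRep K L V) : V →ₗ[K] V where
  toFun v := B.σ (N := Ab V) r.der v
  map_add' a c := B.σ_add r.der _ _
  map_smul' k c := B.σ_smul r.der _ _

theorem s_hom {N : Type w₂} [LieRing N] [LieAlgebra K N] [Small.{u} N] (r : LRep K L V)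
    (ψ : L →ₗ⁅K⁆ LieDerivation K N N) (g : V →ₗ[K] N)
    (hg : ∀ a c, ⁅g a, g c⁆ = 0) (h : ∀ x n, g (r.ρ x n) = ψ x (g n)) (v : V) :
    B.σ ψ (g v) = g (B.s r v) :=
  B.σ_nat r.der ψ (abHom g hg) h v

theorem s_nat (r : LRep K L V) (r' : LRep K L W) (g : V →ₗ[K] W)
    (h : ∀ x n, g (r.ρ x n) = r'.ρ x (g n)) (v : V) :
    B.s r' (g v) = g (B.s r v) :=
  B.s_hom r r'.der (N := Ab W) g (fun _ _ => rfl) h v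

theorem b_s {M : Type w₁} [LieRing M] [LieAlgebra K M] [Small.{u} M]
    (r : LRep K L V) (f : L →ₗ⁅K⁆ M) (g : V →ₗ[K] M) (hg : ∀ a c, ⁅g a, g c⁆ = 0)
    (h : ∀ x n, g (r.ρ x n) = ⁅f x, g n⁆) (v : V) : B.b f (g v) = g (B.s r v) :=
  B.b_of r.der f (abHom g hg) h v
end s
end EI

/-- Heisenberg type Lie algebra of a commutative algebra. -/
def Heis (A : Type w) : Type w := A × A × A

section Heis
variable {A : Type w} [CommRing A] [Algebra K A]
instance : AddCommGroup (Heis A) := inferInstanceAs (AddCommGroup (A × A × A))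
instance : Module K (Heis A) := inferInstanceAs (Module K (A × A × A))
instance [Small.{u} A] : Small.{u} (Heis A) := inferInstanceAs (Small.{u} (A × A × A))
@[ext] theorem Heis.ext {a c : Heis A} (h1 : a.1 = c.1) (h2 : a.2.1 = c.2.1)
    (h3 : a.2.2 = c.2.2) : a = c := Prod.ext h1 (Prod.ext h2 h3)
@[simp] theorem Heis.add1 (a c : Heis A) : (a + c).1 = a.1 + c.1 := rfl
@[simp] theorem Heis.add2 (a c : Heis A) : (a + c).2.1 = a.2.1 + c.2.1 := rfl
@[simp] theorem Heis.add3 (a c : Heis A) : (a + c).2.2 = a.2.2 + c.2.2 := rfl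
@[simp] theorem Heis.sub1 (a c : Heis A) : (a - c).1 = a.1 - c.1 := rfl
@[simp] theorem Heis.sub2 (a c : Heis A) : (a - c).2.1 = a.2.1 - c.2.1 := rfl
@[simp] theorem Heis.sub3 (a c : Heis A) : (a - c).2.2 = a.2.2 - c.2.2 := rfl
@[simp] theorem Heis.zero1 : (0 : Heis A).1 = 0 := rfl
@[simp] theorem Heis.zero2 : (0 : Heis A).2.1 = 0 := rfl
@[simp] theorem Heis.zero3 : (0 : Heis A).2.2 = 0 := rfl
@[simp] theorem Heis.smul1 (k : K) (a : Heis A) : (k • a).1 = k • a.1 := rfl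
@[simp] theorem Heis.smul2 (k : K) (a : Heis A) : (k • a).2.1 = k • a.2.1 := rfl
@[simp] theorem Heis.smul3 (k : K) (a : Heis A) : (k • a).2.2 = k • a.2.2 := rfl
instance : Bracket (Heis A) (Heis A) := ⟨fun x y => (0, 0, x.1 * y.2.1 - y.1 * x.2.1)⟩
@[simp] theorem Heis.lie1 (a c : Heis A) : (⁅a, c⁆).1 = 0 := rfl
@[simp] theorem Heis.lie2 (a c : Heis A) : (⁅a, c⁆).2.1 = 0 := rfl
@[simp] theorem Heis.lie3 (a c : Heis A) : (⁅a, c⁆).2.2 = a.1 * c.2.1 - c.1 * a.2.1 := rfl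
instance : LieRing (Heis A) where
  add_lie x y z := by ext <;> simp; ring
  lie_add x y z := by ext <;> simp; ring
  lie_self x := by ext <;> simp
  leibniz_lie x y z := by ext <;> simp
instance : LieAlgebra K (Heis A) where
  lie_smul k x y := by ext <;> simp [smul_sub]

/-- Componentwise action of a derivation. -/
def heisLin (D : Derivation K A A) : Heis A →ₗ[K] Heis A where
  toFun a := (D a.1, D a.2.1, D a.2.2)
  map_add' a c := Heis.ext (map_add D _ _) (map_add D _ _) (map_add D _ _)
  map_smul' k c := Heis.ext (D.map_smul k _) (D.map_smul k _) (D.map_smul k _)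
@[simp] theorem heisLin1 (D : Derivation K A A) (a : Heis A) : (heisLin D a).1 = D a.1 := rfl
@[simp] theorem heisLin2 (D : Derivation K A A) (a : Heis A) : (heisLin D a).2.1 = D a.2.1 := rfl
@[simp] theorem heisLin3 (D : Derivation K A A) (a : Heis A) : (heisLin D a).2.2 = D a.2.2 := rfl

/-- Action on the Heisenberg algebra. -/
def heisAct {S : Type w₁} [LieRing S] [LieAlgebra K S] (D : S →ₗ⁅K⁆ Derivation K A A) :
    S →ₗ⁅K⁆ LieDerivation K (Heis A) (Heis A) where
  toFun x :=
    { toLinearMap := heisLin (D x)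
      leibniz' := fun a c => by ext <;> simp; ring }
  map_add' x y := by ext a <;> simp
  map_smul' x y := by ext a <;> simp
  map_lie' := by
    intro x y
    ext a <;> simp [Derivation.commutator_apply, LieDerivation.commutator_apply]

@[simp] theorem heisAct_apply {S : Type w₁} [LieRing S] [LieAlgebra K S]
    (D : S →ₗ⁅K⁆ Derivation K A A) (x : S) (a : Heis A) : heisAct D x a = heisLin (D x) a := rfl

/-- The representation underlying an action by derivations. -/
def derRep {S : Type w₁} [LieRing S] [LieAlgebra K S] (D : S →ₗ⁅K⁆ Derivation K A A) :
    LRep K S A where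
  ρ := { toFun := fun x => (D x : A →ₗ[K] A)
         map_add' := fun x y => by ext a; simp
         map_smul' := fun x y => by ext a; simp }
  h x y v := by
    change D ⁅x, y⁆ v = D x (D y v) - D y (D x v)
    rw [LieHom.map_lie, Derivation.commutator_apply]
/-- Inclusion of a component. -/
def hg1 : A →ₗ[K] Heis A :=
    { toFun := fun a => (a, 0, 0)
      map_add' := fun _ _ => Heis.ext rfl (add_zero _).symm (add_zero _).symm
      map_smul' := fun _ _ => Heis.ext rfl (smul_zero _).symm (smul_zero _).symm }
@[simp] theorem hg1_1 (a : A) : (hg1 (K := K) a : Heis A).1 = a := rfl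
@[simp] theorem hg1_2 (a : A) : (hg1 (K := K) a : Heis A).2.1 = 0 := rfl
@[simp] theorem hg1_3 (a : A) : (hg1 (K := K) a : Heis A).2.2 = 0 := rfl
/-- Inclusion of a component. -/
def hg2 : A →ₗ[K] Heis A :=
    { toFun := fun a => (0, a, 0)
      map_add' := fun _ _ => Heis.ext (add_zero _).symm rfl (add_zero _).symm
      map_smul' := fun _ _ => Heis.ext (smul_zero _).symm rfl (smul_zero _).symm }
@[simp] theorem hg2_1 (a : A) : (hg2 (K := K) a : Heis A).1 = 0 := rfl
@[simp] theorem hg2_2 (a : A) : (hg2 (K := K) a : Heis A).2.1 = a := rfl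
@[simp] theorem hg2_3 (a : A) : (hg2 (K := K) a : Heis A).2.2 = 0 := rfl
/-- Inclusion of a component. -/
def hg3 : A →ₗ[K] Heis A :=
    { toFun := fun a => (0, 0, a)
      map_add' := fun _ _ => Heis.ext (add_zero _).symm (add_zero _).symm rfl
      map_smul' := fun _ _ => Heis.ext (smul_zero _).symm (smul_zero _).symm rfl }
@[simp] theorem hg3_1 (a : A) : (hg3 (K := K) a : Heis A).1 = 0 := rfl
@[simp] theorem hg3_2 (a : A) : (hg3 (K := K) a : Heis A).2.1 = 0 := rfl
@[simp] theorem hg3_3 (a : A) : (hg3 (K := K) a : Heis A).2.2 = a := rfl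
end Heis

namespace EI
variable (B : EI K L)

theorem s_mul {A : Type w} [CommRing A] [Algebra K A] [Small.{u} A]
    (D : L →ₗ⁅K⁆ Derivation K A A) (a c : A) :
    B.s (derRep D) (a * c) = B.s (derRep D) a * B.s (derRep D) c := by
  let g1 : A →ₗ[K] Heis A := hg1
  let g2 : A →ₗ[K] Heis A := hg2
  let g3 : A →ₗ[K] Heis A := hg3
  have e1 := B.s_hom (derRep D) (heisAct D) g1 (fun a c => by ext <;> simp [g1])
    (fun x n => by ext <;> simp [g1, heisAct, derRep])
  have e2 := B.s_hom (derRep D) (heisAct D) g2 (fun a c => by ext <;> simp [g2])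
    (fun x n => by ext <;> simp [g2, heisAct, derRep])
  have e3 := B.s_hom (derRep D) (heisAct D) g3 (fun a c => by ext <;> simp [g3])
    (fun x n => by ext <;> simp [g3, heisAct, derRep])
  have key : ∀ a c, g3 (a * c) = ⁅g1 a, g2 c⁆ := fun a c => by
    ext <;> simp [g1, g2, g3]
  have := e3 (a * c)
  rw [key, σ_lie, e1, e2, ← key] at this
  simpa [g3] using (congrArg (fun z : Heis A => z.2.2) this).symm

end EI

section DO
variable {A : Type w} [CommRing A] [Algebra K A]

/-- Differential operators of order less than `n`. -/
def DO : ℕ → Module.End K A → Prop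
  | 0, T => T = 0
  | n + 1, T => ∀ a : A, DO n (T * LinearMap.mulLeft K a - LinearMap.mulLeft K a * T)

theorem DO_zero (n : ℕ) : DO n (0 : Module.End K A) := by
  induction n with
  | zero => rfl
  | succ n ih => intro a; simpa using ih

theorem DO_succ (n : ℕ) (T : Module.End K A) (h : DO n T) : DO (n + 1) T := by
  induction n generalizing T with
  | zero =>
    have : T = 0 := h
    subst this
    exact DO_zero 1
  | succ n ih => intro a; exact ih _ (h a)

theorem DO_mono {m n : ℕ} (hmn : m ≤ n) (T : Module.End K A) (h : DO m T) : DO n T := by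
  induction hmn with
  | refl => exact h
  | step _ ih => exact DO_succ _ _ ih

theorem DO_add (n : ℕ) (S T : Module.End K A) (hS : DO n S) (hT : DO n T) : DO n (S + T) := by
  induction n generalizing S T with
  | zero =>
    have h1 : S = 0 := hS
    have h2 : T = 0 := hT
    subst h1 h2
    exact add_zero _
  | succ n ih =>
    intro a
    have := ih _ _ (hS a) (hT a)
    convert this using 1
    noncomm_ring

theorem DO_mul (m n : ℕ) (S T : Module.End K A) (hS : DO m S) (hT : DO n T) :
    DO (m + n) (S * T) := by
  induction m generalizing S T n with
  | zero =>
    have h1 : S = 0 := hS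
    subst h1
    rw [zero_mul]
    exact DO_zero _
  | succ m ihm =>
    induction n generalizing S T with
    | zero =>
      have h1 : T = 0 := hT
      subst h1
      rw [mul_zero]
      exact DO_zero _
    | succ n ihn =>
      intro a
      have h1 := ihn S _ hS (hT a)
      have h2 := ihm (n + 1) _ T (hS a) hT
      have h3 := DO_add (m + 1 + n) _ _ h1 (by rw [show m + 1 + n = m + (n + 1) by omega]; exact h2)
      have h4 : S * T * LinearMap.mulLeft K a - LinearMap.mulLeft K a * (S * T) =
          S * (T * LinearMap.mulLeft K a - LinearMap.mulLeft K a * T) +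
          (S * LinearMap.mulLeft K a - LinearMap.mulLeft K a * S) * T := by
        rw [mul_sub, sub_mul, mul_assoc, mul_assoc, mul_assoc]
        abel
      rw [← h4] at h3
      exact h3

theorem DO_mulLeft (a : A) : DO 1 (LinearMap.mulLeft K a) := by
  intro c
  change _ = _
  ext x
  simp
  ring

theorem DO_der (D : Derivation K A A) : DO 2 (D : A →ₗ[K] A) := by
  intro a
  have : ((D : A →ₗ[K] A) : Module.End K A) * LinearMap.mulLeft K a -
      LinearMap.mulLeft K a * ((D : A →ₗ[K] A) : Module.End K A) = LinearMap.mulLeft K (D a) := by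
    ext x
    simp
    ring
  rw [this]
  exact DO_mulLeft _

theorem DO_adjoin (X : Set (Module.End K A)) (hX : ∀ T ∈ X, DO 2 T) (T : Module.End K A)
    (hT : T ∈ Algebra.adjoin K X) : ∃ n, DO n T := by
  induction hT using Algebra.adjoin_induction with
  | mem T h => exact ⟨2, hX T h⟩
  | algebraMap r =>
    refine ⟨1, ?_⟩
    have : algebraMap K (Module.End K A) r = LinearMap.mulLeft K (algebraMap K A r) := by
      ext x
      simp [Algebra.smul_def]
    rw [this]
    exact DO_mulLeft _
  | add S T _ _ hS hT =>
    obtain ⟨m, hm⟩ := hS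
    obtain ⟨n, hn⟩ := hT
    exact ⟨max m n, DO_add _ _ _ (DO_mono (le_max_left _ _) _ hm)
      (DO_mono (le_max_right _ _) _ hn)⟩
  | mul S T _ _ hS hT =>
    obtain ⟨m, hm⟩ := hS
    obtain ⟨n, hn⟩ := hT
    exact ⟨_, DO_mul _ _ _ _ hm hn⟩

/-- A multiplicative differential operator on a domain is the identity. -/
theorem DO_mult [IsDomain A] (T : Module.End K A) (h1 : T 1 = 1)
    (hm : ∀ a c, T (a * c) = T a * T c) (n : ℕ) (hT : DO n T) (a : A) : T a = a := by
  by_contra hne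
  have key : ∀ (n : ℕ) (c : A), c ≠ 0 → ¬ DO n (LinearMap.mulLeft K c * T) := by
    intro n
    induction n with
    | zero =>
      intro c hc h
      have h0 : LinearMap.mulLeft K c * T = 0 := h
      have := LinearMap.congr_fun h0 1
      simp [h1] at this
      exact hc this
    | succ n ih =>
      intro c hc h
      refine ih (c * (T a - a)) (mul_ne_zero hc (sub_ne_zero.mpr hne)) ?_
      have := h a
      convert this using 1
      ext x
      simp [hm]
      ring
  refine key n 1 one_ne_zero ?_
  convert hT using 1
  ext x
  simp
end DO

instance smallLin {V : Type w} [AddCommGroup V] [Module K V] [Small.{u} V] :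
    Small.{u} (Module.End K V) :=
  small_of_injective (β := V → V) (f := fun T => ⇑T) DFunLike.coe_injective

instance smallMv {ι : Type w} [Small.{u} ι] [Small.{u} K] : Small.{u} (MvPolynomial ι K) := by
  let e : MvPolynomial (Shrink.{u} ι) (Shrink.{u} K) ≃+* MvPolynomial (Shrink.{u} ι) K :=
    MvPolynomial.mapEquiv _ (Shrink.ringEquiv K)
  let e2 : MvPolynomial (Shrink.{u} ι) K ≃ₐ[K] MvPolynomial ι K :=
    MvPolynomial.renameEquiv K (equivShrink.{u} ι).symm
  exact small_of_surjective (e2.surjective.comp e.surjective)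

namespace EI
variable (B : EI K L)

theorem exists_op {A : Type w} [AddCommGroup A] [Module K A] [Small.{u} A]
    (r : LRep K L A) : ∃ T ∈ Algebra.adjoin K (Set.range fun x => (r.ρ x : Module.End K A)),
      B.s r = T := by
  let U := Algebra.adjoin K (Set.range fun x => (r.ρ x : Module.End K A))
  have hU : ∀ x, (r.ρ x : Module.End K A) ∈ U := fun x => Algebra.subset_adjoin ⟨x, rfl⟩
  let r' : LRep K L U :=
    { ρ := { toFun := fun x => LinearMap.mulLeft K (⟨r.ρ x, hU x⟩ : U)
             map_add' := fun x y => by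
               ext T v
               simp
             map_smul' := fun k y => by
               ext T v
               simp }
      h := fun x y T => by
        ext v
        simp [r.h] }
  refine ⟨(B.s r' 1 : U), (B.s r' 1).2, ?_⟩
  ext a
  let g : U →ₗ[K] A :=
    { toFun := fun T => (T : Module.End K A) a
      map_add' := fun _ _ => rfl
      map_smul' := fun _ _ => rfl }
  have := B.s_nat r' r g (fun x n => by simp [g, r']) 1
  simpa [g] using this

variable [Small.{u} K]

/-- The scalar by which the family acts on trivial representations. -/
noncomputable def c : K := B.s (derRep (0 : L →ₗ⁅K⁆ Derivation K K K)) 1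

theorem c_cases : B.c = 0 ∨ B.c = 1 := by
  have := B.s_mul (0 : L →ₗ⁅K⁆ Derivation K K K) 1 1
  rw [mul_one] at this
  have h : B.c = B.c * B.c := this
  by_cases h0 : B.c = 0
  · exact Or.inl h0
  · right
    exact mul_left_cancel₀ h0 (by rw [mul_one, ← h])

theorem s_one {A : Type w} [CommRing A] [Algebra K A] [Small.{u} A]
    (D : L →ₗ⁅K⁆ Derivation K A A) : B.s (derRep D) 1 = algebraMap K A B.c := by
  have := B.s_nat (derRep (0 : L →ₗ⁅K⁆ Derivation K K K)) (derRep D) (Algebra.linearMap K A)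
    (fun x n => by simp [derRep]) 1
  simpa [c] using this

theorem s_domain (hc : B.c = 1) {A : Type w} [CommRing A] [Algebra K A] [Small.{u} A] [IsDomain A]
    (D : L →ₗ⁅K⁆ Derivation K A A) (a : A) : B.s (derRep D) a = a := by
  obtain ⟨T, hT, h⟩ := B.exists_op (derRep D)
  obtain ⟨n, hn⟩ := DO_adjoin _ (by
    rintro _ ⟨x, rfl⟩
    exact DO_der (D x)) T hT
  rw [h]
  refine DO_mult T ?_ ?_ n hn a
  · rw [← h, s_one, hc, map_one]
  · intro a c
    rw [← h, s_mul]

theorem s_id (hc : B.c = 1) {V : Type w} [AddCommGroup V] [Module K V] [Small.{u} V]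
    (r : LRep K L V) (v : V) : B.s r v = v := by
  let bs := Module.Basis.ofVectorSpace K V
  let g : V →ₗ[K] MvPolynomial (Module.Basis.ofVectorSpaceIndex K V) K :=
    bs.constr K MvPolynomial.X
  have hgb : ∀ i, g (bs i) = MvPolynomial.X i := fun i => by simp [g]
  have hginj : Function.Injective g := by
    have hli : LinearIndependent K (fun i : Module.Basis.ofVectorSpaceIndex K V =>
        (MvPolynomial.X i : MvPolynomial (Module.Basis.ofVectorSpaceIndex K V) K)) :=
      MvPolynomial.linearIndependent_X _ _
    have hgl : g = Finsupp.linearCombination K MvPolynomial.X ∘ₗ bs.repr.toLinearMap := by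
      apply bs.ext
      intro i
      simp [hgb]
    rw [hgl]
    intro x y hxy
    exact bs.repr.injective (hli hxy)
  let D0 : L → Derivation K (MvPolynomial (Module.Basis.ofVectorSpaceIndex K V) K)
      (MvPolynomial (Module.Basis.ofVectorSpaceIndex K V) K) :=
    fun x => MvPolynomial.mkDerivation K (fun i => g (r.ρ x (bs i)))
  have hX : ∀ x i, D0 x (MvPolynomial.X i) = g (r.ρ x (bs i)) := fun x i => by simp [D0]
  have hg : ∀ x v, D0 x (g v) = g (r.ρ x v) := by
    intro x
    have : (D0 x : _ →ₗ[K] _) ∘ₗ g = g ∘ₗ r.ρ x := by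
      apply bs.ext
      intro i
      simp only [LinearMap.comp_apply, hgb]
      exact hX x i
    exact fun v => LinearMap.congr_fun this v
  let D : L →ₗ⁅K⁆ Derivation K (MvPolynomial (Module.Basis.ofVectorSpaceIndex K V) K)
      (MvPolynomial (Module.Basis.ofVectorSpaceIndex K V) K) :=
    { toFun := D0
      map_add' := fun x y => by
        apply MvPolynomial.derivation_ext
        intro i
        simp [hX]
      map_smul' := fun k y => by
        apply MvPolynomial.derivation_ext
        intro i
        simp [hX]
      map_lie' := by
        intro x y
        apply MvPolynomial.derivation_ext
        intro i
        change D0 ⁅x, y⁆ (MvPolynomial.X i) = ⁅D0 x, D0 y⁆ (MvPolynomial.X i)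
        rw [Derivation.commutator_apply, hX, hX, hX, hg, hg, r.h, map_sub] }
  have := B.s_nat r (derRep D) g (fun x n => (hg x n).symm) v
  rw [B.s_domain hc] at this
  exact (hginj this).symm

end EI

/-- The adjoint representation pulled back along a homomorphism. -/
def adRep {S : Type w₁} [LieRing S] [LieAlgebra K S] {M : Type w} [LieRing M] [LieAlgebra K M]
    (f : S →ₗ⁅K⁆ M) : LRep K S M where
  ρ := { toFun := fun x => { toFun := fun m => ⁅f x, m⁆
                             map_add' := fun _ _ => by simp
                             map_smul' := fun _ _ => by simp }
         map_add' := fun _ _ => by ext; simp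
         map_smul' := fun _ _ => by ext; simp }
  h x y v := by simp

/-- One-parameter action given by a derivation. -/
def oneAct {P : Type w} [LieRing P] [LieAlgebra K P] (D : LieDerivation K P P) :
    Ab K →ₗ⁅K⁆ LieDerivation K P P where
  toFun k := (toAb (K := K)).symm k • D
  map_add' a c := by rw [map_add, add_smul]
  map_smul' a c := by
    rw [map_smul, smul_eq_mul, mul_smul]
    rfl
  map_lie' := by
    intro a c
    rw [ab_lie, map_zero, zero_smul]
    ext p
    rw [LieDerivation.commutator_apply]
    simp only [LieDerivation.smul_apply, map_smul, LieDerivation.zero_apply]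
    rw [smul_comm, sub_self]

theorem oneAct_toAb {P : Type w} [LieRing P] [LieAlgebra K P] (D : LieDerivation K P P) (k : K)
    (p : P) : oneAct D (toAb (K := K) k) p = k • D p := rfl

section tens
variable {A : Type w} [CommRing A] [Algebra K A] {M : Type w₁} [LieRing M] [LieAlgebra K M]

/-- Extension of a derivation of scalars. -/
noncomputable def tensDer (d : Derivation K A A) : LieDerivation K (A ⊗[K] M) (A ⊗[K] M) where
  toLinearMap := LinearMap.rTensor M (d : A →ₗ[K] A)
  leibniz' := by
    intro a c
    induction a using TensorProduct.induction_on with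
    | zero => simp
    | add x y hx hy =>
      rw [add_lie, map_add, hx, hy, map_add, lie_add, add_lie]
      abel
    | tmul p x =>
      induction c using TensorProduct.induction_on with
      | zero => simp
      | add x y hx hy =>
        rw [lie_add, map_add, hx, hy, map_add, lie_add, add_lie]
        abel
      | tmul q y =>
        simp only [LieAlgebra.ExtendScalars.bracket_tmul, LinearMap.rTensor_tmul]
        rw [← lie_skew y x, TensorProduct.tmul_neg, sub_neg_eq_add, ← TensorProduct.add_tmul]
        congr 1
        simp

theorem tensDer_tmul (d : Derivation K A A) (a : A) (m : M) :
    tensDer d (a ⊗ₜ[K] m) = d a ⊗ₜ[K] m := rfl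

/-- Inclusion of constants. -/
noncomputable def tensIn (A : Type w) [CommRing A] [Algebra K A] : M →ₗ⁅K⁆ (A ⊗[K] M) where
  toFun x := 1 ⊗ₜ x
  map_add' x y := by simp [TensorProduct.tmul_add]
  map_smul' x y := by simp
  map_lie' := by
    intro x y
    simp

/-- Evaluation, as a linear map. -/
noncomputable def tensEv0 (ev : A →ₐ[K] K) : A ⊗[K] M →ₗ[K] M :=
  (TensorProduct.lid K M).toLinearMap ∘ₗ LinearMap.rTensor M ev.toLinearMap

theorem tensEv0_tmul (ev : A →ₐ[K] K) (a : A) (m : M) :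
    tensEv0 ev (a ⊗ₜ[K] m) = ev a • m := by
  simp [tensEv0]

/-- Evaluation, as a Lie homomorphism. -/
noncomputable def tensEv (ev : A →ₐ[K] K) : A ⊗[K] M →ₗ⁅K⁆ M where
  toLinearMap := tensEv0 ev
  map_lie' := by
    intro a c
    simp only [AddHom.toFun_eq_coe, LinearMap.coe_toAddHom]
    induction a using TensorProduct.induction_on with
    | zero => simp
    | add x y hx hy => rw [add_lie, map_add, hx, hy, map_add, add_lie]
    | tmul p x =>
      induction c using TensorProduct.induction_on with
      | zero => simp
      | add x y hx hy => rw [lie_add, map_add, hx, hy, map_add, lie_add]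
      | tmul q y =>
        simp only [LieAlgebra.ExtendScalars.bracket_tmul, tensEv0_tmul, map_mul, smul_lie,
          lie_smul, mul_smul]
        rw [smul_comm]

theorem tensEv_tmul (ev : A →ₐ[K] K) (a : A) (m : M) :
    tensEv ev (a ⊗ₜ[K] m) = ev a • m := tensEv0_tmul ev a m
end tens

namespace EI
variable (B : EI K L)
variable [Small.{u} K]

theorem b_ad (hc : B.c = 1) {M : Type w} [LieRing M] [LieAlgebra K M] [Small.{u} M]
    (f : L →ₗ⁅K⁆ M) (m v : M) : ⁅B.b f m, v⁆ = ⁅m, v⁆ := by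
  let ψ := (adRep (LieHom.id : M →ₗ⁅K⁆ M)).der
  let f' : L →ₗ⁅K⁆ (Ab M ⋊⁅ψ⁆ M) := (SemiDirectSum.inr ψ).comp f
  let g : M →ₗ[K] (Ab M ⋊⁅ψ⁆ M) :=
    (SemiDirectSum.inl ψ : Ab M →ₗ[K] (Ab M ⋊⁅ψ⁆ M)) ∘ₗ (toAb (K := K)).toLinearMap
  have hg : ∀ v, g v = SemiDirectSum.inl ψ (toAb (K := K) v) := fun v => rfl
  have hψ : ∀ (m v : M), g ⁅m, v⁆ = ⁅SemiDirectSum.inr ψ m, g v⁆ := by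
    intro m v
    rw [hg, hg]
    have h1 : ψ m (toAb (K := K) v) = toAb (K := K) ⁅m, v⁆ := der_toAb _ m v
    simp [h1]
  have h1 : ∀ v : M, B.b f' (g v) = g v := by
    intro v
    have := B.b_s (adRep f) f' g
      (fun a c => by rw [hg, hg, ← LieHom.map_lie, ab_lie, map_zero])
      (fun x n => hψ (f x) n) v
    rw [B.s_id hc] at this
    exact this
  have h2 := B.b_nat (f₁ := f) (f₂ := f') (SemiDirectSum.inr ψ) (fun x => rfl) m
  have h3 := h1 ⁅m, v⁆
  rw [hψ, LieHom.map_lie, h1, h2, ← hψ, ← hψ] at h3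
  exact (toAb (K := K)).injective (SemiDirectSum.inl_injective ψ h3)

theorem b_der {P : Type w} [LieRing P] [LieAlgebra K P] [Small.{u} P]
    (f : L →ₗ⁅K⁆ P) (D : LieDerivation K P P) (hD : ∀ x, D (f x) = 0) (x : P) (hx : D x = x) :
    B.b f x = B.c • x := by
  let ψ := oneAct D
  let f' : L →ₗ⁅K⁆ (P ⋊⁅ψ⁆ Ab K) := (SemiDirectSum.inl ψ).comp f
  let g : K →ₗ[K] (P ⋊⁅ψ⁆ Ab K) :=
    (SemiDirectSum.inr ψ : Ab K →ₗ[K] (P ⋊⁅ψ⁆ Ab K)) ∘ₗ (toAb (K := K)).toLinearMap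
  have hg : ∀ k, g k = SemiDirectSum.inr ψ (toAb (K := K) k) := fun v => rfl
  have hψ : ∀ (k : K) (p : P), ⁅g k, SemiDirectSum.inl ψ p⁆ = SemiDirectSum.inl ψ (k • D p) := by
    intro k p
    rw [hg]
    have h1 : ψ (toAb (K := K) k) p = k • D p := oneAct_toAb D k p
    simp [h1]
  have h1 : B.b f' (g 1) = B.c • g 1 := by
    have := B.b_s (derRep (0 : L →ₗ⁅K⁆ Derivation K K K)) f' g
      (fun a c => by
        rw [hg, hg, ← LieHom.map_lie, ab_lie, map_zero])
      (fun x n => by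
        change g 0 = ⁅SemiDirectSum.inl ψ (f x), g n⁆
        rw [← lie_skew, hψ, hD, smul_zero, map_zero, map_zero, neg_zero]) 1
    rw [this, ← map_smul, smul_eq_mul, mul_one]
    rfl
  have h2 := B.b_nat (f₁ := f) (f₂ := f') (SemiDirectSum.inl ψ) (fun x => rfl) x
  have h3 : ⁅g 1, SemiDirectSum.inl ψ x⁆ = SemiDirectSum.inl ψ x := by
    rw [hψ, hx, one_smul]
  have h4 := congrArg (B.b f') h3
  rw [LieHom.map_lie, h1, h2] at h4
  apply SemiDirectSum.inl_injective ψ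
  rw [← h4]
  rcases B.c_cases with hc | hc
  · rw [hc]
    simp only [zero_smul, zero_lie, map_zero]
  · rw [hc, one_smul, one_smul, ← h2, ← lie_skew, B.b_ad hc, lie_skew, h3]

theorem b_main {M : Type w} [LieRing M] [LieAlgebra K M] [Small.{u} M]
    (f : L →ₗ⁅K⁆ M) (m : M) : B.b f m = B.c • m := by
  let d : Derivation K (MvPolynomial PUnit.{1} K) (MvPolynomial PUnit.{1} K) :=
    MvPolynomial.mkDerivation K MvPolynomial.X
  let ev : MvPolynomial PUnit.{1} K →ₐ[K] K := MvPolynomial.aeval (fun _ => 1)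
  have e1 := B.b_der ((tensIn (MvPolynomial PUnit.{1} K)).comp f) (tensDer d) (fun x => by
      change tensDer d (1 ⊗ₜ[K] f x) = 0
      rw [tensDer_tmul, Derivation.map_one_eq_zero, TensorProduct.zero_tmul])
    (MvPolynomial.X PUnit.unit ⊗ₜ m) (by
      rw [tensDer_tmul]
      simp [d])
  have e2 := B.b_nat (f₁ := (tensIn (MvPolynomial PUnit.{1} K)).comp f) (f₂ := f) (tensEv ev)
    (fun x => by
      change tensEv ev (1 ⊗ₜ[K] f x) = f x
      rw [tensEv_tmul, map_one, one_smul]) (MvPolynomial.X PUnit.unit ⊗ₜ m)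
  rw [e1, map_smul, tensEv_tmul] at e2
  simpa [ev] using e2

end EI
end ExtInnerProof

theorem extended_inner_endomorphism_of_LieAlgebra
    (K : Type v) [Field K] (L : Type u) [LieRing L] [LieAlgebra K L]
    (β : ∀ (M : Type u) [LieRing M] [LieAlgebra K M], (L →ₗ⁅K⁆ M) → (M →ₗ⁅K⁆ M))
    (hnat : ∀ (M₁ M₂ : Type u) [LieRing M₁] [LieAlgebra K M₁] [LieRing M₂] [LieAlgebra K M₂]
      (f₁ : L →ₗ⁅K⁆ M₁) (f₂ : L →ₗ⁅K⁆ M₂) (h : M₁ →ₗ⁅K⁆ M₂),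
      h.comp f₁ = f₂ → (β M₂ f₂).comp h = h.comp (β M₁ f₁)) :
    (∀ (M : Type u) [LieRing M] [LieAlgebra K M] (f : L →ₗ⁅K⁆ M) (m : M),
        β M f m = 0) ∨
    (∀ (M : Type u) [LieRing M] [LieAlgebra K M] (f : L →ₗ⁅K⁆ M) (m : M),
        β M f m = m) := by
  by_cases hK : Small.{u} K
  · let B : ExtInnerProof.EI K L := ⟨β, hnat⟩
    rcases B.c_cases with hc | hc
    · left
      intro M _ _ f m
      have := B.b_main f m
      rw [B.b_eq, hc, zero_smul] at this
      exact this
    · right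
      intro M _ _ f m
      have := B.b_main f m
      rw [B.b_eq, hc, one_smul] at this
      exact this
  · left
    intro M _ _ f m
    by_contra hne
    exact hK (small_of_injective (smul_left_injective K hne))
end

section
/- Let G be a group and A a G-set (a type with a multiplicative left action of G), both in universe u. Suppose given, for every G-set B in universe u and every G-equivariant map f : B → A, a G-equivariant map E f : B → B, such that for all G-equivariant maps f₁ : B₁ → A, f₂ : B₂ → A and every G-equivariant h : B₁ → B₂ with f₂ ∘ h = f₁, one has (E f₂) ∘ h = h ∘ (E f₁). Then there exists a function g : A → G satisfying g (h • a) = h * g a * h⁻¹ for all h ∈ G and a ∈ A, such that for every G-equivariant f : B → A and every b ∈ B, E f b = g (f b) • b. In particular, every E f is bijective, so every such family of endomorphisms is in fact a family of automorphisms. -/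
universe u

theorem extended_coinner_endomorphism_of_GSet
    (G : Type u) [Group G] (A : Type u) [MulAction G A]
    (E : ∀ (B : Type u) [MulAction G B], (B →[G] A) → (B →[G] B))
    (hnat : ∀ (B₁ B₂ : Type u) [MulAction G B₁] [MulAction G B₂]
      (f₁ : B₁ →[G] A) (f₂ : B₂ →[G] A) (h : B₁ →[G] B₂),
      (∀ b : B₁, f₂ (h b) = f₁ b) →
      ∀ b : B₁, E B₂ f₂ (h b) = h (E B₁ f₁ b)) :
    ∃ g : A → G,
      (∀ (h : G) (a : A), g (h • a) = h * g a * h⁻¹) ∧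
      (∀ (B : Type u) [MulAction G B] (f : B →[G] A) (b : B),
        E B f b = g (f b) • b) ∧
      (∀ (B : Type u) [MulAction G B] (f : B →[G] A),
        Function.Bijective (E B f)) := by
  let o : ∀ (B : Type u) [MulAction G B], B → (G →[G] B) := fun B _ b =>
    { toFun := fun x => x • b
      map_smul' := fun m x => by simp [mul_smul] }
  have ho : ∀ (B : Type u) [MulAction G B] (b : B) (x : G), o B b x = x • b :=
    fun _ _ _ _ => rfl
  have hconj : ∀ (h : G) (a : A),
      E G (o A (h • a)) 1 = h * E G (o A a) 1 * h⁻¹ := by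
    intro h a
    have h1 := hnat G G (o A (h • a)) (o A a) (o G h)
      (fun x => by simp [ho, mul_smul]) 1
    have h2 := map_smul (E G (o A a)) h 1
    simp only [ho, smul_eq_mul, mul_one, one_mul] at h1 h2
    rw [← h2, h1, mul_inv_cancel_right]
  have hform : ∀ (B : Type u) [MulAction G B] (f : B →[G] A) (b : B),
      E B f b = E G (o A (f b)) 1 • b := by
    intro B _ f b
    have h1 := hnat G B (o A (f b)) f (o B b) (fun x => by simp [ho]) 1
    simpa only [ho, one_smul] using h1
  refine ⟨fun a => E G (o A a) 1, hconj, hform, ?_⟩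
  intro B _ f
  generalize hg : (fun a => E G (o A a) 1) = g
  have hga : ∀ a, E G (o A a) 1 = g a := fun a => congrFun hg a
  simp only [hga] at hconj hform
  rw [Function.bijective_iff_has_inverse]
  refine ⟨fun b => (g (f b))⁻¹ • b, fun b => ?_, fun b => ?_⟩
  · simp [hform, hconj]
  · have h1 : g ((g (f b))⁻¹ • f b) = g (f b) := by rw [hconj]; group
    simp only [hform, map_smul, h1, smul_inv_smul]
end

section
/- Let G be a group acting on a set A (multiplicative left action), and let S ⊆ A be a set of orbit representatives, i.e., a subset containing exactly one element of each G-orbit of A. Let T be the set of functions g : A → G satisfying g (h • a) = h * g a * h⁻¹ for all h ∈ G and a ∈ A. Then T is a subgroup of the group of all functions A → G under pointwise multiplication, and the restriction map sending g ∈ T to the family (g s)_{s ∈ S} is a group isomorphism from T onto the direct product, over s ∈ S, of the centralizers in G of the stabilizer subgroups of the points s; in particular, for every g ∈ T and s ∈ S, g s centralizes the stabilizer of s in G. -/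
universe u

theorem coinner_group_of_GSet
    (G : Type u) [Group G] (A : Type u) [MulAction G A]
    (S : Set A)
    (hS : ∀ a : A, ∃! s : A, s ∈ S ∧ s ∈ MulAction.orbit G a) :
    ∃ T : Subgroup (A → G),
      (∀ g : A → G,
        g ∈ T ↔ ∀ (h : G) (a : A), g (h • a) = h * g a * h⁻¹) ∧
      (∀ g ∈ T, ∀ s ∈ S,
        g s ∈ Subgroup.centralizer ((MulAction.stabilizer G s : Subgroup G) : Set G)) ∧
      ∃ e : T ≃* (∀ s : S, Subgroup.centralizer
          ((MulAction.stabilizer G (s : A) : Subgroup G) : Set G)),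
        ∀ (g : T) (s : S), ((e g s : G)) = (g : A → G) (s : A) := by
  have hrep : ∀ a : A, ∃ (s : S) (k : G), k • (s : A) = a := by
    intro a
    obtain ⟨s, ⟨hs, ⟨k, hk⟩⟩, _⟩ := hS a
    refine ⟨⟨s, hs⟩, k⁻¹, ?_⟩
    have hk' : k • a = s := hk
    simp [← hk']
  have huniq : ∀ (s t : S) (x y : G), x • (s : A) = y • (t : A) → s = t := by
    intro s t x y h
    apply Subtype.ext
    refine (hS (x • (s : A))).unique ⟨s.2, ⟨x⁻¹, ?_⟩⟩ ⟨t.2, ⟨y⁻¹, ?_⟩⟩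
    · simp
    · simp [h]
  choose r k hk using hrep
  let T : Subgroup (A → G) :=
    { carrier := {g | ∀ (h : G) (a : A), g (h • a) = h * g a * h⁻¹}
      mul_mem' := by
        intro f g hf hg h a
        simp only [Pi.mul_apply, hf h a, hg h a]
        group
      one_mem' := by
        intro h a
        simp
      inv_mem' := by
        intro f hf h a
        simp only [Pi.inv_apply, hf h a]
        group }
  have hT : ∀ g ∈ T, ∀ s : A,
      g s ∈ Subgroup.centralizer ((MulAction.stabilizer G s : Subgroup G) : Set G) := by
    intro g hg s
    rw [Subgroup.mem_centralizer_iff]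
    intro h hh
    have h1 : h • s = s := hh
    have h2 := hg h s
    rw [h1] at h2
    exact (eq_mul_inv_iff_mul_eq.mp h2).symm
  refine ⟨T, fun g => Iff.rfl, fun g hg s _ => hT g hg s, ?_⟩
  let φ : T →* (∀ s : S, Subgroup.centralizer
      ((MulAction.stabilizer G (s : A) : Subgroup G) : Set G)) :=
    { toFun := fun g s => ⟨(g : A → G) s, hT g g.2 s⟩
      map_one' := rfl
      map_mul' := fun _ _ => rfl }
  have hφ : Function.Bijective φ := by
    constructor
    · intro f g hfg
      apply Subtype.ext
      funext a
      have h1 : (f : A → G) (r a) = (g : A → G) (r a) :=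
        congrArg Subtype.val (congrFun hfg (r a))
      rw [← hk a, f.2 (k a) (r a), g.2 (k a) (r a), h1]
    · intro c
      let g : A → G := fun a => k a * (c (r a) : G) * (k a)⁻¹
      have key : ∀ (x : G) (s : S), g (x • (s : A)) = x * (c s : G) * x⁻¹ := by
        intro x s
        have h1 := hk (x • (s : A))
        have h2 : r (x • (s : A)) = s := huniq _ _ _ _ h1
        change k (x • (s : A)) * (c (r (x • (s : A))) : G) * (k (x • (s : A)))⁻¹ = _
        rw [h2] at h1 ⊢
        generalize k (x • (s : A)) = y at h1 ⊢
        have h3 : x⁻¹ * y ∈ MulAction.stabilizer G (s : A) := by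
          rw [MulAction.mem_stabilizer_iff, mul_smul, h1, inv_smul_smul]
        have h4 := Subgroup.mem_centralizer_iff.mp (c s).2 _ h3
        rw [mul_inv_eq_iff_eq_mul]
        calc y * (c s : G) = x * (x⁻¹ * y * (c s : G)) := by group
          _ = x * ((c s : G) * (x⁻¹ * y)) := by rw [h4]
          _ = _ := by group
      have hg : g ∈ T := by
        intro h a
        rw [← hk a, ← mul_smul, key, key]
        group
      refine ⟨⟨g, hg⟩, ?_⟩
      funext s
      apply Subtype.ext
      change g (s : A) = (c s : G)
      simpa using key 1 s
  exact ⟨MulEquiv.ofBijective φ hφ, fun _ _ => rfl⟩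
end

section
/- Let A be an additive abelian group in universe u. Suppose given, for every additive abelian group B in universe u and every additive group homomorphism f : A →+ B, an additive group homomorphism β f : B →+ B, such that for all homomorphisms f₁ : A →+ B₁, f₂ : A →+ B₂ and h : B₁ →+ B₂ with h.comp f₁ = f₂, one has (β f₂).comp h = h.comp (β f₁). Then there exists an integer n ∈ ℤ such that for every f : A →+ B and every b ∈ B, (β f) b = n • b. -/
universe u

theorem extended_inner_endomorphism_of_AddCommGroup
    (A : Type u) [AddCommGroup A]
    (β : ∀ (B : Type u) [AddCommGroup B], (A →+ B) → (B →+ B))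
    (hnat : ∀ (B₁ B₂ : Type u) [AddCommGroup B₁] [AddCommGroup B₂]
      (f₁ : A →+ B₁) (f₂ : A →+ B₂) (h : B₁ →+ B₂),
      h.comp f₁ = f₂ → (β B₂ f₂).comp h = h.comp (β B₁ f₁)) :
    ∃ n : ℤ, ∀ (B : Type u) [AddCommGroup B] (f : A →+ B) (b : B),
      β B f b = n • b := by
  -- the generic element: `(0, 1)` in `A × ℤ`
  obtain ⟨x, hx⟩ : ∃ x, x = β (A × ULift.{u} ℤ) (AddMonoidHom.inl A (ULift.{u} ℤ)) (0, ⟨1⟩) :=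
    ⟨_, rfl⟩
  refine ⟨x.2.down, ?_⟩
  intro B _ f
  have key : ∀ b : B, β B f b = f x.1 + x.2.down • b := by
    intro b
    let g : ULift.{u} ℤ →+ B :=
      { toFun := fun k => k.down • b
        map_zero' := by simp
        map_add' := fun k l => by simp [add_smul] }
    have h := hnat (A × ULift.{u} ℤ) B (AddMonoidHom.inl A (ULift.{u} ℤ)) f (f.coprod g)
      (by ext a; simp)
    have h2 := DFunLike.congr_fun h ((0, ⟨1⟩) : A × ULift.{u} ℤ)
    simp only [AddMonoidHom.comp_apply, ← hx, AddMonoidHom.coprod_apply] at h2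
    simpa [g] using h2
  intro b
  have h0 := key 0
  simp only [map_zero, smul_zero, add_zero] at h0
  rw [key b, ← h0, zero_add]
end

section
/- Suppose given, for every commutative ring S in universe u, a ring homomorphism β S : S →+* S, such that for every ring homomorphism h : S₁ →+* S₂ between commutative rings in universe u, one has h.comp (β S₁) = (β S₂).comp h. Then β S is the identity ring homomorphism of S for every commutative ring S. -/
universe u

theorem endomorphism_of_identity_functor_CommRing
    (β : ∀ (S : Type u) [CommRing S], S →+* S)
    (hnat : ∀ (S₁ S₂ : Type u) [CommRing S₁] [CommRing S₂] (h : S₁ →+* S₂),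
      h.comp (β S₁) = (β S₂).comp h) :
    ∀ (S : Type u) [CommRing S], β S = RingHom.id S := by
  intro S _
  have key : ∀ (T : Type u) [CommRing T] (f : ULift.{u} ℤ →+* T) (t : T),
      Polynomial.eval₂ f t (β (Polynomial (ULift.{u} ℤ)) Polynomial.X) = β T t := by
    intro T _ f t
    have := RingHom.congr_fun (hnat _ _ (Polynomial.eval₂RingHom f t)) Polynomial.X
    simpa using this
  haveI : IsDomain (ULift.{u} ℤ) := (ULift.ringEquiv : ULift.{u} ℤ ≃+* ℤ).toMulEquiv.isDomain
  have hp : β (Polynomial (ULift.{u} ℤ)) Polynomial.X = Polynomial.X := by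
    apply Polynomial.funext
    intro n
    have h1 := key (ULift.{u} ℤ) (RingHom.id _) n
    have h2 : n = ((n.down : ℤ) : ULift.{u} ℤ) := by
      apply ULift.ext
      simp
    have h3 : β (ULift.{u} ℤ) n = n := by
      rw [h2, map_intCast]
    rw [Polynomial.eval_X, Polynomial.eval, h1, h3]
  ext s
  have h := key S ((Int.castRingHom S).comp (ULift.ringEquiv : ULift.{u} ℤ ≃+* ℤ).toRingHom) s
  rw [hp, Polynomial.eval₂_X] at h
  exact h.symm
end

section
/- Let K be a field and L a Lie algebra over K, and let U = UniversalEnvelopingAlgebra K L be its universal enveloping algebra. If a, b ∈ U satisfy a * b = 1, then there exists a nonzero scalar c ∈ K with a = algebraMap K U c and b = algebraMap K U c⁻¹. In other words, U has no one-sided invertible elements other than the images of the nonzero elements of K. -/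
universe u v

namespace PBW

open MvPolynomial

/-- The commutative monomial attached to a word. -/
noncomputable def mon {I : Type u} [LinearOrder I] (K : Type v) [Field K] (l : List I) :
    MvPolynomial I K :=
  monomial (Multiset.toFinsupp (l : Multiset I)) 1

variable {I : Type u} [LinearOrder I] {K : Type v} [Field K] {L : Type u} [LieRing L]
  [LieAlgebra K L]

lemma mon_nil : mon K ([] : List I) = 1 := by
  simp [mon]

lemma mon_cons (i : I) (l : List I) : mon K (i :: l) = X i * mon K l := by
  simp only [mon, X, monomial_mul, one_mul]
  rw [← Multiset.cons_coe, ← Multiset.singleton_add, map_add, Multiset.toFinsupp_singleton]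

lemma mon_perm {l l' : List I} (h : l.Perm l') : mon K l = mon K l' := by
  simp only [mon]
  rw [Multiset.coe_eq_coe.2 h]

/-- The sorted word of an exponent vector. -/
noncomputable def lst (M : I →₀ ℕ) : List I := (Finsupp.toMultiset M).sort (· ≤ ·)

lemma lst_sorted (M : I →₀ ℕ) : (lst M).Pairwise (· ≤ ·) := Multiset.pairwise_sort _ _

lemma mon_lst (M : I →₀ ℕ) : mon K (lst M) = monomial M 1 := by
  simp [mon, lst]

lemma lst_eq {l : List I} (h : l.Pairwise (· ≤ ·)) :
    lst (Multiset.toFinsupp (l : Multiset I)) = l := by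
  simp only [lst, Multiset.toFinsupp_toMultiset, Multiset.coe_sort]
  exact List.mergeSort_eq_self _ (by simpa using h)

/-- Polynomials of degree at most n. -/
noncomputable def D (I : Type u) [LinearOrder I] (K : Type v) [Field K] (n : ℕ) :
    Submodule K (MvPolynomial I K) :=
  Submodule.span K {p | ∃ l : List I, l.Pairwise (· ≤ ·) ∧ l.length ≤ n ∧ p = mon K l}

lemma mon_mem {l : List I} {n : ℕ} (h : l.length ≤ n) : mon K l ∈ D I K n := by
  refine Submodule.subset_span ⟨l.insertionSort (· ≤ ·), List.pairwise_insertionSort _ _, ?_, ?_⟩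
  · simpa using h
  · exact mon_perm (List.perm_insertionSort _ _).symm

lemma D_mono {m n : ℕ} (h : m ≤ n) : D I K m ≤ D I K n := by
  refine Submodule.span_mono ?_
  rintro p ⟨l, h1, h2, h3⟩
  exact ⟨l, h1, h2.trans h, h3⟩

lemma D_ind {n : ℕ} (P : Submodule K (MvPolynomial I K))
    (h : ∀ l : List I, l.Pairwise (· ≤ ·) → l.length ≤ n → mon K l ∈ P) : D I K n ≤ P := by
  refine Submodule.span_le.2 ?_
  rintro p ⟨l, h1, h2, rfl⟩
  exact h l h1 h2

lemma lst_length (M : I →₀ ℕ) : (lst M).length = M.sum fun _ e => e := by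
  simp [lst, Finsupp.card_toMultiset]
  rfl

lemma mem_D_iff {n : ℕ} {p : MvPolynomial I K} : p ∈ D I K n ↔ p.totalDegree ≤ n := by
  constructor
  · intro h
    have : D I K n ≤ restrictTotalDegree I K n := by
      refine D_ind _ fun l _ hl => ?_
      rw [mem_restrictTotalDegree, mon, totalDegree_monomial _ one_ne_zero]
      refine le_trans (le_of_eq ?_) hl
      have := lst_length (Multiset.toFinsupp (l : Multiset I))
      rw [← this]
      simp [lst]
    exact (mem_restrictTotalDegree _ _ _).1 (this h)
  · intro h
    rw [p.as_sum]
    refine Submodule.sum_mem _ fun M hM => ?_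
    have : monomial M (coeff M p) = coeff M p • mon K (lst M) := by
      rw [mon_lst, smul_monomial, smul_eq_mul, mul_one]
    rw [this]
    refine Submodule.smul_mem _ _ (mon_mem ?_)
    rw [lst_length]
    exact (le_totalDegree hM).trans h

lemma X_mul_mem {n : ℕ} (i : I) {p : MvPolynomial I K} (h : p ∈ D I K n) :
    X i * p ∈ D I K (n + 1) := by
  have : D I K n ≤ (D I K (n + 1)).comap (LinearMap.mulLeft K (X i)) := by
    refine D_ind _ fun l _ hl => ?_
    simp only [Submodule.mem_comap, LinearMap.mulLeft_apply, ← mon_cons]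
    exact mon_mem (by simpa using hl)
  exact this h

/-- linear map on polynomials with prescribed values on sorted words -/
noncomputable def ofWords {V : Type*} [AddCommGroup V] [Module K V] (g : List I → V) :
    MvPolynomial I K →ₗ[K] V :=
  (basisMonomials I K).constr K (fun M => g (lst M))

lemma ofWords_mon {V : Type*} [AddCommGroup V] [Module K V] (g : List I → V) {l : List I}
    (h : l.Pairwise (· ≤ ·)) : ofWords (K := K) g (mon K l) = g l := by
  have := (basisMonomials I K).constr_basis K (fun M => g (lst M))
    (Multiset.toFinsupp (l : Multiset I))
  rw [lst_eq h] at this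
  simpa [ofWords, mon] using this

/-- one recursion step -/
noncomputable def step (B : Module.Basis I K L)
    (Φ : L →ₗ[K] MvPolynomial I K →ₗ[K] MvPolynomial I K) (i : I) : List I → MvPolynomial I K
  | [] => X i
  | j :: t => if i ≤ j then X i * mon K (j :: t) else
      X i * mon K (j :: t) + Φ (B j) (Φ (B i) (mon K t) - X i * mon K t) + Φ ⁅B i, B j⁆ (mon K t)

/-- approximations to the action -/
noncomputable def Fn (B : Module.Basis I K L) :
    ℕ → L →ₗ[K] MvPolynomial I K →ₗ[K] MvPolynomial I K
  | 0 => B.constr K (fun i => LinearMap.mulLeft K (X i))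
  | n + 1 => B.constr K (fun i => ofWords (step B (Fn B n) i))

variable (B : Module.Basis I K L)

lemma Fn_zero (i : I) (p : MvPolynomial I K) : Fn B 0 (B i) p = X i * p := by
  simp [Fn]

lemma Fn_succ (n : ℕ) (i : I) {l : List I} (h : l.Pairwise (· ≤ ·)) :
    Fn B (n + 1) (B i) (mon K l) = step B (Fn B n) i l := by
  simp [Fn, ofWords_mon _ h]

/-- The leading-term property. -/
def Lead (Φ : L →ₗ[K] MvPolynomial I K →ₗ[K] MvPolynomial I K) : Prop :=
  ∀ (i : I) (n : ℕ) (p : MvPolynomial I K), p ∈ D I K n → Φ (B i) p - X i * p ∈ D I K n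

lemma lead_of_words {Φ : L →ₗ[K] MvPolynomial I K →ₗ[K] MvPolynomial I K}
    (h : ∀ (i : I) (l : List I), l.Pairwise (· ≤ ·) →
      Φ (B i) (mon K l) - X i * mon K l ∈ D I K l.length) : Lead B Φ := by
  intro i n p hp
  have : D I K n ≤ (D I K n).comap (Φ (B i) - LinearMap.mulLeft K (X i)) := by
    refine D_ind _ fun l hl hn => ?_
    exact D_mono hn (h i l hl)
  exact this hp

lemma L_ind (P : Submodule K L) (h : ∀ i, B i ∈ P) (x : L) : x ∈ P := by
  have : Submodule.span K (Set.range B) ≤ P := Submodule.span_le.2 (by rintro _ ⟨i, rfl⟩; exact h i)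
  exact this (B.mem_span x)

lemma Lead.mem_succ {Φ : L →ₗ[K] MvPolynomial I K →ₗ[K] MvPolynomial I K} (h : Lead B Φ)
    (x : L) {n : ℕ} {p : MvPolynomial I K} (hp : p ∈ D I K n) : Φ x p ∈ D I K (n + 1) := by
  refine L_ind B ((D I K (n + 1)).comap (Φ.flip p)) (fun i => ?_) x
  have h1 := D_mono (Nat.le_succ n) (h i n p hp)
  have h2 := Submodule.add_mem _ h1 (X_mul_mem i hp)
  simpa using h2

lemma Fn_lead (n : ℕ) : Lead B (Fn B n) := by
  induction n with
  | zero => intro i n p hp; simp [Fn_zero]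
  | succ n ih =>
    refine lead_of_words B fun i l hl => ?_
    rw [Fn_succ B n i hl]
    cases l with
    | nil => simp [step, mon_nil]
    | cons j t =>
      simp only [step]
      split_ifs with hij
      · simp
      · have ht : mon K t ∈ D I K t.length := mon_mem le_rfl
        have h1 := ih.mem_succ B (B j) (ih i _ _ ht)
        have h2 := ih.mem_succ B ⁅B i, B j⁆ ht
        have h3 := Submodule.add_mem _ h1 h2
        rw [List.length_cons]
        convert h3 using 1
        abel

/-- agreement on basis and words gives agreement -/
lemma agree {Φ Ψ : L →ₗ[K] MvPolynomial I K →ₗ[K] MvPolynomial I K} {n : ℕ}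
    (h : ∀ (i : I) (l : List I), l.Pairwise (· ≤ ·) → l.length ≤ n →
      Φ (B i) (mon K l) = Ψ (B i) (mon K l)) (x : L) {p : MvPolynomial I K}
    (hp : p ∈ D I K n) : Φ x p = Ψ x p := by
  refine L_ind B (LinearMap.eqLocus (Φ.flip p) (Ψ.flip p)) (fun i => ?_) x
  have : D I K n ≤ LinearMap.eqLocus (Φ (B i)) (Ψ (B i)) :=
    D_ind _ fun l hl hn => h i l hl hn
  exact this hp

lemma Fn_stable (n : ℕ) (x : L) {p : MvPolynomial I K} (hp : p ∈ D I K n) :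
    Fn B (n + 1) x p = Fn B n x p := by
  induction n generalizing x p with
  | zero =>
    refine agree B (fun i l hl hn => ?_) x hp
    obtain rfl : l = [] := List.eq_nil_of_length_eq_zero (by omega)
    rw [Fn_succ B _ _ hl, Fn_zero, mon_nil, mul_one]
    rfl
  | succ n ih =>
    refine agree B (fun i l hl hn => ?_) x hp
    rw [Fn_succ B _ _ hl, Fn_succ B _ _ hl]
    cases l with
    | nil => rfl
    | cons j t =>
      have ht : mon K t ∈ D I K n := mon_mem (by simpa using hn)
      simp only [step]
      rw [ih _ ht, ih _ ht, ih _ (Fn_lead B n i n _ ht)]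

lemma Fn_stable' {m n : ℕ} (hmn : m ≤ n) (x : L) {p : MvPolynomial I K} (hp : p ∈ D I K m) :
    Fn B n x p = Fn B m x p := by
  induction n, hmn using Nat.le_induction with
  | base => rfl
  | succ n hn ih => rw [Fn_stable B n x (D_mono hn hp), ih]

/-- The action. -/
noncomputable def F : L →ₗ[K] MvPolynomial I K →ₗ[K] MvPolynomial I K :=
  B.constr K (fun i => ofWords (fun l => Fn B l.length (B i) (mon K l)))

lemma F_eq {n : ℕ} (x : L) {p : MvPolynomial I K} (hp : p ∈ D I K n) : F B x p = Fn B n x p := by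
  refine agree B (fun i l hl hn => ?_) x hp
  rw [Fn_stable' B hn _ (mon_mem le_rfl)]
  simp [F, ofWords_mon _ hl]

lemma F_lead : Lead B (F B) := by
  intro i n p hp
  rw [F_eq B _ hp]
  exact Fn_lead B n i n p hp

lemma F_le (i : I) {l : List I} (hl : (i :: l).Pairwise (· ≤ ·)) :
    F B (B i) (mon K l) = mon K (i :: l) := by
  have h := List.pairwise_cons.1 hl
  rw [F_eq B _ (mon_mem (Nat.le_succ l.length)), Fn_succ B _ _ h.2]
  cases l with
  | nil => simp [step, mon_cons, mon_nil]
  | cons j t =>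
    simp only [step]
    rw [if_pos (h.1 j (by simp)), mon_cons i]

lemma F_le' (j : I) {l : List I} (hl : ∀ k ∈ l, j ≤ k) :
    F B (B j) (mon K l) = mon K (j :: l) := by
  rw [mon_perm (List.perm_insertionSort (· ≤ ·) l).symm, F_le, mon_cons, mon_cons,
    mon_perm (List.perm_insertionSort (· ≤ ·) l)]
  refine List.pairwise_cons.2 ⟨?_, List.pairwise_insertionSort _ _⟩
  intro k hk
  exact hl k (by simpa using hk)

lemma F_gt {i j : I} (hij : j < i) {t : List I} (hl : (j :: t).Pairwise (· ≤ ·)) :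
    F B (B i) (mon K (j :: t)) = F B (B j) (F B (B i) (mon K t)) + F B ⁅B i, B j⁆ (mon K t) := by
  have h := List.pairwise_cons.1 hl
  have ht : mon K t ∈ D I K t.length := mon_mem le_rfl
  have h1 : F B (B i) (mon K (j :: t)) = X i * mon K (j :: t) +
      F B (B j) (F B (B i) (mon K t) - X i * mon K t) + F B ⁅B i, B j⁆ (mon K t) := by
    rw [F_eq B (n := t.length + 1) _ (mon_mem le_rfl), Fn_succ B _ _ hl]
    simp only [step]
    rw [if_neg (not_le.2 hij), F_eq B _ ht, F_eq B _ ht, F_eq B _ (Fn_lead B _ i _ _ ht)]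
  have h2 : F B (B j) (X i * mon K t) = X i * mon K (j :: t) := by
    rw [← mon_cons, F_le', ← mon_cons]
    · exact mon_perm (List.Perm.swap _ _ _)
    · intro k hk
      rcases List.mem_cons.1 hk with rfl | hk
      · exact hij.le
      · exact h.1 k hk
  rw [h1, map_sub, h2]
  abel

/-- The commutation relation at x y p -/
def Comm (x y : L) (p : MvPolynomial I K) : Prop :=
  F B x (F B y p) = F B y (F B x p) + F B ⁅x, y⁆ p

lemma Comm.symm {x y : L} {p : MvPolynomial I K} (h : Comm B x y p) : Comm B y x p := by
  unfold Comm at *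
  rw [h, ← lie_skew x y, map_neg, LinearMap.neg_apply]
  abel

lemma Comm.add {x y : L} {p q : MvPolynomial I K} (h : Comm B x y p) (h' : Comm B x y q) :
    Comm B x y (p + q) := by
  unfold Comm at *
  simp only [map_add, h, h']
  abel

lemma comm_lift {n : ℕ} (h : ∀ (i j : I) (l : List I), l.Pairwise (· ≤ ·) → l.length ≤ n →
    Comm B (B i) (B j) (mon K l)) (x y : L) {p : MvPolynomial I K} (hp : p ∈ D I K n) :
    Comm B x y p := by
  have h1 : ∀ i j, Comm B (B i) (B j) p := by
    intro i j
    have : D I K n ≤ LinearMap.eqLocus (F B (B i) ∘ₗ F B (B j))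
        (F B (B j) ∘ₗ F B (B i) + F B ⁅B i, B j⁆) :=
      D_ind _ fun l hl hn => h i j l hl hn
    exact this hp
  have h2 : ∀ i y, Comm B (B i) y p := by
    intro i y
    exact L_ind B (LinearMap.eqLocus (F B (B i) ∘ₗ (F B).flip p)
      ((F B).flip (F B (B i) p) + (F B).flip p ∘ₗ (LieAlgebra.ad K L (B i) : L →ₗ[K] L)))
      (fun j => h1 i j) y
  have h3 : ∀ x, Comm B y x p := by
    intro x
    exact L_ind B (LinearMap.eqLocus (F B y ∘ₗ (F B).flip p)
      ((F B).flip (F B y p) + (F B).flip p ∘ₗ (LieAlgebra.ad K L y : L →ₗ[K] L)))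
      (fun j => (h2 j y).symm) x
  exact (h3 x).symm

/-- The easy case. -/
lemma comm_easy {i j : I} (hij : j < i) {l : List I} (hl : ∀ k ∈ l, j ≤ k) :
    Comm B (B i) (B j) (mon K l) := by
  have hs : mon K l = mon K (l.insertionSort (· ≤ ·)) :=
    mon_perm (List.perm_insertionSort (· ≤ ·) l).symm
  have hp : (j :: l.insertionSort (· ≤ ·)).Pairwise (· ≤ ·) := by
    refine List.pairwise_cons.2 ⟨?_, List.pairwise_insertionSort _ _⟩
    intro k hk
    exact hl k (by simpa using hk)
  unfold Comm
  rw [hs, F_le B j hp, F_gt B hij hp]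

lemma comm_words (n : ℕ) : ∀ (i j : I) (l : List I), l.Pairwise (· ≤ ·) → l.length ≤ n →
    Comm B (B i) (B j) (mon K l) := by
  induction n with
  | zero =>
    intro i j l hl hn
    obtain rfl : l = [] := List.eq_nil_of_length_eq_zero (by omega)
    rcases lt_trichotomy i j with h | rfl | h
    · exact (comm_easy B h (by simp)).symm
    · simp [Comm]
    · exact comm_easy B h (by simp)
  | succ n ih =>
    have key : ∀ (i j : I) (l : List I), l.Pairwise (· ≤ ·) → l.length ≤ n + 1 → j < i →
        Comm B (B i) (B j) (mon K l) := by
      intro i j l hl hn hij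
      cases l with
      | nil => exact comm_easy B hij (by simp)
      | cons k t =>
        have hk := List.pairwise_cons.1 hl
        by_cases hjk : j ≤ k
        · refine comm_easy B hij fun m hm => ?_
          rcases List.mem_cons.1 hm with rfl | hm
          · exact hjk
          · exact hjk.trans (hk.1 m hm)
        · have hkj : k < j := not_le.1 hjk
          have hki : k < i := hkj.trans hij
          have ht : mon K t ∈ D I K n := mon_mem (by simpa using hn)
          have aux : ∀ a b : I, k < a → k < b →
              Comm B (B a) (B k) (F B (B b) (mon K t)) := by
            intro a b ha hb
            have h1 : Comm B (B a) (B k) (mon K (b :: t)) := by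
              refine comm_easy B ha fun m hm => ?_
              rcases List.mem_cons.1 hm with rfl | hm
              · exact hb.le
              · exact hk.1 m hm
            have h2 := comm_lift B ih (B a) (B k) (F_lead B b n _ ht)
            have h3 := h1.add B h2
            rwa [mon_cons, add_sub_cancel] at h3
          have hM : F B (B k) (mon K t) = mon K (k :: t) := F_le B k hl
          have e1 := F_gt B hkj hl
          have e2 := F_gt B hki hl
          have e3 := aux i j hki hkj
          have e4 := aux j i hkj hki
          have c1 := comm_lift B ih (B i) ⁅B j, B k⁆ ht
          have c2 := comm_lift B ih (B j) ⁅B i, B k⁆ ht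
          have c3 := comm_lift B ih (B i) (B j) ht
          have c4 := comm_lift B ih (B k) ⁅B i, B j⁆ ht
          unfold Comm at *
          rw [hM] at c4
          have J : F B ⁅B i, ⁅B j, B k⁆⁆ (mon K t) + F B ⁅B k, ⁅B i, B j⁆⁆ (mon K t)
              = F B ⁅B j, ⁅B i, B k⁆⁆ (mon K t) := by
            rw [← LinearMap.add_apply, ← map_add]
            congr 2
            rw [leibniz_lie (B i) (B j) (B k), ← lie_skew (B k) ⁅B i, B j⁆]
            abel
          rw [e1, e2, map_add, map_add, e3, e4, c1, c2, c3, map_add, c4, ← J]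
          abel
    intro i j l hl hn
    rcases lt_trichotomy i j with h | rfl | h
    · exact (key j i l hl hn h).symm
    · simp [Comm]
    · exact key i j l hl hn h

lemma comm_all (x y : L) (p : MvPolynomial I K) : Comm B x y p :=
  comm_lift B (comm_words B p.totalDegree) x y (mem_D_iff.2 le_rfl)

attribute [local instance] LieRing.ofAssociativeRing

/-- The action as a Lie morphism. -/
noncomputable def FLie : L →ₗ⁅K⁆ Module.End K (MvPolynomial I K) :=
  { toFun := fun x => F B x
    map_add' := fun x y => map_add (F B) x y
    map_smul' := fun c x => map_smul (F B) c x
    map_lie' := by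
      intro x y
      refine LinearMap.ext fun p => ?_
      have h := comm_all B x y p
      unfold Comm at h
      rw [LieRing.of_associative_ring_bracket, LinearMap.sub_apply, Module.End.mul_apply,
        Module.End.mul_apply, h]
      abel }

/-- The representation of the enveloping algebra on polynomials. -/
noncomputable def rep : UniversalEnvelopingAlgebra K L →ₐ[K] Module.End K (MvPolynomial I K) :=
  UniversalEnvelopingAlgebra.lift K (FLie B)

/-- The image of a Lie algebra element. -/
noncomputable def inc (x : L) : UniversalEnvelopingAlgebra K L := UniversalEnvelopingAlgebra.ι K x

lemma rep_inc (x : L) (p : MvPolynomial I K) : rep B (inc x) p = F B x p := by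
  unfold rep inc
  rw [UniversalEnvelopingAlgebra.lift_ι_apply]
  rfl

lemma inc_comm (x y : L) : (inc x * inc y : UniversalEnvelopingAlgebra K L) =
    inc y * inc x + inc ⁅x, y⁆ := by
  unfold inc
  rw [LieHom.map_lie, LieRing.of_associative_ring_bracket]
  abel

/-- The ordered-monomial map. -/
noncomputable def E : MvPolynomial I K →ₗ[K] UniversalEnvelopingAlgebra K L :=
  ofWords (fun l => (l.map (fun i => inc (B i))).prod)

lemma E_mon {l : List I} (hl : l.Pairwise (· ≤ ·)) :
    E B (mon K l) = (l.map (fun i => inc (K := K) (B i))).prod := ofWords_mon _ hl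

/-- multiplication by a Lie algebra element, as a linear map -/
noncomputable def incMul (p : MvPolynomial I K) : L →ₗ[K] UniversalEnvelopingAlgebra K L where
  toFun x := inc x * E B p
  map_add' x y := by simp only [inc, map_add, add_mul]
  map_smul' c x := by simp only [inc, map_smul, smul_mul_assoc, RingHom.id_apply]

lemma intertwine_lift {n : ℕ} (h : ∀ (i : I) (l : List I), l.Pairwise (· ≤ ·) → l.length ≤ n →
    inc (B i) * E B (mon K l) = E B (F B (B i) (mon K l))) (x : L) {p : MvPolynomial I K}
    (hp : p ∈ D I K n) : inc x * E B p = E B (F B x p) := by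
  refine L_ind B (LinearMap.eqLocus (incMul B p) (E B ∘ₗ (F B).flip p)) (fun i => ?_) x
  have : D I K n ≤ LinearMap.eqLocus (LinearMap.mulLeft K (inc (B i)) ∘ₗ E B)
      (E B ∘ₗ F B (B i)) :=
    D_ind _ fun l hl hn => h i l hl hn
  exact this hp

lemma intertwine_easy (i : I) {l : List I} (hl : (i :: l).Pairwise (· ≤ ·)) :
    inc (B i) * E B (mon K l) = E B (F B (B i) (mon K l)) := by
  rw [F_le B i hl, E_mon B hl, E_mon B (List.pairwise_cons.1 hl).2, List.map_cons, List.prod_cons]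

lemma intertwine_words (n : ℕ) : ∀ (i : I) (l : List I), l.Pairwise (· ≤ ·) → l.length ≤ n →
    inc (B i) * E B (mon K l) = E B (F B (B i) (mon K l)) := by
  induction n with
  | zero =>
    intro i l hl hn
    obtain rfl : l = [] := List.eq_nil_of_length_eq_zero (by omega)
    exact intertwine_easy B i (by simp)
  | succ n ih =>
    intro i l hl hn
    cases l with
    | nil => exact intertwine_easy B i (by simp)
    | cons j t =>
      have hj := List.pairwise_cons.1 hl
      by_cases hij : i ≤ j
      · refine intertwine_easy B i (List.pairwise_cons.2 ⟨fun m hm => ?_, hl⟩)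
        rcases List.mem_cons.1 hm with rfl | hm
        · exact hij
        · exact hij.trans (hj.1 m hm)
      · have hji : j < i := not_le.1 hij
        have ht : mon K t ∈ D I K n := mon_mem (by simpa using hn)
        have h1 : inc (B j) * E B (mon K (i :: t)) = E B (F B (B j) (mon K (i :: t))) := by
          rw [mon_perm (List.perm_insertionSort (· ≤ ·) (i :: t)).symm]
          refine intertwine_easy B j (List.pairwise_cons.2 ⟨fun m hm => ?_,
            List.pairwise_insertionSort _ _⟩)
          rw [List.mem_insertionSort] at hm
          rcases List.mem_cons.1 hm with rfl | hm
          · exact hji.le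
          · exact hj.1 m hm
        have h2 := intertwine_lift B ih (B j) (F_lead B i n _ ht)
        have h3 : inc (B j) * E B (F B (B i) (mon K t)) =
            E B (F B (B j) (F B (B i) (mon K t))) := by
          have h4 := congrArg₂ (· + ·) h1 h2
          simp only [← mul_add, ← map_add] at h4
          rwa [mon_cons, add_sub_cancel] at h4
        rw [F_gt B hji hl, map_add, ← h3, ← intertwine_lift B ih _ ht,
          ← intertwine_lift B ih _ ht, E_mon B hl, List.map_cons, List.prod_cons,
          ← E_mon B hj.2, ← mul_assoc, inc_comm, add_mul, mul_assoc]

lemma intertwine (x : L) (p : MvPolynomial I K) : inc x * E B p = E B (F B x p) :=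
  intertwine_lift B (intertwine_words B p.totalDegree) x (mem_D_iff.2 le_rfl)

/-- elements of the enveloping algebra which intertwine -/
noncomputable def good : Subalgebra K (UniversalEnvelopingAlgebra K L) where
  carrier := {a | ∀ p, a * E B p = E B (rep B a p)}
  mul_mem' := by
    intro a b ha hb p
    rw [mul_assoc, hb, ha, map_mul, Module.End.mul_apply]
  add_mem' := by
    intro a b ha hb p
    rw [add_mul, hb, ha, map_add, LinearMap.add_apply, map_add]
  algebraMap_mem' := by
    intro c p
    rw [AlgHom.commutes, Module.algebraMap_end_apply, map_smul, Algebra.smul_def]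

lemma inc_mem_good (x : L) : inc x ∈ good B := by
  intro p
  rw [intertwine, rep_inc]

/-- The inclusion into the subalgebra, as a Lie morphism. -/
noncomputable def goodLie : L →ₗ⁅K⁆ good B :=
  { toFun := fun x => ⟨inc x, inc_mem_good B x⟩
    map_add' := fun x y => Subtype.ext (by simp [inc])
    map_smul' := fun c x => Subtype.ext (by simp [inc])
    map_lie' := by
      intro x y
      refine Subtype.ext ?_
      rw [LieRing.of_associative_ring_bracket]
      have h := inc_comm (K := K) x y
      change inc ⁅x, y⁆ = inc x * inc y - inc y * inc x
      rw [h]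
      abel }

lemma mem_good (a : UniversalEnvelopingAlgebra K L) : a ∈ good B := by
  have h : (good B).val.comp (UniversalEnvelopingAlgebra.lift K (goodLie B)) =
      AlgHom.id K (UniversalEnvelopingAlgebra K L) := by
    apply UniversalEnvelopingAlgebra.hom_ext
    refine LieHom.ext fun x => ?_
    change (UniversalEnvelopingAlgebra.lift K (goodLie B)
      (UniversalEnvelopingAlgebra.ι K x)).1 = UniversalEnvelopingAlgebra.ι K x
    rw [UniversalEnvelopingAlgebra.lift_ι_apply]
    rfl
  have h1 := DFunLike.congr_fun h a
  change (UniversalEnvelopingAlgebra.lift K (goodLie B) a).1 = a at h1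
  rw [← h1]
  exact Subtype.property _

lemma E_one : E B 1 = 1 := by
  rw [← mon_nil, E_mon B List.Pairwise.nil]
  rfl

lemma E_surj (a : UniversalEnvelopingAlgebra K L) : a = E B (rep B a 1) := by
  have := mem_good B a 1
  rwa [E_one, mul_one] at this

lemma rep_word (l : List I) : ∀ {n k : ℕ} {q : MvPolynomial I K}, q ∈ D I K n →
    n + l.length ≤ k + 1 →
    rep B (l.map (fun i => inc (K := K) (B i))).prod q - mon K l * q ∈ D I K k := by
  induction l with
  | nil => intro n k q _ _; simp [mon_nil]
  | cons i t ih =>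
    intro n k q hq hk
    have hk' : n + t.length ≤ k := by simp at hk; omega
    -- a member of degree at most n + t.length
    have hd : rep B (t.map (fun i => inc (K := K) (B i))).prod q ∈ D I K k := by
      have h1 := ih hq (k := k) (by omega)
      have h2 : mon K t * q ∈ D I K k := by
        rw [mem_D_iff]
        refine (totalDegree_mul _ _).trans ?_
        have h3 := mem_D_iff.1 (mon_mem (K := K) (le_refl t.length))
        have h4 := mem_D_iff.1 hq
        omega
      simpa using Submodule.add_mem _ h1 h2
    rw [List.map_cons, List.prod_cons, map_mul, Module.End.mul_apply, rep_inc]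
    have h5 := F_lead B i _ _ hd
    rcases Nat.eq_zero_or_pos k with rfl | hpos
    · have h0 : t = [] := List.eq_nil_of_length_eq_zero (by omega)
      subst h0
      simpa [mon_nil, mon_cons] using h5
    · obtain ⟨m, rfl⟩ : ∃ m, k = m + 1 := ⟨k - 1, by omega⟩
      have h6 := X_mul_mem i (ih hq hk')
      have h7 := Submodule.add_mem _ h5 h6
      convert h7 using 1
      rw [mon_cons]
      ring

lemma rep_E {d n k : ℕ} {p q : MvPolynomial I K} (hp : p ∈ D I K d) (hq : q ∈ D I K n)
    (hk : n + d ≤ k + 1) : rep B (E B p) q - p * q ∈ D I K k := by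
  have : D I K d ≤ (D I K k).comap
      ((rep B).toLinearMap.flip q ∘ₗ E B - LinearMap.mulRight K q) := by
    refine D_ind _ fun l hl hn => ?_
    have := rep_word B l hq (k := k) (by omega)
    rw [← E_mon B hl] at this
    exact this
  exact this hp

lemma main (B : Module.Basis I K L) (a b : UniversalEnvelopingAlgebra K L) (h : a * b = 1) :
    ∃ c : K, c ≠ 0 ∧ a = algebraMap K (UniversalEnvelopingAlgebra K L) c ∧
      b = algebraMap K (UniversalEnvelopingAlgebra K L) c⁻¹ := by
  obtain ⟨p, hp⟩ : ∃ p, p = rep B a 1 := ⟨_, rfl⟩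
  obtain ⟨q, hq⟩ : ∃ q, q = rep B b 1 := ⟨_, rfl⟩
  have ha : a = E B p := by rw [hp]; exact E_surj B a
  have hb : b = E B q := by rw [hq]; exact E_surj B b
  have h1 : rep B (E B p) q = 1 := by
    rw [← ha, hq, ← Module.End.mul_apply, ← map_mul, h, map_one (rep B), Module.End.one_apply]
  have hp0 : p ≠ 0 := by
    rintro rfl
    simp at h1
  have hq0 : q ≠ 0 := by
    rintro rfl
    simp at h1
  have hdeg : q.totalDegree + p.totalDegree = 0 := by
    by_contra hne
    obtain ⟨k, hk⟩ : ∃ k, q.totalDegree + p.totalDegree = k + 1 :=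
      Nat.exists_eq_succ_of_ne_zero hne
    have h2 := rep_E B (mem_D_iff.2 (le_refl p.totalDegree)) (mem_D_iff.2 (le_refl q.totalDegree))
      hk.le
    rw [h1] at h2
    have h3 : (1 : MvPolynomial I K) ∈ D I K k := by
      rw [← mon_nil]; exact mon_mem (by simp)
    have h4 := Submodule.sub_mem _ h3 h2
    rw [sub_sub_cancel, mem_D_iff, totalDegree_mul_of_isDomain hp0 hq0] at h4
    omega
  have hpC := totalDegree_eq_zero_iff_eq_C.1 (by omega : p.totalDegree = 0)
  have hqC := totalDegree_eq_zero_iff_eq_C.1 (by omega : q.totalDegree = 0)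
  have EC : ∀ c : K, E B (C c) = algebraMap K (UniversalEnvelopingAlgebra K L) c := by
    intro c
    rw [← mul_one (C c), ← smul_eq_C_mul, map_smul, E_one, Algebra.algebraMap_eq_smul_one]
  rw [hpC, EC] at ha
  rw [hqC, EC] at hb
  have h5 : coeff 0 p * coeff 0 q = 1 := by
    have h6 := h1
    rw [hpC, EC, AlgHom.commutes, Module.algebraMap_end_apply, hqC, smul_eq_C_mul, ← C_mul,
      ← C_1] at h6
    simpa using C_injective _ _ h6
  refine ⟨coeff 0 p, left_ne_zero_of_mul_eq_one h5, ha, ?_⟩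
  rw [hb, eq_inv_of_mul_eq_one_right h5]

end PBW

theorem universalEnvelopingAlgebra_one_sided_units
    (K : Type v) [Field K] (L : Type u) [LieRing L] [LieAlgebra K L]
    (a b : UniversalEnvelopingAlgebra K L) (h : a * b = 1) :
    ∃ c : K, c ≠ 0 ∧
      a = algebraMap K (UniversalEnvelopingAlgebra K L) c ∧
      b = algebraMap K (UniversalEnvelopingAlgebra K L) c⁻¹ := by
  classical
  let _ : LinearOrder (Module.Basis.ofVectorSpaceIndex K L) :=
    linearOrderOfSTO WellOrderingRel
  exact PBW.main (Module.Basis.ofVectorSpace K L) a b h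
end
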